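/- arXiv:1604.00530 — 9 statements merged into one kernel-verified Lean document; each statement's English description precedes it below -/
import Mathlib

section
/- Let P be a non-constant complex polynomial and let Π ⊆ ℂ be the convex hull of the set of zeros of P. Then every zero of the derivative P′ lies in Π. Moreover, if w is a zero of P′ belonging to the topological boundary of Π, then either w is a zero of P of multiplicity at least 2, or all zeros of P lie on a single straight line in ℂ. -/
/-- **Lucas's theorem** (Gauss–Lucas): the zeroes of the derivative of a non-constant
complex polynomial `P` lie in the convex hull `Π` of the set of zeroes of `P`;
moreover a zero of `P'` lying on the topological boundary of `Π` is either a zero of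
`P` of multiplicity at least `2`, or else all the zeroes of `P` are collinear. -/
theorem gauss_lucas
    (P : Polynomial ℂ) (hP : 0 < P.natDegree) :
    (∀ w : ℂ, (Polynomial.derivative P).eval w = 0 →
      w ∈ convexHull ℝ {z : ℂ | P.eval z = 0}) ∧
    (∀ w : ℂ, (Polynomial.derivative P).eval w = 0 →
      w ∈ frontier (convexHull ℝ {z : ℂ | P.eval z = 0}) →
      (P.eval w = 0 ∧ 2 ≤ Polynomial.rootMultiplicity w P) ∨
      (∃ p q : ℂ, q ≠ 0 ∧ ∀ z : ℂ, P.eval z = 0 → ∃ t : ℝ, z = p + (t : ℂ) * q)) := by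
  have hdeg : 0 < P.degree := Polynomial.natDegree_pos_iff_degree_pos.mp hP
  have hP0 : P ≠ 0 := by rintro rfl; simp at hP
  have hset : ∀ z : ℂ, z ∈ P.roots.toFinset ↔ P.eval z = 0 := by
    intro z
    simp [hP0]
  constructor
  · intro w hw
    rw [Polynomial.eq_centerMass_of_eval_derivative_eq_zero hdeg hw]
    apply Finset.centerMass_mem_convexHull
    · intro i _
      exact Polynomial.derivRootWeight_nonneg P w i
    · exact Polynomial.sum_derivRootWeight_pos hdeg w
    · intro i hi
      exact (hset i).1 hi
  · intro w hw hfr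
    by_cases hPw : P.eval w = 0
    · left
      exact ⟨hPw, (Polynomial.one_lt_rootMultiplicity_iff_isRoot hP0).2 ⟨hPw, hw⟩⟩
    right
    set S : Set ℂ := {z : ℂ | P.eval z = 0} with hS
    have hwt : ∀ z ∈ P.roots.toFinset, 0 < P.derivRootWeight w z := by
      intro z hz
      have hz0 := (hset z).1 hz
      have hne : w - z ≠ 0 := by
        intro h
        rw [sub_eq_zero] at h
        exact hPw (h ▸ hz0)
      have hm : 0 < P.rootMultiplicity z := (Polynomial.rootMultiplicity_pos hP0).2 hz0
      simp only [Polynomial.derivRootWeight, if_neg hPw]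
      have : 0 < ‖w - z‖ := norm_pos_iff.2 hne
      positivity
    have hint : ¬ (interior (convexHull ℝ S)).Nonempty := by
      intro hne
      have hconv : Convex ℝ (convexHull ℝ S) := convex_convexHull ℝ S
      obtain ⟨f, hf⟩ := geometric_hahn_banach_open_point hconv.interior isOpen_interior hfr.2
      have hle : ∀ z ∈ convexHull ℝ S, f z ≤ f w := by
        intro z hz
        have h1 : z ∈ closure (interior (convexHull ℝ S)) := by
          rw [hconv.closure_interior_eq_closure_of_nonempty_interior hne]
          exact subset_closure hz
        exact closure_minimal (fun a ha => (hf a ha).le)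
          (isClosed_le f.continuous continuous_const) h1
      have hsum : ∑ z ∈ P.roots.toFinset, P.derivRootWeight w z * (f w - f z) = 0 := by
        have hc := Polynomial.eq_centerMass_of_eval_derivative_eq_zero hdeg hw
        have hp := Polynomial.sum_derivRootWeight_pos hdeg w
        have h2 := congrArg f hc
        simp only [Finset.centerMass, map_smul, map_sum, id, smul_eq_mul] at h2
        simp only [mul_sub, Finset.sum_sub_distrib, ← Finset.sum_mul]
        rw [sub_eq_zero]
        conv_lhs => rw [h2]
        field_simp
      have heq : ∀ z ∈ S, f z = f w := by
        intro z hz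
        have hz' := (hset z).2 hz
        have h3 := (Finset.sum_eq_zero_iff_of_nonneg (fun y hy =>
          mul_nonneg (hwt y hy).le (sub_nonneg.2
            (hle y (subset_convexHull ℝ S ((hset y).1 hy)))))).1 hsum z hz'
        rcases mul_eq_zero.1 h3 with h | h
        · exact absurd h (hwt z hz').ne'
        · linarith
      obtain ⟨a, ha⟩ := hne
      have hge : convexHull ℝ S ⊆ {z | f w ≤ f z} :=
        convexHull_min (fun z hz => (heq z hz).ge)
          (convex_halfSpace_ge f.toLinearMap.isLinear (f w))
      have h4 : f w ≤ f a := hge (interior_subset ha)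
      exact absurd (hf a ha) (not_lt.2 h4)
    rw [interior_convexHull_nonempty_iff_affineSpan_eq_top] at hint
    obtain ⟨z₀, hz₀⟩ : ∃ z, P.eval z = 0 := Complex.exists_root hdeg
    have hcol : Collinear ℝ S := by
      rw [collinear_iff_finrank_le_one]
      have hlt : vectorSpan ℝ S ≠ ⊤ := fun h => hint
        ((AffineSubspace.affineSpan_eq_top_iff_vectorSpan_eq_top_of_nonempty ℝ ℂ ℂ ⟨z₀, hz₀⟩).2 h)
      have h5 := Submodule.finrank_lt hlt
      rw [Complex.finrank_real_complex] at h5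
      omega
    obtain ⟨v, hv⟩ := (collinear_iff_of_mem (p₀ := z₀) hz₀).1 hcol
    by_cases hv0 : v = 0
    · refine ⟨z₀, 1, one_ne_zero, fun z hz => ⟨0, ?_⟩⟩
      obtain ⟨r, hr⟩ := hv z hz
      simpa [hv0] using hr
    · refine ⟨z₀, v, hv0, fun z hz => ?_⟩
      obtain ⟨r, hr⟩ := hv z hz
      refine ⟨r, ?_⟩
      rw [hr, vadd_eq_add, Complex.real_smul, add_comm]
end

section
/- Let N ≥ 3 and let D₁,…,D_J be bounded open connected subsets of ℝ^N with boundaries of class C^{1,α} and pairwise disjoint closures. Set Ω = ℝ^N ∖ (closure(D₁) ∪ … ∪ closure(D_J)) and Γ = ∂Ω. Let u ∈ C¹(closure(Ω)) ∩ C²(Ω) satisfy Δu = 0 in Ω, u = 1 on Γ, and u(x) → 0 as |x| → ∞. If K denotes the convex hull of D₁ ∪ … ∪ D_J, then ∇u(x) ≠ 0 for every x ∈ closure(Ω) not lying in the interior of K; in other words, u has no critical points in the closure of ℝ^N ∖ K. -/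
open Topology Filter

/-- The Laplacian of `f : ℝ^N → ℝ`, as the sum of the unmixed second partial
derivatives in the coordinate directions. -/
noncomputable def lapE {N : ℕ} (f : EuclideanSpace ℝ (Fin N) → ℝ)
    (x : EuclideanSpace ℝ (Fin N)) : ℝ :=
  ∑ i : Fin N,
    fderiv ℝ (fun y => fderiv ℝ f y (EuclideanSpace.single i 1)) x (EuclideanSpace.single i 1)

/-- `D` has boundary of class `C^{1,α}`: near each boundary point, `D` is the sublevel
set and `∂D` the zero level set of a `C¹` function with nonvanishing differential whose
differential is `α`-Hölder continuous. -/
def HasC1AlphaBoundary {N : ℕ} (D : Set (EuclideanSpace ℝ (Fin N))) (α : NNReal) : Prop :=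
  ∀ x ∈ frontier D, ∃ (U : Set (EuclideanSpace ℝ (Fin N))) (f : EuclideanSpace ℝ (Fin N) → ℝ),
    IsOpen U ∧ x ∈ U ∧ ContDiffOn ℝ 1 f U ∧ (∀ y ∈ U, fderiv ℝ f y ≠ 0) ∧
    (∃ C : NNReal, HolderOnWith C α (fun y => fderiv ℝ f y) U) ∧
    (∀ y ∈ U, (y ∈ D ↔ f y < 0)) ∧ (∀ y ∈ U, (y ∈ frontier D ↔ f y = 0))

/-- Twice continuously differentiable with vanishing Laplacian at a point. -/
def Har {N : ℕ} (f : EuclideanSpace ℝ (Fin N) → ℝ) (x : EuclideanSpace ℝ (Fin N)) : Prop :=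
  ContDiffAt ℝ 2 f x ∧ Laplacian.laplacian f x = 0

lemma lapl_eq_sum {N : ℕ} (f : EuclideanSpace ℝ (Fin N) → ℝ) (x : EuclideanSpace ℝ (Fin N)) :
    Laplacian.laplacian f x = ∑ i : Fin N,
      fderiv ℝ (fderiv ℝ f) x (EuclideanSpace.single i 1) (EuclideanSpace.single i 1) := by
  rw [InnerProductSpace.laplacian_eq_iteratedFDeriv_orthonormalBasis f
    (EuclideanSpace.basisFun (Fin N) ℝ)]
  simp [iteratedFDeriv_two_apply]

lemma differentiableAt_fderiv_of_c2 {N : ℕ} {f : EuclideanSpace ℝ (Fin N) → ℝ}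
    {x : EuclideanSpace ℝ (Fin N)} (hf : ContDiffAt ℝ 2 f x) :
    DifferentiableAt ℝ (fderiv ℝ f) x :=
  (hf.fderiv_right (m := 1) (by norm_num)).differentiableAt (by norm_num)

lemma lapl_eq_lapE {N : ℕ} {f : EuclideanSpace ℝ (Fin N) → ℝ} {x : EuclideanSpace ℝ (Fin N)}
    (hf : ContDiffAt ℝ 2 f x) : Laplacian.laplacian f x = lapE f x := by
  rw [lapl_eq_sum, lapE]
  refine Finset.sum_congr rfl fun i _ => ?_
  have h := (differentiableAt_fderiv_of_c2 hf).hasFDerivAt.clm_apply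
    (hasFDerivAt_const (EuclideanSpace.single i (1:ℝ)) x)
  rw [h.fderiv]
  simp

lemma Har.sub {N : ℕ} {f g : EuclideanSpace ℝ (Fin N) → ℝ} {x : EuclideanSpace ℝ (Fin N)}
    (hf : Har f x) (hg : Har g x) : Har (fun y => f y - g y) x := by
  refine ⟨hf.1.sub hg.1, ?_⟩
  have := hf.1.laplacian_sub hg.1
  rw [hf.2, hg.2, sub_zero] at this
  exact this

lemma Har.const_mul {N : ℕ} {f : EuclideanSpace ℝ (Fin N) → ℝ} {x : EuclideanSpace ℝ (Fin N)}
    (c : ℝ) (hf : Har f x) : Har (fun y => c * f y) x := by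
  refine ⟨contDiffAt_const.mul hf.1, ?_⟩
  have := InnerProductSpace.laplacian_smul c hf.1
  rw [hf.2, smul_zero] at this
  exact this

lemma Har.const {N : ℕ} (c : ℝ) (x : EuclideanSpace ℝ (Fin N)) : Har (fun _ => c) x := by
  refine ⟨contDiffAt_const, ?_⟩
  rw [InnerProductSpace.laplacian_const]; rfl

lemma lapl_comp_isometry {N : ℕ} (L : EuclideanSpace ℝ (Fin N) ≃ₗᵢ[ℝ] EuclideanSpace ℝ (Fin N))
    (f : EuclideanSpace ℝ (Fin N) → ℝ) (x : EuclideanSpace ℝ (Fin N)) :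
    Laplacian.laplacian (f ∘ L) x = Laplacian.laplacian f (L x) := by
  rw [InnerProductSpace.laplacian_eq_iteratedFDeriv_orthonormalBasis (f ∘ L)
    (EuclideanSpace.basisFun (Fin N) ℝ),
    InnerProductSpace.laplacian_eq_iteratedFDeriv_orthonormalBasis f
    ((EuclideanSpace.basisFun (Fin N) ℝ).map L)]
  refine Finset.sum_congr rfl fun i _ => ?_
  have h := L.toContinuousLinearEquiv.iteratedFDerivWithin_comp_right f
    (s := Set.univ) uniqueDiffOn_univ (x := x) (Set.mem_univ _) 2
  simp only [Set.preimage_univ, iteratedFDerivWithin_univ] at h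
  have h' : (f ∘ L) = f ∘ L.toContinuousLinearEquiv := rfl
  rw [h', h]
  simp only [ContinuousMultilinearMap.compContinuousLinearMap_apply]
  congr 1
  ext j
  fin_cases j <;> simp

lemma Har.comp_affine {N : ℕ}
    (L : EuclideanSpace ℝ (Fin N) ≃ₗᵢ[ℝ] EuclideanSpace ℝ (Fin N))
    (c : EuclideanSpace ℝ (Fin N))
    {f : EuclideanSpace ℝ (Fin N) → ℝ} {x : EuclideanSpace ℝ (Fin N)}
    (hf : Har f (L x + c)) : Har (fun y => f (L y + c)) x := by
  constructor
  · have : ContDiffAt ℝ 2 (fun y => L y + c) x := (L.contDiff.add contDiff_const).contDiffAt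
    exact hf.1.comp x this
  · have h1 := lapl_comp_isometry L (fun y => f (y + c)) x
    have h2 : Laplacian.laplacian (fun y => f (y + c)) (L x) = Laplacian.laplacian f (L x + c) := by
      rw [lapl_eq_sum, lapl_eq_sum]
      have : fderiv ℝ (fun y => f (y + c)) = fun y => fderiv ℝ f (y + c) := by
        ext1 y; exact fderiv_comp_add_right c
      rw [this, fderiv_comp_add_right]
    rw [h2, hf.2] at h1
    exact h1

lemma fderiv_normSq {N : ℕ} (p y : EuclideanSpace ℝ (Fin N)) :
    HasFDerivAt (fun y => ‖y - p‖ ^ 2) (2 • (innerSL ℝ (y - p))) y := by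
  have := (hasFDerivAt_id y).sub_const p |>.norm_sq
  exact this.congr_fderiv (by ext v; simp)

lemma lapl_normSq {N : ℕ} (y : EuclideanSpace ℝ (Fin N)) :
    Laplacian.laplacian (fun y : EuclideanSpace ℝ (Fin N) => ‖y‖ ^ 2) y = 2 * N := by
  rw [lapl_eq_sum]
  have : fderiv ℝ (fun y : EuclideanSpace ℝ (Fin N) => ‖y‖ ^ 2) =
      fun y => ((2:ℝ) • (innerSL ℝ : EuclideanSpace ℝ (Fin N) →L[ℝ] _)) y := by
    ext1 y
    have := (fderiv_normSq 0 y).fderiv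
    simp only [sub_zero] at this
    rw [this]; ext v; simp [two_mul]
  rw [this, ContinuousLinearMap.fderiv]
  have h2 : ∀ i : Fin N, ((2:ℝ) • (innerSL ℝ : EuclideanSpace ℝ (Fin N) →L[ℝ] _))
      (EuclideanSpace.single i (1:ℝ)) (EuclideanSpace.single i (1:ℝ)) = 2 := by
    intro i
    change (2:ℝ) * inner ℝ (EuclideanSpace.single i (1:ℝ)) (EuclideanSpace.single i (1:ℝ)) = 2
    rw [real_inner_self_eq_norm_sq]; simp
  rw [Finset.sum_congr rfl fun i _ => h2 i]
  simp [mul_comm]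

/-- The fundamental kernel `|y-p|^(2-N)`. -/
noncomputable def newt {N : ℕ} (p y : EuclideanSpace ℝ (Fin N)) : ℝ :=
  (‖y - p‖ ^ 2) ^ ((2 - (N:ℝ)) / 2)

lemma normSq_pos {N : ℕ} {p y : EuclideanSpace ℝ (Fin N)} (h : y ≠ p) : 0 < ‖y - p‖ ^ 2 := by
  have : 0 < ‖y - p‖ := norm_pos_iff.mpr (sub_ne_zero.mpr h)
  positivity

lemma hasFDerivAt_ker_rpow {N : ℕ} (s : ℝ) {p y : EuclideanSpace ℝ (Fin N)} (h : y ≠ p) :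
    HasFDerivAt (fun y => (‖y - p‖ ^ 2) ^ s)
      ((2 * s * (‖y - p‖ ^ 2) ^ (s - 1)) • (innerSL ℝ (y - p))) y := by
  have := (fderiv_normSq p y).rpow_const (p := s) (Or.inl (normSq_pos h).ne')
  refine this.congr_fderiv ?_
  ext v
  change (s * (‖y - p‖ ^ 2) ^ (s - 1)) * (2 • inner ℝ (y - p) v) =
    (2 * s * (‖y - p‖ ^ 2) ^ (s - 1)) * inner ℝ (y - p) v
  simp; ring

lemma contDiffAt_ker {N : ℕ} (s : ℝ) {p y : EuclideanSpace ℝ (Fin N)} (h : y ≠ p) :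
    ContDiffAt ℝ 2 (fun y => (‖y - p‖ ^ 2) ^ s) y := by
  have h1 : ContDiffAt ℝ 2 (fun y : EuclideanSpace ℝ (Fin N) => ‖y - p‖ ^ 2) y :=
    ((contDiff_id.sub contDiff_const).norm_sq ℝ).contDiffAt
  exact h1.rpow_const_of_ne (normSq_pos h).ne'

lemma Har.newtonian {N : ℕ} {p y : EuclideanSpace ℝ (Fin N)} (h : y ≠ p) : Har (newt p) y := by
  refine ⟨contDiffAt_ker _ h, ?_⟩
  have hc : ContDiffAt ℝ 2 (newt p) y := contDiffAt_ker _ h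
  rw [lapl_eq_lapE hc, lapE]
  set s := ((2 - (N:ℝ)) / 2) with hs
  have key : ∀ i : Fin N, fderiv ℝ (fun z => fderiv ℝ (newt p) z (EuclideanSpace.single i 1)) y
      (EuclideanSpace.single i 1) = 2 * s * (‖y - p‖ ^ 2) ^ (s - 1)
        + 4 * s * (s - 1) * (‖y - p‖ ^ 2) ^ (s - 1 - 1) * ((y - p) i) ^ 2 := by
    intro i
    have e : (fun z => fderiv ℝ (newt p) z (EuclideanSpace.single i 1)) =ᶠ[𝓝 y]
        fun z => 2 * s * (‖z - p‖ ^ 2) ^ (s - 1) * inner ℝ (z - p) (EuclideanSpace.single i 1) := by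
      filter_upwards [isOpen_ne.mem_nhds h] with z hz
      have := (hasFDerivAt_ker_rpow s hz).fderiv
      change fderiv ℝ (fun y => (‖y - p‖ ^ 2) ^ s) z _ = _
      rw [this]; rfl
    rw [e.fderiv_eq]
    have h1 := (hasFDerivAt_ker_rpow (s - 1) h).const_mul (2 * s)
    have h2 := ((hasFDerivAt_id y).sub_const p).inner ℝ
      (hasFDerivAt_const (EuclideanSpace.single i (1:ℝ)) y)
    have h3 := h1.mul h2
    simp only [id] at h3
    have h4 := h3.fderiv
    erw [h4]
    simp [EuclideanSpace.inner_single_right]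
    ring
  simp_rw [key]
  rw [Finset.sum_add_distrib, ← Finset.mul_sum, ← Finset.mul_sum, ← EuclideanSpace.real_norm_sq_eq]
  have h5 : (‖y - p‖ ^ 2) ^ (s - 1) = (‖y - p‖ ^ 2) ^ (s - 1 - 1) * ‖y - p‖ ^ 2 := by
    rw [← Real.rpow_add_one (normSq_pos h).ne']; congr 1; ring
  rw [h5]
  have h6 : (N : ℝ) = 2 - 2 * s := by rw [hs]; ring
  simp only [Finset.sum_const, Finset.card_univ, Fintype.card_fin, nsmul_eq_mul, h6]
  ring

lemma second_deriv_nonneg_of_isLocalMin {N : ℕ} {f : EuclideanSpace ℝ (Fin N) → ℝ}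
    {x : EuclideanSpace ℝ (Fin N)} (hf : ContDiffAt ℝ 2 f x) (hmin : IsLocalMin f x)
    (v : EuclideanSpace ℝ (Fin N)) : 0 ≤ fderiv ℝ (fderiv ℝ f) x v v := by
  by_contra hneg
  push Not at hneg
  set l : ℝ → EuclideanSpace ℝ (Fin N) := fun t => x + t • v with hl
  have hl0 : l 0 = x := by simp [hl]
  have hlc : Continuous l := by fun_prop
  have hld : ∀ t, HasDerivAt l v t := fun t => by
    have := ((hasDerivAt_id t).smul_const v).const_add x
    rw [one_smul] at this
    exact this
  have hev : ∀ᶠ t in 𝓝 (0:ℝ), ContDiffAt ℝ 2 f (l t) := by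
    have := hf.eventually (by simp)
    rw [← hl0] at this
    exact hlc.continuousAt.eventually this
  have hd1 : deriv (f ∘ l) =ᶠ[𝓝 0] fun t => fderiv ℝ f (l t) v := by
    filter_upwards [hev] with t ht
    exact ((ht.differentiableAt (by norm_num)).hasFDerivAt.comp_hasDerivAt t (hld t)).deriv
  have hd2 : deriv (deriv (f ∘ l)) 0 = fderiv ℝ (fderiv ℝ f) x v v := by
    rw [hd1.deriv_eq]
    have h0 : HasFDerivAt (fderiv ℝ f) (fderiv ℝ (fderiv ℝ f) x) (l 0) := by
      rw [hl0]; exact (differentiableAt_fderiv_of_c2 hf).hasFDerivAt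
    have h1 := h0.comp_hasDerivAt (0:ℝ) (hld 0)
    have h2 := h1.clm_apply (hasDerivAt_const (0:ℝ) v)
    have h3 := h2.deriv
    simp only [Function.comp_def] at h3
    rw [h3]; simp
  have hm : IsLocalMin (f ∘ l) 0 := by
    have h : ∀ᶠ y in 𝓝 (l 0), f x ≤ f y := by rw [hl0]; exact hmin
    have := hlc.continuousAt.eventually h
    filter_upwards [this] with t ht
    simpa [hl0] using ht
  have hc : ContinuousAt (f ∘ l) 0 := by
    apply ContinuousAt.comp _ hlc.continuousAt
    rw [hl0]; exact hf.continuousAt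
  have hM := isLocalMax_of_deriv_deriv_neg (hd2 ▸ hneg) hm.deriv_eq_zero hc
  have hconst : (f ∘ l) =ᶠ[𝓝 0] fun _ => (f ∘ l) 0 := by
    filter_upwards [hm, hM] with t h1 h2
    exact le_antisymm h2 h1
  have h4 : deriv (f ∘ l) =ᶠ[𝓝 0] fun _ => 0 := by
    have := hconst.deriv
    simpa using this
  have h5 := h4.deriv_eq
  rw [hd2] at h5
  simp at h5
  linarith

lemma min_principle {N : ℕ} (hN : 3 ≤ N) {U : Set (EuclideanSpace ℝ (Fin N))} (hU : IsOpen U)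
    {f : EuclideanSpace ℝ (Fin N) → ℝ} (hc : ContinuousOn f (closure U))
    (hh : ∀ y ∈ U, Har f y) (hb : ∀ y ∈ frontier U, 0 ≤ f y)
    (hinf : ∀ η > 0, ∀ᶠ y in cocompact (EuclideanSpace ℝ (Fin N)), y ∈ U → -η ≤ f y) :
    ∀ y ∈ U, 0 ≤ f y := by
  intro x hx
  by_contra hneg
  push Not at hneg
  set η := -f x / 2 with hη
  have hηpos : 0 < η := by rw [hη]; linarith
  have h1 := hinf η hηpos
  rw [← Metric.cobounded_eq_cocompact] at h1
  obtain ⟨R, -, hR⟩ := (Filter.HasBasis.eventually_iff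
    (Metric.hasBasis_cobounded_compl_closedBall (0 : EuclideanSpace ℝ (Fin N)))).1 h1
  set R' := max (max R ‖x‖) 0 + 1 with hR'
  have hR'1 : R < R' := by
    have := le_max_left R ‖x‖; have := le_max_left (max R ‖x‖) 0; linarith
  have hR'2 : ‖x‖ < R' := by
    have := le_max_right R ‖x‖; have := le_max_left (max R ‖x‖) 0; linarith
  have hR'3 : 0 < R' := by have := le_max_right (max R ‖x‖) 0; linarith
  set δ := η / (2 * R' ^ 2) with hδ
  have hδpos : 0 < δ := by positivity
  have hδR : δ * R' ^ 2 = η / 2 := by rw [hδ]; field_simp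
  set S := closure U ∩ Metric.closedBall (0 : EuclideanSpace ℝ (Fin N)) R' with hS
  have hScomp : IsCompact S := (isCompact_closedBall _ _).inter_left isClosed_closure
  have hxS : x ∈ S := ⟨subset_closure hx, by simpa using hR'2.le⟩
  obtain ⟨y, hyS, hy⟩ := hScomp.exists_isMinOn ⟨x, hxS⟩
    (f := fun y => f y - δ * ‖y‖ ^ 2)
    ((hc.mono Set.inter_subset_left).sub (by fun_prop))
  have hyR : ‖y‖ ≤ R' := by simpa using hyS.2
  have h2 : f y - δ * ‖y‖ ^ 2 ≤ f x - δ * ‖x‖ ^ 2 := hy hxS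
  have h3 : δ * ‖y‖ ^ 2 ≤ η / 2 := by
    rw [← hδR]; gcongr
  have h4 : 0 ≤ δ * ‖x‖ ^ 2 := by positivity
  have hfy : f y < -η := by rw [hη] at *; linarith
  have hyU : y ∈ U := by
    by_contra hyn
    have : y ∈ frontier U := by rw [hU.frontier_eq]; exact ⟨hyS.1, hyn⟩
    have := hb y this
    linarith
  have hyR2 : ‖y‖ < R' := by
    by_contra hge
    push Not at hge
    have : -η ≤ f y := hR (x := y) (by simpa using lt_of_lt_of_le hR'1 hge) hyU
    linarith
  have hloc : IsLocalMin (fun y => f y - δ * ‖y‖ ^ 2) y := by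
    have : S ∈ 𝓝 y := by
      refine inter_mem (mem_of_superset (hU.mem_nhds hyU) subset_closure) ?_
      apply Metric.closedBall_mem_nhds_of_mem
      simpa using hyR2
    exact hy.isLocalMin this
  have hc1 : ContDiffAt ℝ 2 (fun y : EuclideanSpace ℝ (Fin N) => ‖y‖ ^ 2) y :=
    (contDiff_norm_sq ℝ).contDiffAt
  have hc2 : ContDiffAt ℝ 2 (fun y => f y - δ * ‖y‖ ^ 2) y :=
    (hh y hyU).1.sub (contDiffAt_const.mul hc1)
  have hlap : Laplacian.laplacian (fun y => f y - δ * ‖y‖ ^ 2) y = -(δ * (2 * N)) := by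
    have e1 := (hh y hyU).1.laplacian_sub (contDiffAt_const.mul hc1 :
      ContDiffAt ℝ 2 (fun y : EuclideanSpace ℝ (Fin N) => δ * ‖y‖ ^ 2) y)
    have e2 := InnerProductSpace.laplacian_smul δ hc1
    rw [lapl_normSq, smul_eq_mul] at e2
    have e3 : (δ • fun y : EuclideanSpace ℝ (Fin N) => ‖y‖ ^ 2) = fun y => δ * ‖y‖ ^ 2 := rfl
    rw [e3] at e2
    rw [e2, (hh y hyU).2, zero_sub] at e1
    exact e1
  rw [lapl_eq_sum] at hlap
  have hnn : 0 ≤ -(δ * (2 * N)) := by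
    rw [← hlap]
    exact Finset.sum_nonneg fun i _ => second_deriv_nonneg_of_isLocalMin hc2 hloc _
  have : (0:ℝ) < N := by exact_mod_cast (by omega : 0 < N)
  have : 0 < δ * (2 * N) := by positivity
  linarith

/-- Reflection across the hyperplane through `x` with unit normal `n`. -/
noncomputable def rflc {N : ℕ} (n x y : EuclideanSpace ℝ (Fin N)) : EuclideanSpace ℝ (Fin N) :=
  y - (2 * inner ℝ n (y - x)) • n

lemma rflc_eq {N : ℕ} {n : EuclideanSpace ℝ (Fin N)} (hn : ‖n‖ = 1)
    (x : EuclideanSpace ℝ (Fin N)) :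
    ∃ (L : EuclideanSpace ℝ (Fin N) ≃ₗᵢ[ℝ] EuclideanSpace ℝ (Fin N))
      (c : EuclideanSpace ℝ (Fin N)), ∀ y, rflc n x y = L y + c := by
  refine ⟨Submodule.reflection (Submodule.span ℝ {n})ᗮ, (2 * inner ℝ n x) • n, fun y => ?_⟩
  rw [Submodule.reflection_orthogonal_apply, Submodule.reflection_singleton_apply, rflc, hn,
    inner_sub_right]
  simp only [RCLike.ofReal_one, one_pow, div_one]
  module

lemma inner_rflc {N : ℕ} {n : EuclideanSpace ℝ (Fin N)} (hn : ‖n‖ = 1)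
    (x y : EuclideanSpace ℝ (Fin N)) : inner ℝ n (rflc n x y - x) = - inner ℝ n (y - x) := by
  have : rflc n x y - x = (y - x) - (2 * inner ℝ n (y - x)) • n := by rw [rflc]; abel
  rw [this, inner_sub_right, inner_smul_right, real_inner_self_eq_norm_sq, hn]; ring

lemma rflc_rflc {N : ℕ} {n : EuclideanSpace ℝ (Fin N)} (hn : ‖n‖ = 1)
    (x y : EuclideanSpace ℝ (Fin N)) : rflc n x (rflc n x y) = y := by
  rw [rflc, inner_rflc hn, rflc]; module

lemma rflc_of_plane {N : ℕ} {n x y : EuclideanSpace ℝ (Fin N)} (h : inner ℝ n (y - x) = 0) :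
    rflc n x y = y := by simp [rflc, h]

lemma continuous_rflc {N : ℕ} (n x : EuclideanSpace ℝ (Fin N)) : Continuous (rflc n x) := by
  unfold rflc; fun_prop

lemma tendsto_rflc {N : ℕ} {n : EuclideanSpace ℝ (Fin N)} (hn : ‖n‖ = 1)
    (x : EuclideanSpace ℝ (Fin N)) :
    Tendsto (rflc n x) (cocompact _) (cocompact _) := by
  let e : EuclideanSpace ℝ (Fin N) ≃ₜ EuclideanSpace ℝ (Fin N) :=
    { toFun := rflc n x, invFun := rflc n x, left_inv := rflc_rflc hn x,
      right_inv := rflc_rflc hn x, continuous_toFun := continuous_rflc n x,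
      continuous_invFun := continuous_rflc n x }
  exact e.isClosedEmbedding.tendsto_cocompact

lemma Har.comp_rflc {N : ℕ} {n x y : EuclideanSpace ℝ (Fin N)} (hn : ‖n‖ = 1)
    {f : EuclideanSpace ℝ (Fin N) → ℝ} (hf : Har f (rflc n x y)) :
    Har (fun z => f (rflc n x z)) y := by
  obtain ⟨L, c, h⟩ := rflc_eq hn x
  simp only [h] at hf ⊢
  exact Har.comp_affine L c hf

lemma normSq_rflc {N : ℕ} {n : EuclideanSpace ℝ (Fin N)} (hn : ‖n‖ = 1)
    (x p y : EuclideanSpace ℝ (Fin N)) :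
    ‖y - rflc n x p‖ ^ 2 = ‖y - p‖ ^ 2 + 4 * inner ℝ n (p - x) * inner ℝ n (y - x) := by
  have e : y - rflc n x p = (y - p) + (2 * inner ℝ n (p - x)) • n := by rw [rflc]; abel
  have e2 : inner ℝ n (y - x) = inner ℝ n (y - p) + inner ℝ n (p - x) := by
    rw [← inner_add_right]; congr 1; abel
  rw [e, norm_add_sq_real, inner_smul_right, norm_smul, hn, e2, real_inner_comm n (y - p), mul_one,
    Real.norm_eq_abs, sq_abs]
  ring

/-- The half-space Green function. -/
noncomputable def grn {N : ℕ} (n x p y : EuclideanSpace ℝ (Fin N)) : ℝ :=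
  newt p y - newt (rflc n x p) y

lemma ker_nonneg {N : ℕ} (p y : EuclideanSpace ℝ (Fin N)) : 0 ≤ newt p y := by
  unfold newt; positivity

lemma grn_plane {N : ℕ} {n x p y : EuclideanSpace ℝ (Fin N)} (hn : ‖n‖ = 1)
    (h : inner ℝ n (y - x) = 0) : grn n x p y = 0 := by
  rw [grn, newt, newt, normSq_rflc hn, h]; simp

lemma ne_rflc {N : ℕ} {n x p y : EuclideanSpace ℝ (Fin N)} (hn : ‖n‖ = 1)
    (hp : 0 < inner ℝ n (p - x)) (hy : 0 ≤ inner ℝ n (y - x)) : y ≠ rflc n x p := by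
  rintro rfl
  rw [inner_rflc hn] at hy
  linarith

lemma Har.grn {N : ℕ} {n x p y : EuclideanSpace ℝ (Fin N)} (hn : ‖n‖ = 1)
    (hp : 0 < inner ℝ n (p - x)) (hy : 0 ≤ inner ℝ n (y - x)) (hyp : y ≠ p) :
    Har (grn n x p) y :=
  (Har.newtonian hyp).sub (Har.newtonian (ne_rflc hn hp hy))

lemma grn_pos {N : ℕ} (hN : 3 ≤ N) {n x p y : EuclideanSpace ℝ (Fin N)} (hn : ‖n‖ = 1)
    (hp : 0 < inner ℝ n (p - x)) (hy : 0 < inner ℝ n (y - x)) (hyp : y ≠ p) :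
    0 < grn n x p y := by
  rw [grn, newt, newt, normSq_rflc hn, sub_pos]
  have hN' : (3:ℝ) ≤ N := by exact_mod_cast hN
  apply Real.rpow_lt_rpow_of_neg (normSq_pos hyp)
  · have := mul_pos hp hy; linarith
  · linarith

lemma tendsto_ker {N : ℕ} (hN : 3 ≤ N) (p : EuclideanSpace ℝ (Fin N)) :
    Tendsto (newt p) (cocompact _) (𝓝 0) := by
  have hN' : (3:ℝ) ≤ N := by exact_mod_cast hN
  have h1 := tendsto_rpow_neg_atTop (y := ((N:ℝ) - 2) / 2) (by linarith)
  have h2 : Tendsto (fun y : EuclideanSpace ℝ (Fin N) => ‖y - p‖ ^ 2) (cocompact _) atTop := by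
    refine (tendsto_pow_atTop (two_ne_zero)).comp ?_
    have : Tendsto (fun y : EuclideanSpace ℝ (Fin N) => y - p) (cocompact _) (cocompact _) :=
      (Homeomorph.subRight p).isClosedEmbedding.tendsto_cocompact
    exact tendsto_norm_cocompact_atTop.comp this
  have h3 := h1.comp h2
  refine h3.congr fun y => ?_
  simp only [Function.comp, newt]
  congr 1; ring

lemma tendsto_grn {N : ℕ} (hN : 3 ≤ N) (n x p : EuclideanSpace ℝ (Fin N)) :
    Tendsto (grn n x p) (cocompact _) (𝓝 0) := by
  have := (tendsto_ker hN p).sub (tendsto_ker hN (rflc n x p))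
  rw [sub_zero] at this
  exact this

lemma grn_deriv {N : ℕ} (hN : 3 ≤ N) {n x p : EuclideanSpace ℝ (Fin N)} (hn : ‖n‖ = 1)
    (hp : 0 < inner ℝ n (p - x)) :
    ∃ c > 0, HasDerivAt (fun t : ℝ => grn n x p (x + t • n)) c 0 := by
  have hN' : (3:ℝ) ≤ N := by exact_mod_cast hN
  set a := inner ℝ n (p - x) with ha
  set s := ((2 - (N:ℝ)) / 2) with hs
  have hs0 : s < 0 := by rw [hs]; linarith
  have hxp : x ≠ p := by rintro rfl; simp [ha] at hp
  set A := ‖x - p‖ ^ 2 with hA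
  have hApos : 0 < A := normSq_pos hxp
  have e1 : ∀ t : ℝ, ‖x + t • n - p‖ ^ 2 = A + t ^ 2 - 2 * a * t := by
    intro t
    have : x + t • n - p = (x - p) + t • n := by abel
    rw [this, norm_add_sq_real, inner_smul_right, norm_smul, hn, real_inner_comm, mul_one,
      Real.norm_eq_abs, sq_abs, ha, ← neg_sub p x, inner_neg_right, hA, ← neg_sub p x]
    ring
  have e2 : ∀ t : ℝ, ‖x + t • n - rflc n x p‖ ^ 2 = A + t ^ 2 + 2 * a * t := by
    intro t
    rw [normSq_rflc hn, e1, ← ha, add_sub_cancel_left, inner_smul_right,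
      real_inner_self_eq_norm_sq, hn]
    ring
  have d1 : HasDerivAt (fun t : ℝ => A + t ^ 2 - 2 * a * t) (-(2 * a)) 0 := by
    have := (((hasDerivAt_id (0:ℝ)).pow 2).const_add A).sub ((hasDerivAt_id (0:ℝ)).const_mul (2 * a))
    exact this.congr_deriv (by simp)
  have d2 : HasDerivAt (fun t : ℝ => A + t ^ 2 + 2 * a * t) (2 * a) 0 := by
    have := (((hasDerivAt_id (0:ℝ)).pow 2).const_add A).add ((hasDerivAt_id (0:ℝ)).const_mul (2 * a))
    exact this.congr_deriv (by simp)
  have d3 := (d1.rpow_const (p := s) (Or.inl (by simpa using hApos.ne'))).sub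
    (d2.rpow_const (p := s) (Or.inl (by simpa using hApos.ne')))
  refine ⟨_, ?_, d3.congr_of_eventuallyEq (Eventually.of_forall fun t => ?_)⟩
  · have hpw : 0 < A ^ (s - 1) := Real.rpow_pos_of_pos hApos _
    have h1 := mul_pos hp hpw
    have h2 := mul_pos (neg_pos.2 hs0) h1
    simp only [ne_eq, OfNat.ofNat_ne_zero, not_false_eq_true, zero_pow, add_zero, mul_zero, sub_zero]
    nlinarith
  · simp only [grn, newt, e1, e2, ← hs, Pi.sub_apply]

lemma deriv_contra {φ : ℝ → ℝ} {c : ℝ} (hc : c < 0) (h0 : φ 0 = 0)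
    (hd : HasDerivWithinAt φ c (Set.Ioi 0) 0) (hpos : ∀ᶠ t in 𝓝[>] (0:ℝ), 0 ≤ φ t) : False := by
  rw [hasDerivWithinAt_iff_tendsto_slope' (by simp)] at hd
  have h1 : ∀ᶠ t in 𝓝[>] (0:ℝ), 0 ≤ slope φ 0 t := by
    filter_upwards [hpos, self_mem_nhdsWithin] with t ht ht0
    rw [slope_def_field, h0]
    have : (0:ℝ) < t := ht0
    simp only [sub_zero]; positivity
  have := ge_of_tendsto hd h1
  linarith

/-- Lower barrier on a half-space. -/
lemma barrier {N : ℕ} (hN : 3 ≤ N) {n x p : EuclideanSpace ℝ (Fin N)} (hn : ‖n‖ = 1)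
    {f : EuclideanSpace ℝ (Fin N) → ℝ}
    (hc : ContinuousOn f {y | 0 ≤ inner ℝ n (y - x)})
    (hh : ∀ y, 0 < inner ℝ n (y - x) → Har f y)
    (hb : ∀ y, inner ℝ n (y - x) = 0 → 0 ≤ f y)
    (hinf : ∀ η > 0, ∀ᶠ y in cocompact (EuclideanSpace ℝ (Fin N)),
      0 < inner ℝ n (y - x) → -η ≤ f y)
    {r : ℝ} (hr : 0 < r)
    (hball : ∀ y ∈ Metric.closedBall p r, 0 < inner ℝ n (y - x) ∧ 0 < f y) :
    ∃ ε > 0, ∀ y, 0 < inner ℝ n (y - x) → y ∉ Metric.ball p r → ε * grn n x p y ≤ f y := by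
  have hpH : 0 < inner ℝ n (p - x) := (hball p (Metric.mem_closedBall_self hr.le)).1
  obtain ⟨z, hz, hzmin⟩ := (isCompact_closedBall p r).exists_isMinOn
    ⟨p, Metric.mem_closedBall_self hr.le⟩
    (hc.mono fun y hy => (hball y hy).1.le)
  have hδ : 0 < f z := (hball z hz).2
  set M := (r ^ 2) ^ ((2 - (N:ℝ)) / 2) with hM
  have hMpos : 0 < M := by positivity
  have hεpos : 0 < f z / M := by positivity
  have hsph : ∀ y, ‖y - p‖ = r → f z / M * grn n x p y ≤ f y := by
    intro y hy
    have h1 : grn n x p y ≤ M := by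
      have := ker_nonneg (rflc n x p) y
      rw [grn]
      have e : newt p y = M := by rw [newt, hy]
      linarith
    calc f z / M * grn n x p y ≤ f z / M * M := by gcongr
      _ = f z := by field_simp
      _ ≤ f y := hzmin (by rw [mem_closedBall_iff_norm]; exact hy.le)
  refine ⟨f z / M, hεpos, ?_⟩
  set ε := f z / M with hε
  set U : Set (EuclideanSpace ℝ (Fin N)) :=
    {y | 0 < inner ℝ n (y - x)} ∩ (Metric.closedBall p r)ᶜ with hUdef
  have hUo : IsOpen U := by
    refine IsOpen.inter ?_ Metric.isClosed_closedBall.isOpen_compl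
    exact isOpen_lt continuous_const (by fun_prop)
  have hcl : closure U ⊆ {y | 0 ≤ inner ℝ n (y - x)} ∩ {y | r ≤ ‖y - p‖} := by
    apply closure_minimal
    · rintro y ⟨h1, h2⟩
      refine ⟨(show 0 < inner ℝ n (y - x) from h1).le, ?_⟩
      simp only [Set.mem_compl_iff, mem_closedBall_iff_norm, not_le] at h2
      exact h2.le
    · exact (isClosed_le continuous_const (by fun_prop)).inter
        (isClosed_le continuous_const (by fun_prop))
  have hne : ∀ y, r ≤ ‖y - p‖ → y ≠ p := by
    rintro y hy rfl
    simp at hy; linarith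
  have hmp := min_principle hN hUo (f := fun y => f y - ε * grn n x p y) ?_ ?_ ?_ ?_
  · intro y hy hyb
    by_cases hyr : ‖y - p‖ = r
    · exact hsph y hyr
    · have : y ∈ U := by
        refine ⟨hy, ?_⟩
        simp only [Set.mem_compl_iff, mem_closedBall_iff_norm, not_le]
        simp only [mem_ball_iff_norm, not_lt] at hyb
        exact lt_of_le_of_ne hyb (Ne.symm hyr)
      have := hmp y this
      linarith
  · refine (hc.mono fun y hy => (hcl hy).1).sub ?_
    intro y hy
    have := hcl hy
    exact ((Har.grn hn hpH this.1 (hne y this.2)).1.continuousAt.const_mul ε).continuousWithinAt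
  · intro y hy
    have h := hcl (subset_closure hy)
    exact (hh y hy.1).sub ((Har.grn hn hpH h.1 (hne y h.2)).const_mul ε)
  · intro y hy
    rw [hUo.frontier_eq] at hy
    have h := hcl hy.1
    by_cases h0 : inner ℝ n (y - x) = 0
    · simp only [grn_plane hn h0, mul_zero, sub_zero]
      exact hb y h0
    · have h1 : 0 < inner ℝ n (y - x) := lt_of_le_of_ne h.1 (Ne.symm h0)
      have h2 : ‖y - p‖ ≤ r := by
        by_contra h3
        apply hy.2
        refine ⟨h1, ?_⟩
        simp only [Set.mem_compl_iff, mem_closedBall_iff_norm]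
        exact h3
      have := hsph y (le_antisymm h2 h.2)
      linarith
  · intro η hη
    have h1 := (tendsto_grn hN n x p).const_mul ε
    rw [mul_zero] at h1
    filter_upwards [hinf (η / 2) (by linarith), h1.eventually (gt_mem_nhds (half_pos hη))]
      with y hy1 hy2 hyU
    have := hy1 hyU.1
    linarith

/-- **No equilibrium points outside the convex hull** (Enciso–Peralta-Salas; an analog of
Lucas's theorem).  The capacity potential `u` of finitely many bodies `D₁, …, D_J` in
`ℝ^N`, `N ≥ 3`, has no critical points in `closure Ω` outside the interior of the convex
hull `K` of `D₁ ∪ … ∪ D_J`. -/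
theorem capacity_potential_no_critical_points_outside_convex_hull
    (N : ℕ) (hN : 3 ≤ N) (J : ℕ) (hJ : 0 < J)
    (α : NNReal) (hα0 : 0 < α) (hα1 : α < 1)
    (D : Fin J → Set (EuclideanSpace ℝ (Fin N)))
    (hopen : ∀ j, IsOpen (D j)) (hbdd : ∀ j, Bornology.IsBounded (D j))
    (hconn : ∀ j, IsConnected (D j))
    (hreg : ∀ j, HasC1AlphaBoundary (D j) α)
    (hdisj : ∀ j k, j ≠ k → Disjoint (closure (D j)) (closure (D k)))
    (Ω : Set (EuclideanSpace ℝ (Fin N)))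
    (hΩ : Ω = Set.univ \ ⋃ j, closure (D j))
    (u : EuclideanSpace ℝ (Fin N) → ℝ)
    (hu1 : ContDiffOn ℝ 1 u (closure Ω))
    (hu2 : ContDiffOn ℝ 2 u Ω)
    (hharm : ∀ x ∈ Ω, lapE u x = 0)
    (hbc : ∀ x ∈ frontier Ω, u x = 1)
    (hinfty : Tendsto u (Filter.cocompact (EuclideanSpace ℝ (Fin N))) (𝓝 0)) :
    ∀ x ∈ closure Ω, x ∉ interior (convexHull ℝ (⋃ j, D j)) →
      fderivWithin ℝ u (closure Ω) x ≠ 0 := by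
  intro x hx hxK hzero
  have hfd : HasFDerivWithinAt u (0 : EuclideanSpace ℝ (Fin N) →L[ℝ] ℝ) (closure Ω) x := by
    rw [← hzero]
    exact ((hu1 x hx).differentiableWithinAt (by norm_num)).hasFDerivWithinAt
  have hΩo : IsOpen Ω := by
    rw [hΩ, ← Set.compl_eq_univ_diff]
    exact (isClosed_iUnion_of_finite fun j => isClosed_closure).isOpen_compl
  have hcont : ContinuousOn u (closure Ω) := hu1.continuousOn
  have hHar : ∀ y ∈ Ω, Har u y := by
    intro y hy
    have hc := hu2.contDiffAt (hΩo.mem_nhds hy)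
    exact ⟨hc, by rw [lapl_eq_lapE hc, hharm y hy]⟩
  have hsmall : ∀ η > 0, ∀ᶠ y in cocompact (EuclideanSpace ℝ (Fin N)), |u y| < η := by
    intro η hη
    have := hinfty.eventually (Metric.ball_mem_nhds 0 hη)
    simpa [Real.dist_eq] using this
  obtain ⟨d, hd⟩ := (hconn ⟨0, hJ⟩).nonempty
  -- the supporting hyperplane
  obtain ⟨n, hn, hDn⟩ : ∃ n : EuclideanSpace ℝ (Fin N), ‖n‖ = 1 ∧
      ∀ j, ∀ y ∈ D j, inner ℝ n (y - x) < 0 := by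
    obtain ⟨f, hf⟩ := geometric_hahn_banach_open_point
      ((convex_convexHull ℝ (⋃ j, D j)).interior) isOpen_interior hxK
    have hsub : ∀ j, D j ⊆ interior (convexHull ℝ (⋃ j, D j)) := fun j =>
      interior_maximal ((Set.subset_iUnion D j).trans (subset_convexHull ℝ _)) (hopen j)
    set n0 := (InnerProductSpace.toDual ℝ (EuclideanSpace ℝ (Fin N))).symm f with hn0
    have hfn : ∀ y, inner ℝ n0 y = f y := fun y => by
      rw [hn0, InnerProductSpace.toDual_symm_apply]
    have hlt : ∀ j, ∀ y ∈ D j, inner ℝ n0 (y - x) < 0 := by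
      intro j y hy
      have := hf y (hsub j hy)
      rw [hfn, map_sub]; linarith
    have hne : n0 ≠ 0 := by
      intro h
      have := hlt _ d hd
      simp [h] at this
    have hnpos : 0 < ‖n0‖ := norm_pos_iff.mpr hne
    refine ⟨‖n0‖⁻¹ • n0, ?_, fun j y hy => ?_⟩
    · rw [norm_smul, norm_inv, norm_norm]; field_simp
    · rw [real_inner_smul_left]
      exact mul_neg_of_pos_of_neg (inv_pos.mpr hnpos) (hlt j y hy)
  have hDcl : ∀ j, ∀ y ∈ closure (D j), inner ℝ n (y - x) ≤ 0 := by
    intro j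
    have : closure (D j) ⊆ {y | inner ℝ n (y - x) ≤ 0} :=
      closure_minimal (fun y hy => (hDn j y hy).le)
        (isClosed_le (by fun_prop) continuous_const)
    exact this
  have hHΩ : ∀ y, 0 < inner ℝ n (y - x) → y ∈ Ω := by
    intro y hy
    rw [hΩ]
    refine ⟨Set.mem_univ _, ?_⟩
    simp only [Set.mem_iUnion, not_exists]
    intro j hj
    have := hDcl j y hj
    linarith
  have hinn : ∀ (y : EuclideanSpace ℝ (Fin N)) (t : ℝ),
      inner ℝ n (y + t • n - x) = inner ℝ n (y - x) + t := by
    intro y t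
    have : y + t • n - x = (y - x) + t • n := by abel
    rw [this, inner_add_right, inner_smul_right, real_inner_self_eq_norm_sq, hn]; ring
  have hHcl : ∀ y, 0 ≤ inner ℝ n (y - x) → y ∈ closure Ω := by
    intro y hy
    have ht : Tendsto (fun t : ℝ => y + t • n) (𝓝[>] 0) (𝓝 y) := by
      have : Continuous (fun t : ℝ => y + t • n) := by fun_prop
      have h := this.tendsto 0
      simp only [zero_smul, add_zero] at h
      exact h.mono_left nhdsWithin_le_nhds
    refine mem_closure_of_tendsto ht ?_
    filter_upwards [self_mem_nhdsWithin] with t ht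
    apply hHΩ
    rw [hinn]
    have : (0:ℝ) < t := ht
    linarith
  have hle : ∀ y ∈ closure Ω, u y ≤ 1 := by
    have h1 := min_principle hN hΩo (f := fun y => 1 - u y) (continuousOn_const.sub hcont)
      (fun y hy => (Har.const 1 y).sub (hHar y hy))
      (fun y hy => by rw [hbc y hy]; norm_num)
      (fun η hη => by
        filter_upwards [hsmall 1 one_pos] with y hy _
        have := (abs_lt.1 hy).2
        linarith)
    intro y hy
    by_cases hyΩ : y ∈ Ω
    · have := h1 y hyΩ; linarith
    · have : y ∈ frontier Ω := by rw [hΩo.frontier_eq]; exact ⟨hy, hyΩ⟩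
      exact (hbc y this).le
  have hbar : ∀ (p : EuclideanSpace ℝ (Fin N)) (r : ℝ), 0 < r →
      (∀ y ∈ Metric.closedBall p r, 0 < inner ℝ n (y - x) ∧ 0 < 1 - u y) →
      ∃ ε > 0, ∀ y, 0 < inner ℝ n (y - x) → y ∉ Metric.ball p r →
        ε * grn n x p y ≤ 1 - u y := by
    intro p r hr hball
    refine barrier hN hn (f := fun y => 1 - u y)
      (continuousOn_const.sub (hcont.mono fun y hy => hHcl y hy))
      (fun y hy => (Har.const 1 y).sub (hHar y (hHΩ y hy)))
      (fun y hy => by have := hle y (hHcl y hy.ge); linarith) ?_ hr hball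
    intro η hη
    filter_upwards [hsmall 1 one_pos] with y hy _
    have := (abs_lt.1 hy).2
    linarith
  have hHo : IsOpen {y | 0 < inner ℝ n (y - x)} := isOpen_lt continuous_const (by fun_prop)
  -- a far away point of the half-space
  obtain ⟨q, hqH, hq⟩ : ∃ q, 0 < inner ℝ n (q - x) ∧ u q < 1 / 2 := by
    have ht : Tendsto (fun t : ℝ => x + t • n) atTop (cocompact _) := by
      rw [← Metric.cobounded_eq_cocompact, ← tendsto_norm_atTop_iff_cobounded]
      refine tendsto_atTop_mono (f := fun t : ℝ => t - ‖x‖) (fun t => ?_)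
        (tendsto_atTop_add_const_right _ _ tendsto_id)
      have h1 : ‖t • n‖ ≤ ‖x + t • n‖ + ‖x‖ := by
        have := norm_sub_le (x + t • n) x
        rwa [add_sub_cancel_left] at this
      rw [norm_smul, hn, mul_one, Real.norm_eq_abs] at h1
      have := le_abs_self t
      linarith
    have h2 := ht.eventually (hsmall (1 / 2) (by norm_num))
    obtain ⟨t, ht1, ht2⟩ := (h2.and (eventually_gt_atTop (0:ℝ))).exists
    refine ⟨x + t • n, ?_, (abs_lt.1 ht1).2⟩
    rw [hinn]; simpa using ht2
  obtain ⟨r, hr, hrb⟩ : ∃ r > 0, ∀ y ∈ Metric.closedBall q r,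
      0 < inner ℝ n (y - x) ∧ 0 < 1 - u y := by
    have hnh : ∀ᶠ y in 𝓝 q, 0 < inner ℝ n (y - x) ∧ 0 < 1 - u y := by
      have hcq : ContinuousAt u q := (hHar q (hHΩ q hqH)).1.continuousAt
      filter_upwards [hHo.mem_nhds hqH, hcq.eventually (gt_mem_nhds hq)] with y h1 h2
      exact ⟨h1, by linarith⟩
    obtain ⟨r, hr, h⟩ := Metric.nhds_basis_closedBall.mem_iff.1 hnh
    exact ⟨r, hr, fun y hy => h hy⟩
  obtain ⟨ε, hε, hεb⟩ := hbar q r hr hrb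
  have hlt : ∀ y, 0 < inner ℝ n (y - x) → u y < 1 := by
    intro y hy
    by_cases hyb : y ∈ Metric.ball q r
    · have := (hrb y (Metric.ball_subset_closedBall hyb)).2
      linarith
    · have hyq : y ≠ q := by rintro rfl; exact hyb (Metric.mem_ball_self hr)
      have h1 := hεb y hy hyb
      have h2 := mul_pos hε (grn_pos hN hn hqH hy hyq)
      linarith
  have hxx : inner ℝ n (x - x) = 0 := by simp
  have hline : Continuous fun t : ℝ => x + t • n := by fun_prop
  have hlined : ∀ c : ℝ, HasDerivAt (fun t : ℝ => x + (c * t) • n) (c • n) 0 := by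
    intro c
    have h := (((hasDerivAt_id (0:ℝ)).const_mul c).smul_const n).const_add x
    exact h.congr_deriv (by simp)
  have hder1 : HasDerivWithinAt (fun t : ℝ => u (x + (1 * t) • n)) 0 (Set.Ioi 0) 0 := by
    have h0 : HasFDerivWithinAt u (0 : EuclideanSpace ℝ (Fin N) →L[ℝ] ℝ) (closure Ω)
      (x + ((1:ℝ) * 0) • n) := by simpa using hfd
    have := h0.comp_hasDerivWithinAt (0:ℝ) (hlined 1).hasDerivWithinAt (s := Set.Ioi 0)
      (fun t ht => by
        apply hHcl; rw [hinn, hxx]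
        have : (0:ℝ) < t := ht
        linarith)
    simpa [Function.comp_def] using this
  simp only [one_mul] at hder1
  by_cases hxΩ : x ∈ Ω
  swap
  · -- boundary case
    have hux : u x = 1 := hbc x (by rw [hΩo.frontier_eq]; exact ⟨hx, hxΩ⟩)
    obtain ⟨c, hc, hgd⟩ := grn_deriv hN hn hqH
    have hφ := ((hasDerivWithinAt_const (0:ℝ) (Set.Ioi 0) (1:ℝ)).sub hder1).sub
      ((hgd.const_mul ε).hasDerivWithinAt (s := Set.Ioi 0))
    refine deriv_contra (c := 0 - 0 - ε * c) (by have := mul_pos hε hc; linarith) ?_ hφ ?_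
    · simp [hux, grn_plane hn hxx]
    · have hxb : x ∉ Metric.closedBall q r := fun h => by
        have := (hrb x h).1
        rw [hxx] at this; exact lt_irrefl _ this
      have hev : ∀ᶠ t in 𝓝 (0:ℝ), x + t • n ∈ (Metric.closedBall q r)ᶜ := by
        apply hline.continuousAt.eventually
        simp only [zero_smul, add_zero]
        exact Metric.isClosed_closedBall.isOpen_compl.mem_nhds hxb
      filter_upwards [nhdsWithin_le_nhds hev, self_mem_nhdsWithin] with t ht ht0
      have h0 : (0:ℝ) < t := ht0
      have := hεb (x + t • n) (by rw [hinn, hxx]; linarith)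
        (fun h => ht (Metric.ball_subset_closedBall h))
      simp only [Pi.sub_apply]
      linarith
  -- interior case: reflection
  set p := rflc n x d with hp
  have hσp : rflc n x p = d := rflc_rflc hn x d
  have hpH : 0 < inner ℝ n (p - x) := by
    rw [hp, inner_rflc hn]; have := hDn _ d hd; linarith
  have hσc := continuous_rflc n x
  obtain ⟨r', hr', hrb'⟩ : ∃ r > 0, ∀ y ∈ Metric.closedBall p r,
      0 < inner ℝ n (y - x) ∧ rflc n x y ∈ D ⟨0, hJ⟩ := by
    have hnh : ∀ᶠ y in 𝓝 p, 0 < inner ℝ n (y - x) ∧ rflc n x y ∈ D ⟨0, hJ⟩ := by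
      have h2 : ∀ᶠ y in 𝓝 p, rflc n x y ∈ D ⟨0, hJ⟩ := by
        apply hσc.continuousAt.eventually
        rw [hσp]; exact (hopen _).mem_nhds hd
      filter_upwards [hHo.mem_nhds hpH, h2] with y h1 h2
      exact ⟨h1, h2⟩
    obtain ⟨r, hr, h⟩ := Metric.nhds_basis_closedBall.mem_iff.1 hnh
    exact ⟨r, hr, fun y hy => h hy⟩
  obtain ⟨ε', hε', hεb'⟩ := hbar p r' hr' (fun y hy => ⟨(hrb' y hy).1, by
    have := hlt y (hrb' y hy).1; linarith⟩)
  have hDΩ : ∀ y ∈ closure Ω, y ∉ D ⟨0, hJ⟩ := by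
    intro y hy hyD
    rw [mem_closure_iff] at hy
    obtain ⟨z, hz1, hz2⟩ := hy _ (hopen _) hyD
    rw [hΩ] at hz2
    exact hz2.2 (Set.mem_iUnion.2 ⟨_, subset_closure hz1⟩)
  set W : Set (EuclideanSpace ℝ (Fin N)) :=
    {y | 0 < inner ℝ n (y - x)} ∩ (rflc n x) ⁻¹' Ω with hW
  have hWo : IsOpen W := hHo.inter (hΩo.preimage hσc)
  have hWcl : closure W ⊆ {y | 0 ≤ inner ℝ n (y - x)} ∩ (rflc n x) ⁻¹' (closure Ω) := by
    apply closure_minimal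
    · rintro y ⟨h1, h2⟩
      exact ⟨(show 0 < inner ℝ n (y - x) from h1).le, subset_closure h2⟩
    · exact (isClosed_le continuous_const (by fun_prop)).inter (isClosed_closure.preimage hσc)
  have hWp : ∀ y ∈ closure W, y ∉ Metric.closedBall p r' := by
    intro y hy hyb
    exact hDΩ _ (hWcl hy).2 (hrb' y hyb).2
  have hWne : ∀ y ∈ closure W, y ≠ p := by
    rintro y hy rfl
    exact hWp _ hy (Metric.mem_closedBall_self hr'.le)
  have hmain := min_principle hN hWo
    (f := fun y => u (rflc n x y) - u y - ε' * grn n x p y) (by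
      refine ((hcont.comp hσc.continuousOn fun y hy => (hWcl hy).2).sub
        (hcont.mono fun y hy => hHcl y (hWcl hy).1)).sub ?_
      intro y hy
      exact ((Har.grn hn hpH (hWcl hy).1
        (hWne y hy)).1.continuousAt.const_mul ε').continuousWithinAt)
    (by
      intro y hy
      have hy' := subset_closure hy
      exact (((hHar _ hy.2).comp_rflc hn).sub (hHar y (hHΩ y hy.1))).sub
        ((Har.grn hn hpH (hWcl hy').1 (hWne y hy')).const_mul ε'))
    (by
      intro y hy
      rw [hWo.frontier_eq] at hy
      have h := hWcl hy.1
      by_cases h0 : inner ℝ n (y - x) = 0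
      · simp [grn_plane hn h0, rflc_of_plane h0]
      · have h1 : 0 < inner ℝ n (y - x) := lt_of_le_of_ne h.1 (Ne.symm h0)
        have h2 : rflc n x y ∉ Ω := fun h2 => hy.2 ⟨h1, h2⟩
        have h3 : u (rflc n x y) = 1 := hbc _ (by rw [hΩo.frontier_eq]; exact ⟨h.2, h2⟩)
        have h4 := hεb' y h1 (fun hb => hWp y hy.1 (Metric.ball_subset_closedBall hb))
        rw [h3]; linarith)
    (by
      intro η hη
      have h1 := (tendsto_grn hN n x p).const_mul ε'
      rw [mul_zero] at h1
      have h2 := (hinfty.comp (tendsto_rflc hn x)).sub hinfty |>.sub h1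
      simp only [sub_zero] at h2
      filter_upwards [h2.eventually (lt_mem_nhds (show -η < 0 by linarith))] with y hy _
      exact hy.le)
  have hev : ∀ c : ℝ, ∀ᶠ t in 𝓝 (0:ℝ), x + (c * t) • n ∈ Ω := by
    intro c
    have : Continuous fun t : ℝ => x + (c * t) • n := by fun_prop
    apply this.continuousAt.eventually
    simp only [mul_zero, zero_smul, add_zero]
    exact hΩo.mem_nhds hxΩ
  have hfx : HasFDerivAt u (0 : EuclideanSpace ℝ (Fin N) →L[ℝ] ℝ) (x + ((-1:ℝ) * 0) • n) := by
    simp only [mul_zero, zero_smul, add_zero]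
    exact hfd.hasFDerivAt (mem_of_superset (hΩo.mem_nhds hxΩ) subset_closure)
  have hder2 : HasDerivWithinAt (fun t : ℝ => u (x + (-1 * t) • n)) 0 (Set.Ioi 0) 0 := by
    have := (hfx.comp_hasDerivAt (0:ℝ) (hlined (-1))).hasDerivWithinAt (s := Set.Ioi 0)
    simpa [Function.comp_def] using this
  obtain ⟨c, hc, hgd⟩ := grn_deriv hN hn hpH
  have hφ := (hder2.sub hder1).sub ((hgd.const_mul ε').hasDerivWithinAt (s := Set.Ioi 0))
  refine deriv_contra (c := 0 - 0 - ε' * c) (by have := mul_pos hε' hc; linarith) ?_ hφ ?_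
  · simp [grn_plane hn hxx]
  · filter_upwards [nhdsWithin_le_nhds (hev (-1)), self_mem_nhdsWithin] with t ht ht0
    have h0 : (0:ℝ) < t := ht0
    have hrf : rflc n x (x + t • n) = x + (-1 * t) • n := by
      rw [rflc, hinn, hxx]; module
    have := hmain (x + t • n) ⟨by
      change 0 < inner ℝ n (x + t • n - x)
      rw [hinn, hxx]; linarith, by
      change rflc n x (x + t • n) ∈ Ω
      rw [hrf]; exact ht⟩
    simp only [Pi.sub_apply]
    rw [hrf] at this
    exact this
end

section
/- Let Ω ⊂ ℝ^N be a bounded open convex set and let u : closure(Ω) → ℝ be continuous, with u = 0 on ∂Ω, u > 0 in Ω, u real-analytic in Ω, and quasi-concave. Then u attains its maximum over closure(Ω) at exactly one point; i.e., the set {x ∈ closure(Ω) : u(x) = max u} is a singleton. -/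
/-- A positive quasi-concave function, real-analytic on a bounded convex open set `Ω`,
continuous up to the boundary and vanishing there, attains its maximum over
`closure Ω` at exactly one point. -/
theorem quasiconcave_analytic_unique_maximum_point
    (N : ℕ) (Ω : Set (EuclideanSpace ℝ (Fin N)))
    (hΩo : IsOpen Ω) (hΩb : Bornology.IsBounded Ω) (hΩconv : Convex ℝ Ω)
    (hΩne : Ω.Nonempty)
    (u : EuclideanSpace ℝ (Fin N) → ℝ)
    (hcont : ContinuousOn u (closure Ω))
    (hbc : ∀ x ∈ frontier Ω, u x = 0)
    (hpos : ∀ x ∈ Ω, 0 < u x)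
    (hanal : AnalyticOnNhd ℝ u Ω)
    (hqc : ∀ s : ℝ, Convex ℝ {x ∈ closure Ω | s ≤ u x}) :
    ∃! x, x ∈ closure Ω ∧ ∀ y ∈ closure Ω, u y ≤ u x := by
  obtain ⟨x, hx, hmax⟩ := hΩb.isCompact_closure.exists_isMaxOn hΩne.closure hcont
  have hmem : ∀ z ∈ closure Ω, z ∉ Ω → u z = 0 := fun z hz hzn =>
    hbc z (by rw [hΩo.frontier_eq]; exact ⟨hz, hzn⟩)
  obtain ⟨p, hp⟩ := hΩne
  have hM : 0 < u x := lt_of_lt_of_le (hpos p hp) (hmax (subset_closure hp))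
  refine ⟨x, ⟨hx, fun y hy => hmax hy⟩, ?_⟩
  rintro y ⟨hy, hymax⟩
  by_contra hne
  have hyx : u y = u x := le_antisymm (hmax hy) (hymax x hx)
  have hxΩ : x ∈ Ω := by
    by_contra h
    have := hmem x hx h
    linarith
  have hyΩ : y ∈ Ω := by
    by_contra h
    have := hmem y hy h
    linarith
  let γ : ℝ → EuclideanSpace ℝ (Fin N) := fun t => x + t • (y - x)
  have hγc : Continuous γ := by fun_prop
  have hγa : AnalyticOnNhd ℝ γ Set.univ := fun t _ => by fun_prop
  let T : Set ℝ := γ ⁻¹' Ω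
  have hTo : IsOpen T := hΩo.preimage hγc
  have hTconv : Convex ℝ T := by
    intro a ha b hb c d hc hd hcd
    have h := hΩconv ha hb hc hd hcd
    have e : γ (c • a + d • b) = c • γ a + d • γ b := by
      have : c = 1 - d := by linarith
      subst this
      simp only [γ, smul_eq_mul]
      module
    change γ (c • a + d • b) ∈ Ω
    rw [e]; exact h
  have h01 : ∀ t ∈ Set.Icc (0 : ℝ) 1, t ∈ T ∧ u (γ t) = u x := by
    intro t ht
    have e : γ t = (1 - t) • x + t • y := by
      simp only [γ]
      module
    constructor
    · change γ t ∈ Ω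
      rw [e]
      exact hΩconv hxΩ hyΩ (by linarith [ht.2]) ht.1 (by ring)
    · have h := hqc (u x) (x := x) ⟨hx, le_rfl⟩ (y := y) ⟨hy, hyx.ge⟩
        (show 0 ≤ 1 - t by linarith [ht.2]) ht.1 (by ring)
      rw [e]
      exact le_antisymm (hmax h.1) h.2
  have hga : AnalyticOnNhd ℝ (u ∘ γ) T :=
    hanal.comp (hγa.mono (Set.subset_univ _)) (fun t ht => ht)
  have hconst : Set.EqOn (u ∘ γ) (fun _ => u x) T := by
    refine hga.eqOn_of_preconnected_of_eventuallyEq (fun t _ => analyticAt_const)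
      hTconv.isPreconnected (h01 (1 / 2) (by constructor <;> norm_num)).1 ?_
    filter_upwards [Icc_mem_nhds (show (0 : ℝ) < 1 / 2 by norm_num)
      (show (1 / 2 : ℝ) < 1 by norm_num)] with t ht
    exact (h01 t ht).2
  have hTne : T.Nonempty := ⟨0, (h01 0 (by simp)).1⟩
  have hd : 0 < ‖y - x‖ := norm_pos_iff.mpr (sub_ne_zero.mpr hne)
  have hTuniv : T ≠ Set.univ := by
    intro h
    obtain ⟨C, hC⟩ := hΩb.exists_norm_le
    have hC0 : 0 ≤ C := (norm_nonneg x).trans (hC x hxΩ)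
    have h1 : γ ((C + ‖x‖ + 1) / ‖y - x‖) ∈ Ω := by
      change _ ∈ T
      rw [h]; trivial
    have h2 := hC _ h1
    have h3 : ‖((C + ‖x‖ + 1) / ‖y - x‖) • (y - x)‖ = C + ‖x‖ + 1 := by
      rw [norm_smul, Real.norm_of_nonneg (by positivity)]
      field_simp
    have h4 := norm_sub_le (γ ((C + ‖x‖ + 1) / ‖y - x‖)) x
    have h5 : γ ((C + ‖x‖ + 1) / ‖y - x‖) - x = ((C + ‖x‖ + 1) / ‖y - x‖) • (y - x) := by
      simp [γ]
    rw [h5, h3] at h4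
    linarith
  obtain ⟨t, ht⟩ := nonempty_frontier_iff.mpr ⟨hTne, hTuniv⟩
  rw [hTo.frontier_eq] at ht
  have hmaps : Set.MapsTo γ (closure T) (closure Ω) := fun s hs =>
    hγc.closure_preimage_subset Ω hs
  have hcl : Set.EqOn (u ∘ γ) (fun _ => u x) (closure T) :=
    hconst.of_subset_closure (hcont.comp hγc.continuousOn hmaps) continuousOn_const
      subset_closure subset_rfl
  have h1 : u (γ t) = u x := hcl ht.1
  have h2 := hmem (γ t) (hmaps ht.1) ht.2
  linarith
end

section
/- The function u : ℝ³ → ℝ defined by u(x,y,z) = x² − y² + (x² + y²)·z − (2/3)·z³ is harmonic on ℝ³ (i.e. u_xx + u_yy + u_zz = 0 everywhere), and its critical set {p ∈ ℝ³ : ∇u(p) = 0} is exactly the five-point set {(0,0,0), (0,√2,1), (0,−√2,1), (√2,0,−1), (−√2,0,−1)}. In particular, all critical points of u are isolated, even though the critical set of its lowest-order homogeneous part x² − y² is the whole z-axis. -/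
theorem hcf_x (p : ℝ × ℝ × ℝ) :
    HasFDerivAt (fun q : ℝ × ℝ × ℝ => q.1) (ContinuousLinearMap.fst ℝ ℝ (ℝ × ℝ)) p :=
  hasFDerivAt_fst

theorem hcf_y (p : ℝ × ℝ × ℝ) :
    HasFDerivAt (fun q : ℝ × ℝ × ℝ => q.2.1)
      ((ContinuousLinearMap.fst ℝ ℝ ℝ).comp (ContinuousLinearMap.snd ℝ ℝ (ℝ × ℝ))) p :=
  hasFDerivAt_snd.fst

theorem hcf_z (p : ℝ × ℝ × ℝ) :
    HasFDerivAt (fun q : ℝ × ℝ × ℝ => q.2.2)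
      ((ContinuousLinearMap.snd ℝ ℝ ℝ).comp (ContinuousLinearMap.snd ℝ ℝ (ℝ × ℝ))) p :=
  hasFDerivAt_snd.snd

theorem hcf_fderiv_u (p v : ℝ × ℝ × ℝ) :
    fderiv ℝ (fun p : ℝ × ℝ × ℝ => p.1 ^ 2 - p.2.1 ^ 2 + (p.1 ^ 2 + p.2.1 ^ 2) * p.2.2
      - (2 / 3) * p.2.2 ^ 3) p v =
    (2 * p.1 + 2 * p.1 * p.2.2) * v.1 + (2 * p.2.1 * p.2.2 - 2 * p.2.1) * v.2.1
      + (p.1 ^ 2 + p.2.1 ^ 2 - 2 * p.2.2 ^ 2) * v.2.2 := by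
  have h := (((((hcf_x p).pow 2).fun_sub ((hcf_y p).pow 2)).fun_add
    ((((hcf_x p).pow 2).fun_add ((hcf_y p).pow 2)).fun_mul (hcf_z p))).fun_sub
    (((hcf_z p).pow 3).const_mul (2 / 3)))
  rw [HasFDerivAt.fderiv h]
  simp
  ring

theorem hcf_fderiv_low (p v : ℝ × ℝ × ℝ) :
    fderiv ℝ (fun p : ℝ × ℝ × ℝ => p.1 ^ 2 - p.2.1 ^ 2) p v =
    2 * p.1 * v.1 - 2 * p.2.1 * v.2.1 := by
  have h := (((hcf_x p).pow 2).fun_sub ((hcf_y p).pow 2))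
  rw [HasFDerivAt.fderiv h]
  simp

theorem hcf_crit (p : ℝ × ℝ × ℝ) :
    fderiv ℝ (fun p : ℝ × ℝ × ℝ => p.1 ^ 2 - p.2.1 ^ 2 + (p.1 ^ 2 + p.2.1 ^ 2) * p.2.2
      - (2 / 3) * p.2.2 ^ 3) p = 0 ↔
    p ∈ ({(0, 0, 0), (0, Real.sqrt 2, 1), (0, -Real.sqrt 2, 1),
        (Real.sqrt 2, 0, -1), (-Real.sqrt 2, 0, -1)} : Set (ℝ × ℝ × ℝ)) := by
  have hs : Real.sqrt 2 ^ 2 = 2 := Real.sq_sqrt (by norm_num)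
  obtain ⟨x, y, z⟩ := p
  constructor
  · intro h
    have h1 := hcf_fderiv_u (x, y, z) (1, 0, 0)
    have h2 := hcf_fderiv_u (x, y, z) (0, 1, 0)
    have h3 := hcf_fderiv_u (x, y, z) (0, 0, 1)
    rw [h] at h1 h2 h3
    simp only [zero_apply, mul_one, mul_zero, add_zero, zero_add] at h1 h2 h3
    have e1 : x * (1 + z) = 0 := by linarith
    have e2 : y * (z - 1) = 0 := by linarith
    simp only [Set.mem_insert_iff, Set.mem_singleton_iff, Prod.mk.injEq]
    rcases mul_eq_zero.1 e1 with hx | hz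
    · rcases mul_eq_zero.1 e2 with hy | hz
      · subst hx hy
        have : z = 0 := by
          have : z ^ 2 = 0 := by linarith
          exact pow_eq_zero_iff (two_ne_zero) |>.1 this
        simp [this]
      · have hz' : z = 1 := by linarith
        subst hx hz'
        have : y ^ 2 = Real.sqrt 2 ^ 2 := by rw [hs]; linarith
        rcases sq_eq_sq_iff_eq_or_eq_neg.1 this with h | h <;> simp [h]
    · have hz' : z = -1 := by linarith
      have hy : y = 0 := by rw [hz'] at e2; linarith
      subst hy hz'
      have : x ^ 2 = Real.sqrt 2 ^ 2 := by rw [hs]; linarith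
      rcases sq_eq_sq_iff_eq_or_eq_neg.1 this with h | h <;> simp [h]
  · intro h
    apply ContinuousLinearMap.ext
    intro v
    rw [hcf_fderiv_u]
    simp only [Set.mem_insert_iff, Set.mem_singleton_iff, Prod.mk.injEq] at h
    rcases h with ⟨rfl, rfl, rfl⟩ | ⟨rfl, rfl, rfl⟩ | ⟨rfl, rfl, rfl⟩ | ⟨rfl, rfl, rfl⟩ |
      ⟨rfl, rfl, rfl⟩ <;> simp


/-- The harmonic polynomial `u(x,y,z) = x² − y² + (x²+y²)z − (2/3)z³` on `ℝ³` has exactly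
five critical points, all isolated, although the critical set of its lowest-order
homogeneous part `x² − y²` is the whole `z`-axis. -/
theorem harmonic_cubic_five_isolated_critical_points
    (u : ℝ × ℝ × ℝ → ℝ)
    (hu : u = fun p => p.1 ^ 2 - p.2.1 ^ 2 + (p.1 ^ 2 + p.2.1 ^ 2) * p.2.2
      - (2 / 3) * p.2.2 ^ 3) :
    -- `u` is harmonic on all of `ℝ³`
    (∀ p : ℝ × ℝ × ℝ,
      fderiv ℝ (fun q => fderiv ℝ u q ((1, 0, 0) : ℝ × ℝ × ℝ)) p ((1, 0, 0) : ℝ × ℝ × ℝ) +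
      fderiv ℝ (fun q => fderiv ℝ u q ((0, 1, 0) : ℝ × ℝ × ℝ)) p ((0, 1, 0) : ℝ × ℝ × ℝ) +
      fderiv ℝ (fun q => fderiv ℝ u q ((0, 0, 1) : ℝ × ℝ × ℝ)) p ((0, 0, 1) : ℝ × ℝ × ℝ)
        = 0) ∧
    -- its critical set is exactly the given five-point set
    ({p : ℝ × ℝ × ℝ | fderiv ℝ u p = 0} =
      {(0, 0, 0), (0, Real.sqrt 2, 1), (0, -Real.sqrt 2, 1),
        (Real.sqrt 2, 0, -1), (-Real.sqrt 2, 0, -1)}) ∧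
    -- in particular all critical points of `u` are isolated
    (∀ p : ℝ × ℝ × ℝ, fderiv ℝ u p = 0 →
      ∃ ε > 0, ∀ q : ℝ × ℝ × ℝ, q ≠ p → dist q p < ε → fderiv ℝ u q ≠ 0) ∧
    -- while the critical set of the lowest-order homogeneous part `x² − y²` is the
    -- whole `z`-axis
    ({p : ℝ × ℝ × ℝ | fderiv ℝ (fun q : ℝ × ℝ × ℝ => q.1 ^ 2 - q.2.1 ^ 2) p = 0} =
      {p : ℝ × ℝ × ℝ | p.1 = 0 ∧ p.2.1 = 0}) := by
  subst hu
  refine ⟨?_, ?_, ?_, ?_⟩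
  · intro p
    simp only [hcf_fderiv_u, mul_one, mul_zero, add_zero, zero_add]
    have h1 := ((hcf_x p).const_mul 2).fun_add (((hcf_x p).const_mul 2).fun_mul (hcf_z p))
    have h2 := (((hcf_y p).const_mul 2).fun_mul (hcf_z p)).fun_sub ((hcf_y p).const_mul 2)
    have h3 := (((hcf_x p).pow 2).fun_add ((hcf_y p).pow 2)).fun_sub (((hcf_z p).pow 2).const_mul 2)
    rw [HasFDerivAt.fderiv h1, HasFDerivAt.fderiv h2, HasFDerivAt.fderiv h3]
    simp
    ring
  · ext p
    exact hcf_crit p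
  · intro p _
    have hfin : ({(0, 0, 0), (0, Real.sqrt 2, 1), (0, -Real.sqrt 2, 1),
        (Real.sqrt 2, 0, -1), (-Real.sqrt 2, 0, -1)} : Set (ℝ × ℝ × ℝ)).Finite :=
      Set.toFinite _
    have hopen := (hfin.subset (Set.sdiff_subset (t := {p}))).isClosed.isOpen_compl
    obtain ⟨ε, hε, hb⟩ := Metric.isOpen_iff.1 hopen p (by simp)
    refine ⟨ε, hε, fun q hq hd h0 => ?_⟩
    exact hb (Metric.mem_ball.2 hd) ⟨(hcf_crit q).1 h0, hq⟩
  · ext p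
    simp only [Set.mem_ofPred_eq]
    constructor
    · intro h
      have h1 := hcf_fderiv_low p (1, 0, 0)
      have h2 := hcf_fderiv_low p (0, 1, 0)
      rw [h] at h1 h2
      simp at h1 h2
      exact ⟨h1, h2⟩
    · rintro ⟨h1, h2⟩
      apply ContinuousLinearMap.ext
      intro v
      rw [hcf_fderiv_low, h1, h2]
      simp
end

section
/- Let B be the open unit ball of ℝ^N and let v ∈ C^∞(B) satisfy ∇v(x) ≠ 0 for every x ∈ B. Define u = 1 + v² and c = Δ(v²)/(1 + v²). Then c ∈ C^∞(B), u satisfies Δu − c·u = 0 in B, and the critical set of u is exactly the zero set of v: {x ∈ B : ∇u(x) = 0} = {x ∈ B : v(x) = 0}. In particular, since the zero set of a C^∞ function can be an arbitrary closed subset of B, the critical set of a solution of an equation Δu − c·u = 0 with smooth coefficient c can be an arbitrary closed subset of B. -/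
/-- **Critical sets of solutions of `Δu − cu = 0` can be arbitrary zero sets**
(Hardt–Hoffmann-Ostenhof–Hoffmann-Ostenhof–Nadirashvili).  If `v ∈ C^∞(B)` has
non-vanishing gradient in the unit ball `B ⊂ ℝ^N`, then `u = 1 + v²` solves
`Δu − cu = 0` in `B` with the smooth coefficient `c = Δ(v²)/(1 + v²)`, and the critical
set of `u` is exactly the zero set of `v`. -/
theorem critical_set_equals_zero_set_of_v
    (N : ℕ) (B : Set (EuclideanSpace ℝ (Fin N)))
    (hB : B = Metric.ball (0 : EuclideanSpace ℝ (Fin N)) 1)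
    (v : EuclideanSpace ℝ (Fin N) → ℝ)
    (hv : ContDiffOn ℝ (⊤ : ℕ∞) v B)
    (hgrad : ∀ x ∈ B, fderiv ℝ v x ≠ 0)
    (u c : EuclideanSpace ℝ (Fin N) → ℝ)
    (hu : u = fun x => 1 + (v x) ^ 2)
    (hc : c = fun x => lapE (fun y => (v y) ^ 2) x / (1 + (v x) ^ 2)) :
    ContDiffOn ℝ (⊤ : ℕ∞) c B ∧
    (∀ x ∈ B, lapE u x - c x * u x = 0) ∧
    ({x ∈ B | fderiv ℝ u x = 0} = {x ∈ B | v x = 0}) := by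
  have hBo : IsOpen B := hB ▸ Metric.isOpen_ball
  have hv2 : ContDiffOn ℝ (⊤ : ℕ∞) (fun y => (v y) ^ 2) B := hv.pow 2
  have hpos : ∀ x, 1 + (v x) ^ 2 ≠ 0 := fun x => by positivity
  have hder : ∀ f : EuclideanSpace ℝ (Fin N) → ℝ, ContDiffOn ℝ (⊤ : ℕ∞) f B →
      ∀ w : EuclideanSpace ℝ (Fin N),
        ContDiffOn ℝ (⊤ : ℕ∞) (fun y => fderiv ℝ f y w) B := by
    intro f hf w
    have h1 : ContDiffOn ℝ (⊤ : ℕ∞) (fderiv ℝ f) B :=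
      hf.fderiv_of_isOpen hBo (by simp)
    exact h1.clm_apply contDiffOn_const
  have hfu : ∀ y, fderiv ℝ u y = fderiv ℝ (fun y => (v y) ^ 2) y := by
    intro y
    rw [hu]
    exact fderiv_const_add _
  refine ⟨?_, ?_, ?_⟩
  · rw [hc]
    refine ContDiffOn.div ?_ (contDiffOn_const.add hv2) (fun x _ => hpos x)
    unfold lapE
    exact ContDiffOn.sum fun i _ => hder _ (hder _ hv2 _) _
  · intro x _
    have hl : lapE u x = lapE (fun y => (v y) ^ 2) x := by
      unfold lapE
      simp only [hfu]
    rw [hl, hc, hu]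
    simp only
    rw [div_mul_cancel₀ _ (hpos x), sub_self]
  · ext x
    simp only [Set.mem_setOf_eq]
    refine and_congr_right fun hx => ?_
    have hd : DifferentiableAt ℝ v x :=
      (hv.contDiffAt (hBo.mem_nhds hx)).differentiableAt (by simp)
    have h2 : fderiv ℝ u x = (2 * v x) • fderiv ℝ v x := by
      rw [hfu, (hd.hasFDerivAt.pow 2).fderiv]
      simp
    rw [h2, smul_eq_zero]
    simp [hgrad x hx]
end

section
/- Let D⁺ = {(x₁,x₂) ∈ ℝ² : x₁² + x₂² < 1, x₁ > 0} be the half-disk, and let h be continuous on closure(D⁺) × (0,∞), twice continuously differentiable in x and once in t on D⁺ × (0,∞), and satisfy: h_t = Δh in D⁺ × (0,∞); h = 0 on ∂D⁺ × (0,∞); 0 ≤ h ≤ 1; and h(x,t) → 1 as t → 0⁺ for every x ∈ D⁺. Then for every t > 0 and every x₂ with (1/2, x₂) ∈ D⁺ one has ∂h/∂x₁(1/2, x₂, t) < 0. In particular the point (1/2, 0), which is the unique maximum point of the distance-to-the-boundary function of D⁺, is not a spatial critical point of h(·,t) for any t > 0, so the hot spot of the grounded half-disk moves with time. -/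
open Topology Filter

/-- The Laplacian of `f : ℝ² → ℝ` in the two coordinate directions. -/
noncomputable def lap2 (f : ℝ × ℝ → ℝ) (x : ℝ × ℝ) : ℝ :=
  fderiv ℝ (fun y => fderiv ℝ f y ((1, 0) : ℝ × ℝ)) x ((1, 0) : ℝ × ℝ) +
    fderiv ℝ (fun y => fderiv ℝ f y ((0, 1) : ℝ × ℝ)) x ((0, 1) : ℝ × ℝ)


def HasD2 (f : ℝ → ℝ) (a x : ℝ) : Prop :=
  ∃ f' : ℝ → ℝ, (∀ᶠ s in 𝓝 x, HasDerivAt f (f' s) s) ∧ HasDerivAt f' a x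

lemma HasD2.add {f g : ℝ → ℝ} {a b x : ℝ} (hf : HasD2 f a x) (hg : HasD2 g b x) :
    HasD2 (fun s => f s + g s) (a + b) x := by
  obtain ⟨f', h1, h2⟩ := hf
  obtain ⟨g', h3, h4⟩ := hg
  refine ⟨fun s => f' s + g' s, ?_, h2.add h4⟩
  filter_upwards [h1, h3] with s hs1 hs2 using hs1.add hs2

lemma HasD2.const_mul {f : ℝ → ℝ} {a x : ℝ} (c : ℝ) (hf : HasD2 f a x) :
    HasD2 (fun s => c * f s) (c * a) x := by
  obtain ⟨f', h1, h2⟩ := hf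
  refine ⟨fun s => c * f' s, ?_, h2.const_mul c⟩
  filter_upwards [h1] with s hs1 using hs1.const_mul c

lemma HasD2.refl {f : ℝ → ℝ} {a x : ℝ} (hf : HasD2 f a (1 - x)) :
    HasD2 (fun s => f (1 - s)) a x := by
  obtain ⟨f', h1, h2⟩ := hf
  have hs : ∀ s : ℝ, HasDerivAt (fun s : ℝ => 1 - s) (-1) s := fun s => by
    simpa using (hasDerivAt_id s).const_sub 1
  refine ⟨fun s => - f' (1 - s), ?_, ?_⟩
  · have : Tendsto (fun s : ℝ => 1 - s) (𝓝 x) (𝓝 (1 - x)) := (hs x).continuousAt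
    filter_upwards [this.eventually h1] with s hs1
    exact hs1.comp_const_sub 1 s
  · have := (h2.comp_const_sub 1 x).neg
    rw [neg_neg] at this
    exact this

lemma HasD2.nonneg_of_min {f : ℝ → ℝ} {a x : ℝ} (hf : HasD2 f a x) (hm : IsLocalMin f x) :
    0 ≤ a := by
  obtain ⟨f', h1, h2⟩ := hf
  by_contra hlt
  push Not at hlt
  have hd : deriv f =ᶠ[𝓝 x] f' := by
    filter_upwards [h1] with s hs using hs.deriv
  have hx0 : f' x = 0 := by
    have := hm.deriv_eq_zero
    rw [hd.eq_of_nhds] at this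
    exact this
  have hmax : IsLocalMax f x := by
    apply isLocalMax_of_deriv_deriv_neg
    · rw [hd.deriv_eq, h2.deriv]; exact hlt
    · rw [hd.eq_of_nhds]; exact hx0
    · exact h1.self_of_nhds.continuousAt
  have hc : f =ᶠ[𝓝 x] fun _ => f x := by
    filter_upwards [hm, hmax] with s a b using le_antisymm b a
  have : f' =ᶠ[𝓝 x] fun _ => 0 := by
    filter_upwards [hc.eventually_nhds, h1] with s hs1 hs2
    have := hs2.deriv
    rw [Filter.EventuallyEq.deriv_eq hs1] at this
    simpa using this.symm
  have h0 := this.deriv_eq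
  rw [h2.deriv] at h0
  simp at h0
  linarith

lemma time_le {g : ℝ → ℝ} {a t : ℝ} (hg : HasDerivAt g a t)
    (hm : ∀ᶠ s in 𝓝[≤] t, g t ≤ g s) : a ≤ 0 := by
  have h1 := (hasDerivAt_iff_tendsto_slope_left_right.1 hg).1
  refine le_of_tendsto h1 ?_
  have hm' : ∀ᶠ s in 𝓝[<] t, g t ≤ g s := hm.filter_mono (nhdsWithin_mono _ Set.Iio_subset_Iic_self)
  filter_upwards [hm', self_mem_nhdsWithin] with s hs1 hs2
  rw [slope_def_field]
  have : s < t := hs2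
  exact div_nonpos_of_nonneg_of_nonpos (by linarith) (by linarith)

lemma right_ge {g : ℝ → ℝ} {a t : ℝ} (hg : HasDerivAt g a t)
    (hm : ∀ᶠ s in 𝓝[>] t, g t ≤ g s) : 0 ≤ a := by
  have h1 := (hasDerivAt_iff_tendsto_slope_left_right.1 hg).2
  refine ge_of_tendsto h1 ?_
  filter_upwards [hm, self_mem_nhdsWithin] with s hs1 hs2
  rw [slope_def_field]
  have : t < s := hs2
  exact div_nonneg (by linarith) (by linarith)

/-- `u_t - Δu = l` at `(x,t)`. -/
def HeatOp (u : ℝ × ℝ → ℝ → ℝ) (x : ℝ × ℝ) (t l : ℝ) : Prop :=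
  ∃ a b c : ℝ, HasDerivAt (fun s => u x s) a t ∧ HasD2 (fun s => u (s, x.2) t) b x.1 ∧
    HasD2 (fun s => u (x.1, s) t) c x.2 ∧ l = a - b - c

lemma HeatOp.add {u v : ℝ × ℝ → ℝ → ℝ} {x : ℝ × ℝ} {t l m : ℝ} (hu : HeatOp u x t l)
    (hv : HeatOp v x t m) : HeatOp (fun x t => u x t + v x t) x t (l + m) := by
  obtain ⟨a, b, c, h1, h2, h3, h4⟩ := hu
  obtain ⟨a', b', c', h1', h2', h3', h4'⟩ := hv
  exact ⟨a + a', b + b', c + c', h1.add h1', h2.add h2', h3.add h3', by rw [h4, h4']; ring⟩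

lemma HeatOp.const_mul {u : ℝ × ℝ → ℝ → ℝ} {x : ℝ × ℝ} {t l : ℝ} (k : ℝ) (hu : HeatOp u x t l) :
    HeatOp (fun x t => k * u x t) x t (k * l) := by
  obtain ⟨a, b, c, h1, h2, h3, h4⟩ := hu
  exact ⟨k * a, k * b, k * c, h1.const_mul k, h2.const_mul k, h3.const_mul k, by rw [h4]; ring⟩

lemma max_principle (A : Set ((ℝ × ℝ) × ℝ)) (hA : IsCompact A) (u : ℝ × ℝ → ℝ → ℝ)
    (hc : ContinuousOn (fun q : (ℝ × ℝ) × ℝ => u q.1 q.2) A)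
    (hb : ∀ x t, (x, t) ∈ A → 0 ≤ u x t ∨
      ((∀ᶠ s in 𝓝 x.1, ((s, x.2), t) ∈ A) ∧ (∀ᶠ s in 𝓝 x.2, ((x.1, s), t) ∈ A) ∧
        (∀ᶠ s in 𝓝[≤] t, (x, s) ∈ A) ∧ ∃ l, 0 ≤ l ∧ HeatOp u x t l)) :
    ∀ x t, (x, t) ∈ A → 0 ≤ u x t := by
  intro x0 t0 h0
  by_contra hneg
  push Not at hneg
  obtain ⟨m, hm⟩ : ∃ m : ℝ, ∀ z ∈ A, m ≤ z.2 := by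
    obtain ⟨z, hz, h⟩ := hA.exists_isMinOn ⟨_, h0⟩ (continuous_snd.continuousOn)
    exact ⟨z.2, fun y hy => h hy⟩
  have hm0 := hm _ h0
  simp only at hm0
  obtain ⟨ε, hε, hε2⟩ : ∃ ε : ℝ, 0 < ε ∧ u x0 t0 + ε * (t0 - m) < 0 := by
    refine ⟨-u x0 t0 / (2 * (t0 - m + 1)), div_pos (by linarith) (by linarith), ?_⟩
    have : -u x0 t0 / (2 * (t0 - m + 1)) * (t0 - m) ≤ -u x0 t0 / 2 := by
      rw [div_mul_eq_mul_div, div_le_div_iff₀ (by linarith) (by norm_num)]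
      nlinarith
    linarith
  obtain ⟨⟨x, t⟩, hz, hmin⟩ := hA.exists_isMinOn ⟨_, h0⟩
    (f := fun q : (ℝ × ℝ) × ℝ => u q.1 q.2 + ε * (q.2 - m)) (hc.add (by fun_prop))
  have hmin' : ∀ y s, (y, s) ∈ A → u x t + ε * (t - m) ≤ u y s + ε * (s - m) :=
    fun y s hy => hmin hy
  have hneg2 : u x t < 0 := by
    have h1 := hmin' _ _ h0
    have h2 := hm _ hz
    simp only at h2
    nlinarith
  rcases hb x t hz with h | ⟨e1, e2, e3, l, hl, a, b, c, h1, h2, h3, h4⟩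
  · linarith
  · have hb0 : 0 ≤ b := by
      apply h2.nonneg_of_min
      filter_upwards [e1] with s hs
      have := hmin' _ _ hs
      simpa using this
    have hc0 : 0 ≤ c := by
      apply h3.nonneg_of_min
      filter_upwards [e2] with s hs
      have := hmin' _ _ hs
      simpa using this
    have ha0 : a + ε * 1 ≤ 0 := by
      apply time_le (h1.add (((hasDerivAt_id t).sub_const m).const_mul ε))
      filter_upwards [e3] with s hs
      have := hmin' _ _ hs
      simpa using this
    linarith

open MeasureTheory in
lemma diff_int (f : ℝ × ℝ → ℝ) (hf : Continuous f) (hfc : HasCompactSupport f)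
    (F F' : ℝ → ℝ × ℝ → ℝ) (x0 δ : ℝ) (hδ : 0 < δ)
    (hF : ∀ s ∈ Metric.closedBall x0 δ, ∀ y, HasDerivAt (fun s => F s y) (F' s y) s)
    (hc : ∀ s ∈ Metric.closedBall x0 δ, Continuous (F s))
    (hc' : ContinuousOn (fun q : ℝ × (ℝ × ℝ) => F' q.1 q.2) (Metric.closedBall x0 δ ×ˢ Set.univ)) :
    HasDerivAt (fun s => ∫ y, F s y * f y) (∫ y, F' x0 y * f y) x0 := by
  have hx0 : x0 ∈ Metric.closedBall x0 δ := Metric.mem_closedBall_self hδ.le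
  have hcs : ∀ s ∈ Metric.closedBall x0 δ, Continuous (F' s) := by
    intro s hs
    have : ContinuousOn (F' s) Set.univ :=
      hc'.comp (f := fun y => (s, y)) (by fun_prop) (fun y _ => ⟨hs, trivial⟩)
    rwa [← continuousOn_univ]
  obtain ⟨M, hM⟩ := ((isCompact_closedBall x0 δ).prod hfc.isCompact).exists_bound_of_continuousOn
    (hc'.mono (Set.prod_mono le_rfl (Set.subset_univ _)))
  refine (hasDerivAt_integral_of_dominated_loc_of_deriv_le (s := Metric.closedBall x0 δ)
    (bound := fun y => M * ‖f y‖) (F := fun s y => F s y * f y) (F' := fun s y => F' s y * f y)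
    (Metric.closedBall_mem_nhds x0 hδ) ?_ ?_ ?_ ?_ ?_ ?_).2
  · filter_upwards [Metric.closedBall_mem_nhds x0 hδ] with s hs
    exact ((hc s hs).mul hf).aestronglyMeasurable
  · exact ((hc x0 hx0).mul hf).integrable_of_hasCompactSupport hfc.mul_left
  · exact ((hcs x0 hx0).mul hf).aestronglyMeasurable
  · refine Eventually.of_forall fun y s hs => ?_
    rw [norm_mul]
    by_cases hy : y ∈ tsupport f
    · exact mul_le_mul_of_nonneg_right (hM (s, y) ⟨hs, hy⟩) (norm_nonneg _)
    · simp [image_eq_zero_of_notMem_tsupport hy]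
  · exact (hf.integrable_of_hasCompactSupport hfc).norm.const_mul M
  · exact Eventually.of_forall fun y s hs => (hF s hs y).mul_const _

noncomputable def gk (a b t : ℝ) : ℝ := Real.exp (-(a ^ 2 + b ^ 2) / (4 * t)) / (4 * Real.pi * t)

lemma gk_comm (a b t : ℝ) : gk a b t = gk b a t := by
  unfold gk; rw [add_comm]

lemma gk_nonneg (a b t : ℝ) (ht : 0 < t) : 0 ≤ gk a b t := by
  unfold gk; positivity

lemma gk_le (a b t : ℝ) (ht : 0 < t) : gk a b t ≤ 1 / (4 * Real.pi * t) := by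
  unfold gk
  gcongr
  apply Real.exp_le_one_iff.2
  rw [neg_div]
  have : 0 ≤ (a ^ 2 + b ^ 2) / (4 * t) := by positivity
  linarith

lemma gk_da (a b t : ℝ) (ht : t ≠ 0) :
    HasDerivAt (fun s => gk s b t) (gk a b t * (-a / (2 * t))) a := by
  unfold gk
  have h1 : HasDerivAt (fun s : ℝ => -(s ^ 2 + b ^ 2) / (4 * t)) (-(2 * a) / (4 * t)) a := by
    have := ((((hasDerivAt_id a).pow 2).add_const (b ^ 2)).neg).div_const (4 * t)
    simpa using this
  refine ((h1.exp).div_const (4 * Real.pi * t)).congr_deriv ?_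
  field_simp
  ring

lemma gk_daa (a b t : ℝ) (ht : t ≠ 0) :
    HasDerivAt (fun s => gk s b t * (-s / (2 * t)))
      (gk a b t * (a ^ 2 / (4 * t ^ 2) - 1 / (2 * t))) a := by
  have h1 : HasDerivAt (fun s : ℝ => -s / (2 * t)) (-1 / (2 * t)) a :=
    (hasDerivAt_id a).neg.div_const (2 * t)
  refine ((gk_da a b t ht).mul h1).congr_deriv ?_
  field_simp
  ring

lemma gk_dt (a b t : ℝ) (ht : t ≠ 0) :
    HasDerivAt (fun s => gk a b s) (gk a b t * ((a ^ 2 + b ^ 2) / (4 * t ^ 2) - 1 / t)) t := by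
  unfold gk
  have hpi := Real.pi_ne_zero
  have h4 : HasDerivAt (fun s : ℝ => 4 * s) 4 t := by simpa using (hasDerivAt_id t).const_mul 4
  have h5 : HasDerivAt (fun s : ℝ => 4 * Real.pi * s) (4 * Real.pi) t := by
    simpa using (hasDerivAt_id t).const_mul (4 * Real.pi)
  have h1 : HasDerivAt (fun s : ℝ => -(a ^ 2 + b ^ 2) / (4 * s))
      (-(a ^ 2 + b ^ 2) * (-4 / (4 * t) ^ 2)) t :=
    (h4.inv (by positivity)).const_mul (-(a ^ 2 + b ^ 2))
  refine ((h1.exp).div h5 (by positivity)).congr_deriv ?_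
  field_simp

noncomputable def heatV (f : ℝ × ℝ → ℝ) (x : ℝ × ℝ) (t : ℝ) : ℝ :=
  ∫ y, gk (x.1 - y.1) (x.2 - y.2) t * f y

lemma heatV_heat (f : ℝ × ℝ → ℝ) (hf : Continuous f) (hfc : HasCompactSupport f)
    (x : ℝ × ℝ) (t : ℝ) (ht : 0 < t) : HeatOp (heatV f) x t 0 := by
  have hkc : ∀ a : ℝ, Continuous (fun y : ℝ × ℝ => gk (a - y.1) (x.2 - y.2) t) := by
    intro a; unfold gk; fun_prop
  have hkc2 : ∀ a : ℝ, Continuous (fun y : ℝ × ℝ => gk (x.1 - y.1) (a - y.2) t) := by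
    intro a; unfold gk; fun_prop
  refine ⟨∫ y, gk (x.1 - y.1) (x.2 - y.2) t *
      (((x.1 - y.1) ^ 2 + (x.2 - y.2) ^ 2) / (4 * t ^ 2) - 1 / t) * f y,
    ∫ y, gk (x.1 - y.1) (x.2 - y.2) t * ((x.1 - y.1) ^ 2 / (4 * t ^ 2) - 1 / (2 * t)) * f y,
    ∫ y, gk (x.1 - y.1) (x.2 - y.2) t * ((x.2 - y.2) ^ 2 / (4 * t ^ 2) - 1 / (2 * t)) * f y,
    ?_, ?_, ?_, ?_⟩
  · unfold heatV
    have hpos : ∀ s ∈ Metric.closedBall t (t / 2), 0 < s := by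
      intro s hs
      rw [Real.closedBall_eq_Icc] at hs
      linarith [hs.1]
    refine diff_int f hf hfc (fun s y => gk (x.1 - y.1) (x.2 - y.2) s)
      (fun s y => gk (x.1 - y.1) (x.2 - y.2) s *
        (((x.1 - y.1) ^ 2 + (x.2 - y.2) ^ 2) / (4 * s ^ 2) - 1 / s)) t (t / 2) (by linarith) ?_ ?_ ?_
    · intro s hs y
      exact gk_dt _ _ _ (hpos s hs).ne'
    · intro s hs; unfold gk; fun_prop
    · have hp : ∀ q ∈ Metric.closedBall t (t / 2) ×ˢ (Set.univ : Set (ℝ × ℝ)), q.1 ≠ 0 :=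
        fun q hq => (hpos _ hq.1).ne'
      have hp1 : ∀ q ∈ Metric.closedBall t (t / 2) ×ˢ (Set.univ : Set (ℝ × ℝ)), 4 * q.1 ≠ 0 :=
        fun q hq => mul_ne_zero (by norm_num) (hp q hq)
      have hp2 : ∀ q ∈ Metric.closedBall t (t / 2) ×ˢ (Set.univ : Set (ℝ × ℝ)),
          4 * Real.pi * q.1 ≠ 0 :=
        fun q hq => mul_ne_zero (by positivity) (hp q hq)
      have hp3 : ∀ q ∈ Metric.closedBall t (t / 2) ×ˢ (Set.univ : Set (ℝ × ℝ)), 4 * q.1 ^ 2 ≠ 0 :=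
        fun q hq => mul_ne_zero (by positivity) (pow_ne_zero _ (hp q hq))
      unfold gk
      fun_prop (disch := assumption)
  · refine ⟨fun s => ∫ y, gk (s - y.1) (x.2 - y.2) t * (-(s - y.1) / (2 * t)) * f y,
      Eventually.of_forall fun s => ?_, ?_⟩
    · unfold heatV
      refine diff_int f hf hfc (fun s y => gk (s - y.1) (x.2 - y.2) t)
        (fun s y => gk (s - y.1) (x.2 - y.2) t * (-(s - y.1) / (2 * t))) s 1 one_pos ?_ ?_ ?_
      · intro s _ y
        exact (gk_da (s - y.1) (x.2 - y.2) t ht.ne').comp_sub_const s y.1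
      · intro s _; exact hkc s
      · unfold gk; fun_prop
    · refine diff_int f hf hfc (fun s y => gk (s - y.1) (x.2 - y.2) t * (-(s - y.1) / (2 * t)))
        (fun s y => gk (s - y.1) (x.2 - y.2) t * ((s - y.1) ^ 2 / (4 * t ^ 2) - 1 / (2 * t)))
        x.1 1 one_pos ?_ ?_ ?_
      · intro s _ y
        exact (gk_daa (s - y.1) (x.2 - y.2) t ht.ne').comp_sub_const s y.1
      · intro s _; unfold gk; fun_prop
      · unfold gk; fun_prop
  · refine ⟨fun s => ∫ y, gk (x.1 - y.1) (s - y.2) t * (-(s - y.2) / (2 * t)) * f y,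
      Eventually.of_forall fun s => ?_, ?_⟩
    · unfold heatV
      refine diff_int f hf hfc (fun s y => gk (x.1 - y.1) (s - y.2) t)
        (fun s y => gk (x.1 - y.1) (s - y.2) t * (-(s - y.2) / (2 * t))) s 1 one_pos ?_ ?_ ?_
      · intro s _ y
        simp only [gk_comm (x.1 - y.1)]
        exact (gk_da (s - y.2) (x.1 - y.1) t ht.ne').comp_sub_const s y.2
      · intro s _; exact hkc2 s
      · unfold gk; fun_prop
    · refine diff_int f hf hfc (fun s y => gk (x.1 - y.1) (s - y.2) t * (-(s - y.2) / (2 * t)))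
        (fun s y => gk (x.1 - y.1) (s - y.2) t * ((s - y.2) ^ 2 / (4 * t ^ 2) - 1 / (2 * t)))
        x.2 1 one_pos ?_ ?_ ?_
      · intro s _ y
        simp only [gk_comm (x.1 - y.1)]
        exact (gk_daa (s - y.2) (x.1 - y.1) t ht.ne').comp_sub_const s y.2
      · intro s _; unfold gk; fun_prop
      · unfold gk; fun_prop
  · have hi : ∀ g : ℝ × ℝ → ℝ, Continuous g →
        MeasureTheory.Integrable (fun y => g y * f y) := fun g hg =>
      (hg.mul hf).integrable_of_hasCompactSupport hfc.mul_left
    rw [← MeasureTheory.integral_sub, ← MeasureTheory.integral_sub]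
    · symm
      convert MeasureTheory.integral_zero (ℝ × ℝ) ℝ using 2
      ext y
      field_simp
      ring
    · exact (hi _ (by unfold gk; fun_prop)).sub (hi _ (by unfold gk; fun_prop))
    · exact hi _ (by unfold gk; fun_prop)
    · exact hi _ (by unfold gk; fun_prop)
    · exact hi _ (by unfold gk; fun_prop)

noncomputable def heatW (f : ℝ × ℝ → ℝ) (x : ℝ × ℝ) (t : ℝ) : ℝ :=
  ∫ u : ℝ × ℝ, gk u.1 u.2 1 * f (x + Real.sqrt t • u)

lemma gk_prod (u : ℝ × ℝ) : gk u.1 u.2 1 =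
    (Real.exp (-(1/4) * u.1 ^ 2)) * (Real.exp (-(1/4) * u.2 ^ 2) * (1 / (4 * Real.pi))) := by
  unfold gk
  rw [← mul_assoc, ← Real.exp_add, mul_one, mul_one, mul_one_div]
  congr 2
  ring

lemma gk_integrable : MeasureTheory.Integrable (fun u : ℝ × ℝ => gk u.1 u.2 1) := by
  simp_rw [gk_prod]
  have h := integrable_exp_neg_mul_sq (b := 1 / 4) (by norm_num)
  exact h.mul_prod (h.mul_const _)

lemma gk_integral : ∫ u : ℝ × ℝ, gk u.1 u.2 1 = 1 := by
  simp_rw [gk_prod]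
  rw [MeasureTheory.Measure.volume_eq_prod, MeasureTheory.integral_prod_mul
    (fun a : ℝ => Real.exp (-(1/4) * a ^ 2))
    (fun a : ℝ => Real.exp (-(1/4) * a ^ 2) * (1 / (4 * Real.pi))),
    MeasureTheory.integral_mul_const, integral_gaussian, ← mul_assoc, Real.mul_self_sqrt]
  · field_simp
  · positivity

lemma heatW_cont (f : ℝ × ℝ → ℝ) (hf : Continuous f) (hfc : HasCompactSupport f) :
    Continuous (fun q : (ℝ × ℝ) × ℝ => heatW f q.1 q.2) := by
  obtain ⟨M, hM⟩ := hfc.exists_bound_of_continuous hf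
  unfold heatW
  refine MeasureTheory.continuous_of_dominated (bound := fun u => gk u.1 u.2 1 * M) ?_ ?_ ?_ ?_
  · intro q
    apply Continuous.aestronglyMeasurable
    unfold gk; fun_prop
  · intro q
    refine Eventually.of_forall fun u => ?_
    rw [norm_mul, Real.norm_of_nonneg (gk_nonneg _ _ _ one_pos)]
    exact mul_le_mul_of_nonneg_left (hM _) (gk_nonneg _ _ _ one_pos)
  · exact gk_integrable.mul_const M
  · exact Eventually.of_forall fun u => by fun_prop

lemma heatW_zero (f : ℝ × ℝ → ℝ) (x : ℝ × ℝ) : heatW f x 0 = f x := by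
  unfold heatW
  simp [MeasureTheory.integral_mul_const, gk_integral]

lemma heatW_eq (f : ℝ × ℝ → ℝ) (x : ℝ × ℝ) (t : ℝ) (ht : 0 < t) : heatW f x t = heatV f x t := by
  unfold heatW heatV
  have hs : 0 < Real.sqrt t := Real.sqrt_pos.2 ht
  have h1 : ∀ u : ℝ × ℝ, gk u.1 u.2 1 * f (x + Real.sqrt t • u) =
      (fun z : ℝ × ℝ => t * (gk z.1 z.2 t * f (x + z))) (Real.sqrt t • u) := by
    intro u
    simp only [Prod.smul_fst, Prod.smul_snd, smul_eq_mul, gk, mul_pow, Real.sq_sqrt ht.le]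
    have : -(t * u.1 ^ 2 + t * u.2 ^ 2) / (4 * t) = -(u.1 ^ 2 + u.2 ^ 2) / (4 * 1) := by
      field_simp
    rw [this]
    field_simp
  rw [MeasureTheory.integral_congr_ae (Eventually.of_forall h1),
    MeasureTheory.Measure.integral_comp_smul MeasureTheory.volume
      (fun z : ℝ × ℝ => t * (gk z.1 z.2 t * f (x + z))) (Real.sqrt t), MeasureTheory.integral_const_mul]
  have h2 : Module.finrank ℝ (ℝ × ℝ) = 2 := by simp
  rw [h2, Real.sq_sqrt ht.le, abs_of_pos (inv_pos.2 ht), smul_eq_mul, ← mul_assoc,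
    inv_mul_cancel₀ ht.ne', one_mul]
  rw [← MeasureTheory.integral_add_left_eq_self
    (fun y : ℝ × ℝ => gk (x.1 - y.1) (x.2 - y.2) t * f y) x]
  congr 1
  ext z
  simp [gk]

lemma heatW_heat (f : ℝ × ℝ → ℝ) (hf : Continuous f) (hfc : HasCompactSupport f)
    (x : ℝ × ℝ) (t : ℝ) (ht : 0 < t) : HeatOp (heatW f) x t 0 := by
  obtain ⟨a, b, c, h1, h2, h3, h4⟩ := heatV_heat f hf hfc x t ht
  refine ⟨a, b, c, ?_, ?_, ?_, h4⟩
  · refine h1.congr_of_eventuallyEq ?_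
    filter_upwards [lt_mem_nhds ht] with s hs using heatW_eq f x s hs
  · simpa only [heatW_eq f _ t ht] using h2
  · simpa only [heatW_eq f _ t ht] using h3

lemma heatW_nonneg (f : ℝ × ℝ → ℝ) (hf0 : ∀ y, 0 ≤ f y) (x : ℝ × ℝ) (t : ℝ) :
    0 ≤ heatW f x t :=
  MeasureTheory.integral_nonneg fun _ => mul_nonneg (gk_nonneg _ _ _ one_pos) (hf0 _)

lemma heatW_le (f : ℝ × ℝ → ℝ) (hf : Continuous f) (hfc : HasCompactSupport f)
    (hf0 : ∀ y, 0 ≤ f y) (x : ℝ × ℝ) (t : ℝ) (ht : 0 < t) :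
    heatW f x t ≤ 1 / (4 * Real.pi * t) * ∫ y, f y := by
  rw [heatW_eq f x t ht, ← MeasureTheory.integral_const_mul]
  unfold heatV
  apply MeasureTheory.integral_mono
  · refine Continuous.integrable_of_hasCompactSupport (Continuous.mul ?_ hf) hfc.mul_left
    unfold gk; fun_prop
  · exact (hf.integrable_of_hasCompactSupport hfc).const_mul _
  · exact fun y => mul_le_mul_of_nonneg_right (gk_le _ _ _ ht) (hf0 y)

def capK : Set (ℝ × ℝ) := {p | 1 / 2 ≤ p.1 ∧ p.1 ^ 2 + p.2 ^ 2 ≤ 1}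
def capC : Set (ℝ × ℝ) := {p | 1 / 2 < p.1 ∧ p.1 ^ 2 + p.2 ^ 2 < 1}

lemma capK_closed : IsClosed capK :=
  (isClosed_le continuous_const continuous_fst).inter
    (isClosed_le (f := fun p : ℝ × ℝ => p.1 ^ 2 + p.2 ^ 2) (by fun_prop) continuous_const)

lemma capC_open : IsOpen capC :=
  (isOpen_lt continuous_const continuous_fst).inter
    (isOpen_lt (f := fun p : ℝ × ℝ => p.1 ^ 2 + p.2 ^ 2) (by fun_prop) continuous_const)

lemma capK_compact : IsCompact capK := by
  refine (isCompact_Icc (a := ((-1, -1) : ℝ × ℝ)) (b := (1, 1))).of_isClosed_subset capK_closed ?_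
  rintro ⟨a, b⟩ ⟨h1, h2⟩
  simp only at h1 h2
  refine ⟨⟨?_, ?_⟩, ⟨?_, ?_⟩⟩ <;> simp only <;> nlinarith [sq_nonneg a, sq_nonneg b]

lemma capC_sub : capC ⊆ capK := fun _ h => ⟨h.1.le, h.2.le⟩

lemma capK_frontier {p : ℝ × ℝ} (hp : p ∈ frontier capK) : p ∈ capK ∧ p ∉ capC := by
  rw [capK_closed.frontier_eq] at hp
  exact ⟨hp.1, fun h => hp.2 (interior_maximal capC_sub capC_open h)⟩

lemma ev_slices {S : Set ((ℝ × ℝ) × ℝ)} (hS : IsOpen S) {x : ℝ × ℝ} {t : ℝ} (h : (x, t) ∈ S) :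
    (∀ᶠ s in 𝓝 x.1, ((s, x.2), t) ∈ S) ∧ (∀ᶠ s in 𝓝 x.2, ((x.1, s), t) ∈ S) ∧
      (∀ᶠ s in 𝓝[≤] t, (x, s) ∈ S) := by
  refine ⟨?_, ?_, ?_⟩
  · have : Continuous (fun s : ℝ => (((s, x.2), t) : (ℝ × ℝ) × ℝ)) := by fun_prop
    exact (hS.preimage this).mem_nhds h
  · have : Continuous (fun s : ℝ => (((x.1, s), t) : (ℝ × ℝ) × ℝ)) := by fun_prop
    exact (hS.preimage this).mem_nhds h
  · have : Continuous (fun s : ℝ => ((x, s) : (ℝ × ℝ) × ℝ)) := by fun_prop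
    exact nhdsWithin_le_nhds ((hS.preimage this).mem_nhds h)

/-- version of the maximum principle with `A = B ∩ {t ≤ T}` -/
lemma max_principle' (A S : Set ((ℝ × ℝ) × ℝ)) (T : ℝ) (hA : IsCompact A) (u : ℝ × ℝ → ℝ → ℝ)
    (hc : ContinuousOn (fun q : (ℝ × ℝ) × ℝ => u q.1 q.2) A) (hS : IsOpen S)
    (hSA : ∀ q ∈ S, q.2 ≤ T → q ∈ A) (hAT : ∀ q ∈ A, q.2 ≤ T)
    (hb : ∀ x t, (x, t) ∈ A → 0 ≤ u x t ∨ ((x, t) ∈ S ∧ ∃ l, 0 ≤ l ∧ HeatOp u x t l)) :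
    ∀ x t, (x, t) ∈ A → 0 ≤ u x t := by
  refine max_principle A hA u hc ?_
  intro x t hxt
  rcases hb x t hxt with h | ⟨h1, h2⟩
  · exact Or.inl h
  · obtain ⟨e1, e2, e3⟩ := ev_slices hS h1
    have hT := hAT _ hxt
    refine Or.inr ⟨?_, ?_, ?_, h2⟩
    · filter_upwards [e1] with s hs using hSA _ hs hT
    · filter_upwards [e2] with s hs using hSA _ hs hT
    · filter_upwards [e3, self_mem_nhdsWithin] with s hs hs2
      exact hSA _ hs (le_trans hs2 hT)

structure CapSol (w : ℝ × ℝ → ℝ → ℝ) : Prop where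
  cont : ContinuousOn (fun q : (ℝ × ℝ) × ℝ => w q.1 q.2) (capK ×ˢ Set.Ioi 0)
  heat : ∀ x ∈ capC, ∀ t > 0, HeatOp w x t 0
  bdry : ∀ x ∈ capK, x ∉ capC → ∀ t > 0, 0 ≤ w x t
  lower : ∀ x ∈ capK, ∀ t > 0, -1 ≤ w x t
  start : ∀ x ∈ capC, Tendsto (fun t => w x t) (𝓝[>] 0) (𝓝 0)

noncomputable def negP (w : ℝ × ℝ → ℝ → ℝ) (s : ℝ) : ℝ × ℝ → ℝ :=
  capK.indicator (fun y => max 0 (-w y s))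

lemma CapSol.cont_slice {w : ℝ × ℝ → ℝ → ℝ} (hw : CapSol w) {s : ℝ} (hs : 0 < s) :
    ContinuousOn (fun y => w y s) capK :=
  hw.cont.comp (f := fun y => (y, s)) (by fun_prop) (fun y hy => ⟨hy, hs⟩)

lemma negP_cont {w : ℝ × ℝ → ℝ → ℝ} (hw : CapSol w) {s : ℝ} (hs : 0 < s) :
    Continuous (negP w s) := by
  refine continuous_indicator ?_ ?_
  · intro a ha
    obtain ⟨h1, h2⟩ := capK_frontier ha
    have := hw.bdry a h1 h2 s hs
    exact max_eq_left (by linarith)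
  · rw [capK_closed.closure_eq]
    exact (continuous_const.max continuous_neg).comp_continuousOn (hw.cont_slice hs)

lemma negP_supp (w : ℝ × ℝ → ℝ → ℝ) (s : ℝ) : HasCompactSupport (negP w s) :=
  HasCompactSupport.intro capK_compact fun _ hx => Set.indicator_of_notMem hx _

lemma negP_nonneg (w : ℝ × ℝ → ℝ → ℝ) (s : ℝ) (y : ℝ × ℝ) : 0 ≤ negP w s y :=
  Set.indicator_nonneg (fun _ _ => le_max_left _ _) _

lemma negP_lim {w : ℝ × ℝ → ℝ → ℝ} (hw : CapSol w) :
    Tendsto (fun s => ∫ y, negP w s y) (𝓝[>] 0) (𝓝 0) := by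
  have h0 : ∫ _ : ℝ × ℝ, (0 : ℝ) = 0 := by simp
  refine Eq.subst (motive := fun z => Tendsto (fun s => ∫ y, negP w s y) (𝓝[>] 0) (𝓝 z)) h0 ?_
  refine MeasureTheory.tendsto_integral_filter_of_dominated_convergence
    (capK.indicator fun _ => (1 : ℝ)) ?_ ?_ ?_ ?_
  · filter_upwards [self_mem_nhdsWithin] with s hs
    exact (negP_cont hw hs).aestronglyMeasurable
  · filter_upwards [self_mem_nhdsWithin] with s hs
    refine Eventually.of_forall fun y => ?_
    rw [Real.norm_of_nonneg (negP_nonneg w s y)]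
    refine Set.indicator_le_indicator' fun hy => ?_
    have := hw.lower y hy s hs
    exact max_le (by norm_num) (by linarith)
  · exact (MeasureTheory.integrable_indicator_iff capK_closed.measurableSet).2
      (MeasureTheory.integrableOn_const capK_compact.measure_lt_top.ne)
  · refine Eventually.of_forall fun y => ?_
    by_cases hy : y ∈ capC
    · have h1 := (hw.start y hy).neg
      have h2 := (tendsto_const_nhds (x := (0 : ℝ))).max h1
      simpa [negP, Set.indicator_of_mem (capC_sub hy)] using h2
    · refine tendsto_const_nhds.congr' ?_
      filter_upwards [self_mem_nhdsWithin] with s hs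
      by_cases hy' : y ∈ capK
      · have := hw.bdry y hy' hy s hs
        rw [negP, Set.indicator_of_mem hy', max_eq_left (by linarith)]
      · rw [negP, Set.indicator_of_notMem hy']

lemma CapSol.ge {w : ℝ × ℝ → ℝ → ℝ} (hw : CapSol w) {s T : ℝ} (hs : 0 < s) (hsT : s ≤ T)
    {x : ℝ × ℝ} (hx : x ∈ capK) : 0 ≤ w x T + heatW (negP w s) x (T - s) := by
  have hf := negP_cont hw hs
  have hfc := negP_supp w s
  have hsub : capK ×ˢ Set.Icc s T ⊆ capK ×ˢ Set.Ioi 0 := by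
    rintro ⟨a, b⟩ ⟨h1, h2⟩
    exact ⟨h1, lt_of_lt_of_le hs h2.1⟩
  refine max_principle' (capK ×ˢ Set.Icc s T) (capC ×ˢ Set.Ioi s) T
    (capK_compact.prod isCompact_Icc) (fun x t => w x t + heatW (negP w s) x (t - s)) ?_
    (capC_open.prod isOpen_Ioi) ?_ ?_ ?_ x T ⟨hx, hsT, le_rfl⟩
  · refine (hw.cont.mono hsub).add (Continuous.continuousOn ?_)
    exact (heatW_cont _ hf hfc).comp (f := fun q : (ℝ × ℝ) × ℝ => (q.1, q.2 - s)) (by fun_prop)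
  · rintro ⟨a, b⟩ ⟨h1, h2⟩ h3
    exact ⟨capC_sub h1, le_of_lt h2, h3⟩
  · rintro ⟨a, b⟩ ⟨h1, h2⟩
    exact h2.2
  · rintro a t ⟨h1, h2, h3⟩
    simp only at h1 h2 h3
    have hn := heatW_nonneg _ (negP_nonneg w s) a (t - s)
    have ht : 0 < t := hs.trans_le h2
    by_cases ha : a ∈ capC
    · rcases eq_or_lt_of_le h2 with h | h
      · left
        subst h
        rw [sub_self, heatW_zero, negP, Set.indicator_of_mem h1]
        linarith [le_max_right 0 (-w a s)]
      · right
        refine ⟨⟨ha, h⟩, 0 + 0, by norm_num, ?_⟩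
        refine (hw.heat a ha t ht).add ?_
        obtain ⟨p, q, r, i1, i2, i3, i4⟩ := heatW_heat _ hf hfc a (t - s) (by linarith)
        exact ⟨p, q, r, i1.comp_sub_const t s, i2, i3, i4⟩
    · left
      have := hw.bdry a h1 ha t ht
      linarith

lemma CapSol.nonneg {w : ℝ × ℝ → ℝ → ℝ} (hw : CapSol w) {T : ℝ} (hT : 0 < T)
    {x : ℝ × ℝ} (hx : x ∈ capK) : 0 ≤ w x T := by
  have hlim : Tendsto (fun s => w x T + 1 / (4 * Real.pi * (T / 2)) * ∫ y, negP w s y)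
      (𝓝[>] 0) (𝓝 (w x T + 1 / (4 * Real.pi * (T / 2)) * 0)) :=
    ((negP_lim hw).const_mul _).const_add _
  rw [mul_zero, add_zero] at hlim
  refine ge_of_tendsto hlim ?_
  have hev : Set.Ioo 0 (T / 2) ∈ 𝓝[>] (0 : ℝ) := Ioo_mem_nhdsGT (by linarith)
  filter_upwards [hev] with s hs
  have h1 := hw.ge hs.1 (by linarith [hs.2]) hx (T := T)
  have h2 := heatW_le _ (negP_cont hw hs.1) (negP_supp w s) (negP_nonneg w s) x (T - s)
    (by linarith [hs.2])
  have h3 : 1 / (4 * Real.pi * (T - s)) ≤ 1 / (4 * Real.pi * (T / 2)) := by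
    apply one_div_le_one_div_of_le (by positivity)
    have := Real.pi_pos
    have := hs.2
    gcongr
    linarith
  have h4 : 0 ≤ ∫ y, negP w s y := MeasureTheory.integral_nonneg (negP_nonneg w s)
  have h5 := mul_le_mul_of_nonneg_right h3 h4
  linarith

lemma ball_of_nhds {S : Set (ℝ × ℝ)} {b : ℝ × ℝ} (hS : S ∈ 𝓝 b) :
    ∃ ρ > 0, ∀ x : ℝ × ℝ, (x.1 - b.1) ^ 2 + (x.2 - b.2) ^ 2 ≤ ρ ^ 2 → x ∈ S := by
  obtain ⟨ε, hε, h⟩ := Metric.mem_nhds_iff.1 hS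
  refine ⟨ε / 2, by linarith, fun x hx => h ?_⟩
  have h1 : |x.1 - b.1| ≤ ε / 2 := abs_le_of_sq_le_sq (by nlinarith [sq_nonneg (x.2 - b.2)]) (by linarith)
  have h2 : |x.2 - b.2| ≤ ε / 2 := abs_le_of_sq_le_sq (by nlinarith [sq_nonneg (x.1 - b.1)]) (by linarith)
  rw [Metric.mem_ball, Prod.dist_eq, Real.dist_eq, Real.dist_eq]
  exact max_lt (by linarith) (by linarith)

noncomputable def bump (k ρ b1 b2 Y1 Y2 t1 : ℝ) (x : ℝ × ℝ) (t : ℝ) : ℝ :=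
  Real.exp (-k * (t - t1)) *
    (ρ ^ 2 - ((x.1 - (b1 + (t - t1) * Y1)) ^ 2 + (x.2 - (b2 + (t - t1) * Y2)) ^ 2)) ^ 2

lemma sq_d2 (E c y x : ℝ) :
    HasD2 (fun s => E * (c - (s - y) ^ 2) ^ 2)
      (E * (8 * (x - y) ^ 2 - 4 * (c - (x - y) ^ 2))) x := by
  have h1 : ∀ s, HasDerivAt (fun s : ℝ => c - (s - y) ^ 2) (-(2 * (s - y))) s := fun s => by
    have := (((hasDerivAt_id s).sub_const y).pow 2).const_sub c
    simpa using this
  refine ⟨fun s => E * (2 * (c - (s - y) ^ 2) * -(2 * (s - y))), Eventually.of_forall fun s => ?_, ?_⟩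
  · have := ((h1 s).pow 2).const_mul E
    simpa using this
  · have h2 : HasDerivAt (fun s : ℝ => -(2 * (s - y))) (-2) x :=
      ((((hasDerivAt_id x).sub_const y).const_mul 2).neg).congr_deriv (by ring)
    refine ((((h1 x).const_mul 2).mul h2).const_mul E).congr_deriv ?_
    ring

lemma bump_heat (k ρ b1 b2 Y1 Y2 t1 : ℝ) (x : ℝ × ℝ) (t : ℝ) :
    HeatOp (bump k ρ b1 b2 Y1 Y2 t1) x t (Real.exp (-k * (t - t1)) *
      (-k * (ρ ^ 2 - ((x.1 - (b1 + (t - t1) * Y1)) ^ 2 + (x.2 - (b2 + (t - t1) * Y2)) ^ 2)) ^ 2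
      + 4 * (ρ ^ 2 - ((x.1 - (b1 + (t - t1) * Y1)) ^ 2 + (x.2 - (b2 + (t - t1) * Y2)) ^ 2)) *
        ((x.1 - (b1 + (t - t1) * Y1)) * Y1 + (x.2 - (b2 + (t - t1) * Y2)) * Y2)
      - 8 * ((x.1 - (b1 + (t - t1) * Y1)) ^ 2 + (x.2 - (b2 + (t - t1) * Y2)) ^ 2)
      + 8 * (ρ ^ 2 - ((x.1 - (b1 + (t - t1) * Y1)) ^ 2 +
          (x.2 - (b2 + (t - t1) * Y2)) ^ 2)))) := by
  have hA := sq_d2 (Real.exp (-k * (t - t1))) (ρ ^ 2 - (x.2 - (b2 + (t - t1) * Y2)) ^ 2)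
    (b1 + (t - t1) * Y1) x.1
  have hB := sq_d2 (Real.exp (-k * (t - t1))) (ρ ^ 2 - (x.1 - (b1 + (t - t1) * Y1)) ^ 2)
    (b2 + (t - t1) * Y2) x.2
  have hE : HasDerivAt (fun s => Real.exp (-k * (s - t1))) (Real.exp (-k * (t - t1)) * -k) t := by
    have := (((hasDerivAt_id t).sub_const t1).const_mul (-k)).exp
    simpa using this
  have hy : ∀ a b Y : ℝ, HasDerivAt (fun s : ℝ => (a - (b + (s - t1) * Y)) ^ 2)
      (2 * (a - (b + (t - t1) * Y)) * (-Y)) t := fun a b Y => by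
    have := (((((hasDerivAt_id t).sub_const t1).mul_const Y).const_add b).const_sub a).pow 2
    refine this.congr_deriv ?_
    simp
  have hT : HasDerivAt (fun s => bump k ρ b1 b2 Y1 Y2 t1 x s) (Real.exp (-k * (t - t1)) *
      (-k * (ρ ^ 2 - ((x.1 - (b1 + (t - t1) * Y1)) ^ 2 + (x.2 - (b2 + (t - t1) * Y2)) ^ 2)) ^ 2
      + 4 * (ρ ^ 2 - ((x.1 - (b1 + (t - t1) * Y1)) ^ 2 + (x.2 - (b2 + (t - t1) * Y2)) ^ 2)) *
        ((x.1 - (b1 + (t - t1) * Y1)) * Y1 + (x.2 - (b2 + (t - t1) * Y2)) * Y2))) t := by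
    refine (hE.mul ((((hy x.1 b1 Y1).add (hy x.2 b2 Y2)).const_sub (ρ ^ 2)).pow 2)).congr_deriv ?_
    simp only [Pi.add_apply, Pi.pow_apply]
    push_cast
    ring
  have e1 : ∀ s, ρ ^ 2 - (x.2 - (b2 + (t - t1) * Y2)) ^ 2 - (s - (b1 + (t - t1) * Y1)) ^ 2 =
      ρ ^ 2 - ((s - (b1 + (t - t1) * Y1)) ^ 2 + (x.2 - (b2 + (t - t1) * Y2)) ^ 2) :=
    fun s => by ring
  have e2 : ∀ s, ρ ^ 2 - (x.1 - (b1 + (t - t1) * Y1)) ^ 2 - (s - (b2 + (t - t1) * Y2)) ^ 2 =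
      ρ ^ 2 - ((x.1 - (b1 + (t - t1) * Y1)) ^ 2 + (s - (b2 + (t - t1) * Y2)) ^ 2) :=
    fun s => by ring
  simp only [e1] at hA
  simp only [e2] at hB
  exact ⟨_, _, _, hT, hA, hB, by ring⟩

lemma sgn_aux {e X : ℝ} (he : 0 < e) (hX : X ≤ 0) : 0 ≤ 0 + -e * X := by nlinarith

lemma capC_convex {p q : ℝ × ℝ} (hp : p ∈ capC) (hq : q ∈ capC) {θ : ℝ} (h0 : 0 ≤ θ) (h1 : θ ≤ 1) :
    ((1 - θ) * p.1 + θ * q.1, (1 - θ) * p.2 + θ * q.2) ∈ capC := by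
  obtain ⟨p1, p2⟩ := hp
  obtain ⟨q1, q2⟩ := hq
  rcases eq_or_lt_of_le h1 with rfl | h1
  · simpa using ⟨by linarith, q2⟩
  constructor
  · simp only
    nlinarith
  · simp only
    have e : ((1 - θ) * p.1 + θ * q.1) ^ 2 + ((1 - θ) * p.2 + θ * q.2) ^ 2 =
      (1 - θ) * (p.1 ^ 2 + p.2 ^ 2) + θ * (q.1 ^ 2 + q.2 ^ 2)
        - θ * (1 - θ) * ((p.1 - q.1) ^ 2 + (p.2 - q.2) ^ 2) := by ring
    rw [e]
    have h2 : 0 ≤ θ * (1 - θ) * ((p.1 - q.1) ^ 2 + (p.2 - q.2) ^ 2) := by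
      have : 0 ≤ 1 - θ := by linarith
      positivity
    nlinarith

lemma abs_le_aux {a b ρ : ℝ} (hρ : 0 < ρ) (h : a ^ 2 + b ^ 2 ≤ ρ ^ 2) : |a| ≤ ρ ∧ |b| ≤ ρ :=
  ⟨abs_le_of_sq_le_sq (by nlinarith [sq_nonneg b]) hρ.le,
    abs_le_of_sq_le_sq (by nlinarith [sq_nonneg a]) hρ.le⟩

lemma bump_ineq {ρ d1 d2 : ℝ} (hρ : 0 < ρ) (Y1 Y2 : ℝ) (h : d1 ^ 2 + d2 ^ 2 < ρ ^ 2) :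
    -((4 * ρ * (|Y1| + |Y2|) + 16) ^ 2 / (32 * ρ ^ 2)) * (ρ ^ 2 - (d1 ^ 2 + d2 ^ 2)) ^ 2
      + 4 * (ρ ^ 2 - (d1 ^ 2 + d2 ^ 2)) * (d1 * Y1 + d2 * Y2) - 8 * (d1 ^ 2 + d2 ^ 2)
      + 8 * (ρ ^ 2 - (d1 ^ 2 + d2 ^ 2)) ≤ 0 := by
  obtain ⟨hd1', hd2'⟩ := abs_le_aux hρ h.le
  have hdY : d1 * Y1 + d2 * Y2 ≤ ρ * (|Y1| + |Y2|) := by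
    have e1 : d1 * Y1 ≤ ρ * |Y1| := (le_abs_self _).trans (by rw [abs_mul]; gcongr)
    have e2 : d2 * Y2 ≤ ρ * |Y2| := (le_abs_self _).trans (by rw [abs_mul]; gcongr)
    linarith
  generalize hN : 4 * ρ * (|Y1| + |Y2|) + 16 = N
  obtain ⟨g, hg⟩ : ∃ g, g = ρ ^ 2 - (d1 ^ 2 + d2 ^ 2) := ⟨_, rfl⟩
  have hg0 : 0 < g := by rw [hg]; linarith
  rw [← hg]
  have hkey : -(N ^ 2 / (32 * ρ ^ 2)) * g ^ 2 + N * g - 8 * ρ ^ 2 ≤ 0 := by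
    have : -(N ^ 2 / (32 * ρ ^ 2)) * g ^ 2 + N * g - 8 * ρ ^ 2 =
        -((N * g / ρ - 16 * ρ) ^ 2 / 32) := by
      field_simp; ring
    rw [this]
    have : 0 ≤ (N * g / ρ - 16 * ρ) ^ 2 / 32 := by positivity
    linarith
  have e3 : 4 * g * (d1 * Y1 + d2 * Y2) ≤ 4 * g * (ρ * (|Y1| + |Y2|)) := by gcongr
  have e4 : N * g = 4 * g * (ρ * (|Y1| + |Y2|)) + 16 * g := by rw [← hN]; ring
  have e5 : d1 ^ 2 + d2 ^ 2 = ρ ^ 2 - g := by rw [hg]; ring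
  rw [e5]
  linarith

set_option maxHeartbeats 1000000 in
lemma CapSol.pos_prop {w : ℝ × ℝ → ℝ → ℝ} (hw : CapSol w) {t1 t2 : ℝ} (ht1 : 0 < t1)
    (ht : t1 < t2) {b e : ℝ × ℝ} (hb : b ∈ capC) (he : e ∈ capC) (hpos : 0 < w b t1) :
    0 < w e t2 := by
  have hn1 : {x | x ∈ capC ∧ w b t1 / 2 < w x t1} ∈ 𝓝 b := by
    have hc : ContinuousAt (fun y => w y t1) b :=
      (hw.cont_slice ht1).continuousAt (mem_of_superset (capC_open.mem_nhds hb) capC_sub)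
    filter_upwards [capC_open.mem_nhds hb, hc.eventually (lt_mem_nhds (half_lt_self hpos))]
      with x h1 h2 using ⟨h1, h2⟩
  obtain ⟨ρ1, hρ1, hball1⟩ := ball_of_nhds hn1
  obtain ⟨ρ2, hρ2, hball2⟩ := ball_of_nhds (capC_open.mem_nhds he)
  obtain ⟨ρ, hρ, hr1, hr2⟩ : ∃ ρ > 0, ρ ≤ ρ1 ∧ ρ ≤ ρ2 :=
    ⟨min ρ1 ρ2, lt_min hρ1 hρ2, min_le_left _ _, min_le_right _ _⟩
  set Y1 := (e.1 - b.1) / (t2 - t1) with hY1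
  set Y2 := (e.2 - b.2) / (t2 - t1) with hY2
  have htt : 0 < t2 - t1 := by linarith
  have hYe1 : (t2 - t1) * Y1 = e.1 - b.1 := by rw [hY1]; field_simp
  have hYe2 : (t2 - t1) * Y2 = e.2 - b.2 := by rw [hY2]; field_simp
  set N := 4 * ρ * (|Y1| + |Y2|) + 16 with hN
  set k := N ^ 2 / (32 * ρ ^ 2) with hk
  set q : (ℝ × ℝ) × ℝ → ℝ := fun z =>
    (z.1.1 - (b.1 + (z.2 - t1) * Y1)) ^ 2 + (z.1.2 - (b.2 + (z.2 - t1) * Y2)) ^ 2 with hq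
  have hqc : Continuous q := by rw [hq]; fun_prop
  have htube : ∀ x t, t1 ≤ t → t ≤ t2 → q (x, t) ≤ ρ ^ 2 → x ∈ capC := by
    intro x t h1 h2 h3
    simp only [hq] at h3
    set z1 := x.1 - (b.1 + (t - t1) * Y1) with hz1
    set z2 := x.2 - (b.2 + (t - t1) * Y2) with hz2
    have hB : ((b.1 + z1, b.2 + z2) : ℝ × ℝ) ∈ capC := by
      refine (hball1 _ ?_).1
      simp only [add_sub_cancel_left]
      nlinarith
    have hE : ((e.1 + z1, e.2 + z2) : ℝ × ℝ) ∈ capC := by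
      refine hball2 _ ?_
      simp only [add_sub_cancel_left]
      nlinarith
    have := capC_convex hB hE (θ := (t - t1) / (t2 - t1)) (div_nonneg (by linarith) (by linarith))
      (by rw [div_le_one htt]; linarith)
    convert this using 1
    ext
    · simp only [hz1, hY1]; field_simp; ring
    · simp only [hz2, hY2]; field_simp; ring
  set ε := w b t1 / 2 / ρ ^ 4 with hεd
  have hε : 0 < ε := by positivity
  set A : Set ((ℝ × ℝ) × ℝ) := {z | z.2 ∈ Set.Icc t1 t2 ∧ q z ≤ ρ ^ 2} with hAdef
  have hAsub : A ⊆ capK ×ˢ Set.Icc t1 t2 := by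
    rintro ⟨x, t⟩ ⟨h1, h2⟩
    exact ⟨capC_sub (htube x t h1.1 h1.2 h2), h1⟩
  have hAc : IsClosed A :=
    (isClosed_Icc.preimage continuous_snd).inter (isClosed_le hqc continuous_const)
  have hmp := max_principle' A {z | z.2 ∈ Set.Ioi t1 ∧ q z < ρ ^ 2} t2
    ((capK_compact.prod isCompact_Icc).of_isClosed_subset hAc hAsub)
    (fun x t => w x t + (-ε) * bump k ρ b.1 b.2 Y1 Y2 t1 x t) ?_
    ((isOpen_Ioi.preimage continuous_snd).inter (isOpen_lt hqc continuous_const)) ?_ ?_ ?_ e t2 ?_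
  · have hv : bump k ρ b.1 b.2 Y1 Y2 t1 e t2 = Real.exp (-k * (t2 - t1)) * (ρ ^ 2) ^ 2 := by
      simp only [bump, hYe1, hYe2]
      ring
    simp only [hv] at hmp
    have : 0 < ε * (Real.exp (-k * (t2 - t1)) * (ρ ^ 2) ^ 2) := by positivity
    linarith
  · refine (hw.cont.mono (hAsub.trans ?_)).add (Continuous.continuousOn ?_)
    · rintro ⟨x, t⟩ ⟨h1, h2⟩
      exact ⟨h1, ht1.trans_le h2.1⟩
    · unfold bump; fun_prop
  · rintro z ⟨h1, h2⟩ h3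
    exact ⟨⟨le_of_lt h1, h3⟩, h2.le⟩
  · rintro z ⟨h1, h2⟩
    exact h1.2
  · rintro x t ⟨⟨h1, h2⟩, h3⟩
    simp only at h1 h2
    have hxC := htube x t h1 h2 h3
    have ht0 : 0 < t := ht1.trans_le h1
    have hbq : bump k ρ b.1 b.2 Y1 Y2 t1 x t = Real.exp (-k * (t - t1)) * (ρ ^ 2 - q (x, t)) ^ 2 := rfl
    have hq0 : 0 ≤ q (x, t) := by simp only [hq]; positivity
    rcases eq_or_lt_of_le h3 with h4 | h4
    · left
      rw [hbq, h4]
      have := hw.nonneg ht0 (capC_sub hxC)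
      simpa using this
    rcases eq_or_lt_of_le h1 with h5 | h5
    · left
      subst h5
      have hx1 : w b t1 / 2 < w x t1 := by
        refine (hball1 x ?_).2
        simp only [hq, sub_self, zero_mul, add_zero] at h3
        nlinarith
      have : bump k ρ b.1 b.2 Y1 Y2 t1 x t1 ≤ ρ ^ 4 := by
        rw [hbq]
        simp only [sub_self, mul_zero, Real.exp_zero, one_mul]
        have := pow_le_pow_left₀ (show 0 ≤ ρ ^ 2 - q (x, t1) by linarith)
          (show ρ ^ 2 - q (x, t1) ≤ ρ ^ 2 by linarith) 2
        have e4 : (ρ ^ 2) ^ 2 = ρ ^ 4 := by ring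
        rwa [e4] at this
      have h6 : ε * bump k ρ b.1 b.2 Y1 Y2 t1 x t1 ≤ ε * ρ ^ 4 := mul_le_mul_of_nonneg_left this hε.le
      have h7 : ε * ρ ^ 4 = w b t1 / 2 := by rw [hεd]; field_simp
      linarith
    · right
      refine ⟨⟨h5, h4⟩, _, ?_, (hw.heat x hxC t ht0).add ((bump_heat k ρ b.1 b.2 Y1 Y2 t1 x t).const_mul (-ε))⟩
      exact sgn_aux hε (mul_nonpos_of_nonneg_of_nonpos (Real.exp_pos (-k * (t - t1))).le
        (bump_ineq hρ Y1 Y2 h4))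
  · refine ⟨⟨ht.le, le_rfl⟩, ?_⟩
    simp only [hq, hYe1, hYe2]
    ring_nf
    positivity

noncomputable def hopf (α c η T : ℝ) (z x : ℝ × ℝ) (t : ℝ) : ℝ :=
  Real.exp (-α * ((x.1 - z.1) ^ 2 + (x.2 - z.2) ^ 2 + η * (T - t))) - c

lemma exp_d2 (α A c y x : ℝ) :
    HasD2 (fun s => Real.exp (-α * ((s - y) ^ 2 + A)) - c)
      (Real.exp (-α * ((x - y) ^ 2 + A)) * (4 * α ^ 2 * (x - y) ^ 2 - 2 * α)) x := by
  have h1 : ∀ s, HasDerivAt (fun s : ℝ => Real.exp (-α * ((s - y) ^ 2 + A)))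
      (Real.exp (-α * ((s - y) ^ 2 + A)) * (-α * (2 * (s - y)))) s := fun s => by
    have := (((((hasDerivAt_id s).sub_const y).pow 2).add_const A).const_mul (-α)).exp
    simpa using this
  refine ⟨fun s => Real.exp (-α * ((s - y) ^ 2 + A)) * (-α * (2 * (s - y))),
    Eventually.of_forall fun s => (h1 s).sub_const c, ?_⟩
  have h2 : HasDerivAt (fun s : ℝ => (-α * (2 * (s - y)))) (-α * 2) x := by
    simpa using (((hasDerivAt_id x).sub_const y).const_mul 2).const_mul (-α)
  refine ((h1 x).mul h2).congr_deriv ?_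
  ring

lemma hopf_heat (α c η T : ℝ) (z x : ℝ × ℝ) (t : ℝ) :
    HeatOp (hopf α c η T z) x t
      (Real.exp (-α * ((x.1 - z.1) ^ 2 + (x.2 - z.2) ^ 2 + η * (T - t))) *
        (α * η + 4 * α - 4 * α ^ 2 * ((x.1 - z.1) ^ 2 + (x.2 - z.2) ^ 2))) := by
  have hA := exp_d2 α ((x.2 - z.2) ^ 2 + η * (T - t)) c z.1 x.1
  have hB := exp_d2 α ((x.1 - z.1) ^ 2 + η * (T - t)) c z.2 x.2
  have hT : HasDerivAt (fun s => hopf α c η T z x s)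
      (Real.exp (-α * ((x.1 - z.1) ^ 2 + (x.2 - z.2) ^ 2 + η * (T - t))) * (α * η)) t := by
    have := (((((hasDerivAt_id t).const_sub T).const_mul η).const_add
      ((x.1 - z.1) ^ 2 + (x.2 - z.2) ^ 2)).const_mul (-α)).exp.sub_const c
    refine this.congr_deriv ?_
    simp
  have e1 : ∀ s, (x.1 - z.1) ^ 2 + ((s - z.2) ^ 2 + η * (T - t)) =
    (x.1 - z.1) ^ 2 + (s - z.2) ^ 2 + η * (T - t) := fun s => by ring
  have e2 : ∀ s, (s - z.2) ^ 2 + ((x.1 - z.1) ^ 2 + η * (T - t)) =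
    (x.1 - z.1) ^ 2 + (s - z.2) ^ 2 + η * (T - t) := fun s => by ring
  have e3 : ∀ s, (s - z.1) ^ 2 + ((x.2 - z.2) ^ 2 + η * (T - t)) =
    (s - z.1) ^ 2 + (x.2 - z.2) ^ 2 + η * (T - t) := fun s => by ring
  simp only [e3] at hA
  simp only [e2] at hB
  exact ⟨_, _, _, hT, hA, hB, by ring⟩

set_option maxHeartbeats 1000000 in
lemma CapSol.hopf_pos {w : ℝ × ℝ → ℝ → ℝ} (hw : CapSol w)
    (hpos : ∀ x ∈ capC, ∀ t > 0, 0 < w x t) {T x2 d : ℝ} (hT : 0 < T)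
    (hp : (1 / 2 : ℝ) ^ 2 + x2 ^ 2 < 1) (hw0 : w (1 / 2, x2) T = 0)
    (hd : HasDerivAt (fun s => w (s, x2) T) d (1 / 2)) : 0 < d := by
  set r := (1 - ((1 / 2 : ℝ) ^ 2 + x2 ^ 2)) / 32 with hr
  have hr0 : 0 < r := by rw [hr]; linarith
  have hr1 : r ≤ 1 / 32 := by rw [hr]; nlinarith [sq_nonneg x2]
  have hx2 : |x2| ≤ 1 := abs_le_one_iff_mul_self_le_one.2 (by nlinarith)
  obtain ⟨hx2a, hx2b⟩ := abs_le.1 hx2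
  set z : ℝ × ℝ := (1 / 2 + r, x2) with hz
  set η := 2 * r ^ 2 / T with hη
  have hη0 : 0 < η := by positivity
  set α := (η + 4) / r ^ 2 with hα
  have hα0 : 0 < α := by positivity
  set q : ℝ × ℝ → ℝ := fun x => (x.1 - z.1) ^ 2 + (x.2 - z.2) ^ 2 with hq
  have hqc : Continuous q := by rw [hq]; fun_prop
  have hqn : ∀ x, 0 ≤ q x := fun x => by simp only [hq]; positivity
  have hballK : ∀ x, q x ≤ r ^ 2 → 1 / 2 ≤ x.1 ∧ x.1 ^ 2 + x.2 ^ 2 < 1 := by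
    intro x hx
    simp only [hq, hz] at hx
    have h1 : |x.1 - (1 / 2 + r)| ≤ r := abs_le_of_sq_le_sq (by nlinarith [sq_nonneg (x.2 - x2)]) hr0.le
    have h2 : |x.2 - x2| ≤ r :=
      abs_le_of_sq_le_sq (by nlinarith [sq_nonneg (x.1 - (1 / 2 + r))]) hr0.le
    obtain ⟨h1a, h1b⟩ := abs_le.1 h1
    obtain ⟨h2a, h2b⟩ := abs_le.1 h2
    refine ⟨by linarith, ?_⟩
    have e1 : x.1 ^ 2 ≤ (1 / 2 + 2 * r) ^ 2 := by
      apply pow_le_pow_left₀ (by linarith) (by linarith)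
    have e2 : x.2 ^ 2 ≤ x2 ^ 2 + 2 * r + r ^ 2 := by
      have : x.2 ^ 2 = x2 ^ 2 + 2 * x2 * (x.2 - x2) + (x.2 - x2) ^ 2 := by ring
      have e3 : x2 * (x.2 - x2) ≤ 1 * r := by
        refine (le_abs_self _).trans ?_
        rw [abs_mul]
        gcongr
      have e4 : (x.2 - x2) ^ 2 ≤ r ^ 2 := sq_le_sq' h2a h2b
      linarith
    have e5 : 1 - ((1 / 2 : ℝ) ^ 2 + x2 ^ 2) = 32 * r := by rw [hr]; ring
    nlinarith
  have hballC : ∀ x, q x < r ^ 2 → x ∈ capC := by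
    intro x hx
    refine ⟨?_, (hballK x hx.le).2⟩
    simp only [hq, hz] at hx
    have h1 : |x.1 - (1 / 2 + r)| < r := abs_lt_of_sq_lt_sq (by nlinarith [sq_nonneg (x.2 - x2)]) hr0.le
    linarith [(abs_lt.1 h1).1]
  have hsubIoi : capK ×ˢ Set.Icc (T / 2) T ⊆ capK ×ˢ Set.Ioi 0 := by
    rintro ⟨x, t⟩ ⟨h1, h2⟩
    have : T / 2 ≤ t := h2.1
    exact ⟨h1, show 0 < t by linarith⟩
  obtain ⟨m, hm, hmw⟩ : ∃ m > 0, ∀ x t, q x ≤ r ^ 2 / 4 → t ∈ Set.Icc (T / 2) T → m ≤ w x t := by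
    set B : Set ((ℝ × ℝ) × ℝ) := {y | q y.1 ≤ r ^ 2 / 4} ∩ {y | y.2 ∈ Set.Icc (T / 2) T} with hB
    have hBs : B ⊆ capK ×ˢ Set.Icc (T / 2) T := by
      rintro ⟨x, t⟩ ⟨h1, h2⟩
      have h1' : q x ≤ r ^ 2 / 4 := h1
      exact ⟨capC_sub (hballC x (by nlinarith)), h2⟩
    have hBc : IsCompact B := (capK_compact.prod isCompact_Icc).of_isClosed_subset
      ((isClosed_le (hqc.comp continuous_fst) continuous_const).inter
        (isClosed_Icc.preimage continuous_snd)) hBs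
    have hBn : B.Nonempty := by
      refine ⟨(z, T), ?_, ?_, le_rfl⟩
      · have : q z = 0 := by simp [hq]
        simp only [Set.mem_ofPred_eq, this]
        positivity
      · simp only; linarith
    obtain ⟨⟨x0, t0⟩, h0, hmin⟩ := hBc.exists_isMinOn hBn (hw.cont.mono (hBs.trans hsubIoi))
    have h01 : q x0 ≤ r ^ 2 / 4 := h0.1
    have h02 : T / 2 ≤ t0 := h0.2.1
    refine ⟨w x0 t0, hpos x0 (hballC x0 (by nlinarith)) t0 (by linarith), ?_⟩
    intro x t h1 h2
    exact hmin (show (x, t) ∈ B from ⟨h1, h2⟩)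
  set A : Set ((ℝ × ℝ) × ℝ) := {y | r ^ 2 / 4 ≤ q y.1} ∩ {y | q y.1 + η * (T - y.2) ≤ r ^ 2} ∩
    {y | y.2 ≤ T} with hAdef
  set S : Set ((ℝ × ℝ) × ℝ) := {y | r ^ 2 / 4 < q y.1} ∩ {y | q y.1 + η * (T - y.2) < r ^ 2}
    with hSdef
  have hηT : ∀ t, η * (T - t) ≤ r ^ 2 → T / 2 ≤ t := by
    intro t h
    by_contra hlt
    push Not at hlt
    have h1 : η * (T / 2) < η * (T - t) := by
      apply mul_lt_mul_of_pos_left _ hη0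
      linarith
    have h2 : η * (T / 2) = r ^ 2 := by rw [hη]; field_simp
    linarith
  have hAsub : A ⊆ capK ×ˢ Set.Icc (T / 2) T := by
    rintro ⟨x, t⟩ ⟨⟨h1, h2⟩, h3⟩
    simp only [Set.mem_ofPred_eq] at h1 h2 h3
    have h4 : 0 ≤ η * (T - t) := mul_nonneg hη0.le (by linarith)
    have h5 := hballK x (by linarith)
    exact ⟨⟨h5.1, h5.2.le⟩, hηT t (by linarith [hqn x]), h3⟩
  have hAcl : IsClosed A := by
    refine ((isClosed_le (by fun_prop) (by fun_prop)).inter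
      (isClosed_le (by fun_prop) (by fun_prop))).inter (isClosed_le (by fun_prop) (by fun_prop))
  have hSo : IsOpen S :=
    (isOpen_lt (by fun_prop) (by fun_prop)).inter (isOpen_lt (by fun_prop) (by fun_prop))
  set c := Real.exp (-α * r ^ 2) with hc
  have hmp := max_principle' A S T
    ((capK_compact.prod isCompact_Icc).of_isClosed_subset hAcl hAsub)
    (fun x t => w x t + (-m) * hopf α c η T z x t) ?_ hSo ?_ ?_ ?_
  · have hv : HasDerivAt (fun s : ℝ => hopf α c η T z (s, x2) T)
        (Real.exp (-α * r ^ 2) * (2 * α * r)) (1 / 2) := by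
      have h1 : HasDerivAt (fun s : ℝ => -α * ((s - (1 / 2 + r)) ^ 2 + (x2 - x2) ^ 2 + η * (T - T)))
          (2 * α * r) (1 / 2) := by
        have := (((((hasDerivAt_id (1 / 2 : ℝ)).sub_const (1 / 2 + r)).pow 2).add_const
          ((x2 - x2) ^ 2)).add_const (η * (T - T))).const_mul (-α)
        refine this.congr_deriv ?_
        simp
        ring
      refine (h1.exp.sub_const c).congr_deriv ?_
      congr 2
      ring
    have hv0 : hopf α c η T z (1 / 2, x2) T = 0 := by
      simp only [hopf, hz, hc]
      rw [sub_eq_zero]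
      congr 1
      ring
    have hge := right_ge (hd.add (hv.const_mul (-m))) ?_
    · have : 0 < m * (Real.exp (-α * r ^ 2) * (2 * α * r)) := by positivity
      linarith
    · have hev : Set.Ioo (1 / 2 : ℝ) (1 / 2 + r / 2) ∈ 𝓝[>] (1 / 2 : ℝ) :=
        Ioo_mem_nhdsGT (by linarith)
      filter_upwards [hev] with s hs
      have hs1 := hs.1
      have hs2 := hs.2
      have hmem : ((s, x2), T) ∈ A := by
        refine ⟨⟨?_, ?_⟩, le_refl T⟩
        · simp only [Set.mem_ofPred_eq, hq, hz]
          nlinarith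
        · simp only [Set.mem_ofPred_eq, hq, hz]
          nlinarith
      have := hmp _ _ hmem
      simp only [Pi.add_apply, hw0, hv0]
      linarith
  · refine (hw.cont.mono (hAsub.trans hsubIoi)).add (Continuous.continuousOn ?_)
    unfold hopf; fun_prop
  · rintro ⟨x, t⟩ ⟨h1, h2⟩ h3
    have h1' : r ^ 2 / 4 < q x := h1
    have h2' : q x + η * (T - t) < r ^ 2 := h2
    exact ⟨⟨h1'.le, h2'.le⟩, h3⟩
  · rintro ⟨x, t⟩ ⟨⟨h1, h2⟩, h3⟩
    exact h3
  · rintro x t hxt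
    have hmem := hAsub hxt
    obtain ⟨⟨h1, h2⟩, h3⟩ := hxt
    simp only [Set.mem_ofPred_eq] at h1 h2 h3
    have ht2 : T / 2 ≤ t := hmem.2.1
    have ht0 : 0 < t := by linarith
    have hc0 : 0 < c := Real.exp_pos _
    have hvq : hopf α c η T z x t = Real.exp (-α * (q x + η * (T - t))) - c := rfl
    have h4 : 0 ≤ η * (T - t) := mul_nonneg hη0.le (by linarith)
    rcases eq_or_lt_of_le h2 with h5 | h5
    · left
      rw [hvq, h5, hc, sub_self, mul_zero, add_zero]
      exact hw.nonneg ht0 hmem.1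
    rcases eq_or_lt_of_le h1 with h6 | h6
    · left
      have e1 : Real.exp (-α * (q x + η * (T - t))) ≤ 1 := by
        apply Real.exp_le_one_iff.2
        have := mul_nonneg hα0.le (add_nonneg (hqn x) h4)
        linarith
      have e2 := hmw x t h6.symm.le ⟨ht2, h3⟩
      have e3 : hopf α c η T z x t ≤ 1 := by rw [hvq]; linarith
      have e4 : m * hopf α c η T z x t ≤ m * 1 := by gcongr
      linarith
    · right
      have hxC := hballC x (by linarith)
      refine ⟨⟨h6, h5⟩, _, ?_, (hw.heat x hxC t ht0).add ((hopf_heat α c η T z x t).const_mul (-m))⟩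
      have hle : α * η + 4 * α - 4 * α ^ 2 * q x ≤ 0 := by
        have e1 : α * (r ^ 2 / 4) = (η + 4) / 4 := by rw [hα]; field_simp
        have e2 : α * (r ^ 2 / 4) ≤ α * q x := by gcongr
        have e3 : α * η + 4 * α - 4 * α ^ 2 * q x = α * (η + 4 - 4 * (α * q x)) := by ring
        rw [e3]
        exact mul_nonpos_of_nonneg_of_nonpos hα0.le (by linarith)
      exact sgn_aux hm (mul_nonpos_of_nonneg_of_nonpos
        (Real.exp_pos (-α * ((x.1 - z.1) ^ 2 + (x.2 - z.2) ^ 2 + η * (T - t)))).le hle)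

lemma halfdisk_open : IsOpen {p : ℝ × ℝ | p.1 ^ 2 + p.2 ^ 2 < 1 ∧ 0 < p.1} :=
  (isOpen_lt (f := fun p : ℝ × ℝ => p.1 ^ 2 + p.2 ^ 2) (by fun_prop) continuous_const).inter
    (isOpen_lt continuous_const continuous_fst)

lemma halfdisk_closure {p : ℝ × ℝ} (h1 : p.1 ^ 2 + p.2 ^ 2 ≤ 1) (h2 : 0 ≤ p.1) :
    p ∈ closure {p : ℝ × ℝ | p.1 ^ 2 + p.2 ^ 2 < 1 ∧ 0 < p.1} := by
  have hc : Continuous (fun s : ℝ => (((1 - s) * p.1 + s * (1 / 2), (1 - s) * p.2) : ℝ × ℝ)) := by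
    fun_prop
  have ht : Tendsto (fun s : ℝ => (((1 - s) * p.1 + s * (1 / 2), (1 - s) * p.2) : ℝ × ℝ))
      (𝓝[>] 0) (𝓝 p) := by
    have := hc.tendsto 0
    simp only [sub_zero, one_mul, zero_mul, add_zero] at this
    exact this.mono_left nhdsWithin_le_nhds
  refine mem_closure_of_tendsto ht ?_
  filter_upwards [Ioo_mem_nhdsGT (show (0 : ℝ) < 1 by norm_num)] with s hs
  obtain ⟨hs0, hs1⟩ := hs
  constructor
  · change ((1 - s) * p.1 + s * (1 / 2)) ^ 2 + ((1 - s) * p.2) ^ 2 < 1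
    have e : ((1 - s) * p.1 + s * (1 / 2)) ^ 2 + ((1 - s) * p.2) ^ 2 =
      (1 - s) * (p.1 ^ 2 + p.2 ^ 2) + s / 4 - s * (1 - s) * ((p.1 - 1 / 2) ^ 2 + p.2 ^ 2) := by ring
    rw [e]
    have h3 : 0 ≤ s * (1 - s) * ((p.1 - 1 / 2) ^ 2 + p.2 ^ 2) := by
      have : 0 ≤ 1 - s := by linarith
      positivity
    nlinarith
  · change 0 < (1 - s) * p.1 + s * (1 / 2)
    nlinarith

lemma heatOp_of_contDiff {D : Set (ℝ × ℝ)} (hD : IsOpen D) {h : ℝ × ℝ → ℝ → ℝ}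
    (hx : ∀ t > (0 : ℝ), ContDiffOn ℝ 2 (fun x => h x t) D)
    (ht : ∀ x ∈ D, ContDiffOn ℝ 1 (fun t => h x t) (Set.Ioi 0))
    (hheat : ∀ x ∈ D, ∀ t > (0 : ℝ), deriv (fun s => h x s) t = lap2 (fun y => h y t) x)
    {x : ℝ × ℝ} (hxD : x ∈ D) {t : ℝ} (ht0 : 0 < t) : HeatOp h x t 0 := by
  have hd1 : DifferentiableAt ℝ (fun s => h x s) t :=
    ((ht x hxD).differentiableOn (by norm_num)).differentiableAt (Ioi_mem_nhds ht0)
  have hdiff : ∀ y ∈ D, DifferentiableAt ℝ (fun y => h y t) y := fun y hy =>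
    ((hx t ht0).differentiableOn (by norm_num)).differentiableAt (hD.mem_nhds hy)
  have hfd : DifferentiableAt ℝ (fderiv ℝ (fun y => h y t)) x := by
    have h1 : ContDiffOn ℝ 1 (fderiv ℝ (fun y => h y t)) D :=
      (hx t ht0).fderiv_of_isOpen hD (by norm_num)
    exact (h1.differentiableOn (by norm_num)).differentiableAt (hD.mem_nhds hxD)
  have hfv : ∀ v : ℝ × ℝ, DifferentiableAt ℝ (fun y => fderiv ℝ (fun y => h y t) y v) x :=
    fun v => hfd.clm_apply (differentiableAt_const v)
  have hl1 : ∀ s, HasDerivAt (fun s : ℝ => ((s, x.2) : ℝ × ℝ)) ((1, 0) : ℝ × ℝ) s := fun s =>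
    (hasDerivAt_id s).prodMk (hasDerivAt_const s x.2)
  have hl2 : ∀ s, HasDerivAt (fun s : ℝ => ((x.1, s) : ℝ × ℝ)) ((0, 1) : ℝ × ℝ) s := fun s =>
    (hasDerivAt_const s x.1).prodMk (hasDerivAt_id s)
  refine ⟨_, fderiv ℝ (fun y => fderiv ℝ (fun y => h y t) y ((1, 0) : ℝ × ℝ)) x ((1, 0) : ℝ × ℝ),
    fderiv ℝ (fun y => fderiv ℝ (fun y => h y t) y ((0, 1) : ℝ × ℝ)) x ((0, 1) : ℝ × ℝ),
    hd1.hasDerivAt, ?_, ?_, ?_⟩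
  · refine ⟨fun s => fderiv ℝ (fun y => h y t) (s, x.2) (1, 0), ?_, ?_⟩
    · have : ∀ᶠ s in 𝓝 x.1, ((s, x.2) : ℝ × ℝ) ∈ D :=
        (hl1 x.1).continuousAt.eventually (hD.mem_nhds hxD)
      filter_upwards [this] with s hs
      exact (hdiff _ hs).hasFDerivAt.comp_hasDerivAt s (hl1 s)
    · exact (hfv (1, 0)).hasFDerivAt.comp_hasDerivAt (f := fun s : ℝ => ((s, x.2) : ℝ × ℝ))
        x.1 (hl1 x.1)
  · refine ⟨fun s => fderiv ℝ (fun y => h y t) (x.1, s) (0, 1), ?_, ?_⟩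
    · have : ∀ᶠ s in 𝓝 x.2, ((x.1, s) : ℝ × ℝ) ∈ D :=
        (hl2 x.2).continuousAt.eventually (hD.mem_nhds hxD)
      filter_upwards [this] with s hs
      exact (hdiff _ hs).hasFDerivAt.comp_hasDerivAt s (hl2 s)
    · exact (hfv (0, 1)).hasFDerivAt.comp_hasDerivAt (f := fun s : ℝ => ((x.1, s) : ℝ × ℝ))
        x.2 (hl2 x.2)
  · rw [hheat x hxD t ht0, lap2]
    ring

/-- **The hot spot of the grounded half-disk moves.**  For the solution `h` of the heat
equation in the half-disk `D⁺` with zero Dirichlet boundary data and unit initial data,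
`∂h/∂x₁(1/2, x₂, t) < 0` for all `t > 0`; in particular the maximum point `(1/2, 0)` of
the distance-to-the-boundary function is never a spatial critical point of `h(·,t)`. -/
theorem half_disk_hot_spot_moves
    (Dp : Set (ℝ × ℝ))
    (hDp : Dp = {p : ℝ × ℝ | p.1 ^ 2 + p.2 ^ 2 < 1 ∧ 0 < p.1})
    (h : ℝ × ℝ → ℝ → ℝ)
    (hcont : ContinuousOn (fun q : (ℝ × ℝ) × ℝ => h q.1 q.2) (closure Dp ×ˢ Set.Ioi 0))
    (hx : ∀ t > (0 : ℝ), ContDiffOn ℝ 2 (fun x => h x t) Dp)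
    (ht : ∀ x ∈ Dp, ContDiffOn ℝ 1 (fun t => h x t) (Set.Ioi 0))
    (hheat : ∀ x ∈ Dp, ∀ t > (0 : ℝ), deriv (fun s => h x s) t = lap2 (fun y => h y t) x)
    (hbc : ∀ x ∈ frontier Dp, ∀ t > (0 : ℝ), h x t = 0)
    (hbound : ∀ x ∈ closure Dp, ∀ t > (0 : ℝ), 0 ≤ h x t ∧ h x t ≤ 1)
    (hinit : ∀ x ∈ Dp, Filter.Tendsto (fun t => h x t) (𝓝[>] 0) (𝓝 1)) :
    (∀ t > (0 : ℝ), ∀ x₂ : ℝ, ((1 / 2 : ℝ), x₂) ∈ Dp →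
      fderiv ℝ (fun y => h y t) ((1 / 2 : ℝ), x₂) ((1, 0) : ℝ × ℝ) < 0) ∧
    (∀ t > (0 : ℝ), fderiv ℝ (fun y => h y t) (((1 / 2 : ℝ), (0 : ℝ))) ≠ 0) := by
  have key : ∀ t > (0 : ℝ), ∀ x₂ : ℝ, ((1 / 2 : ℝ), x₂) ∈ Dp →
      fderiv ℝ (fun y => h y t) ((1 / 2 : ℝ), x₂) ((1, 0) : ℝ × ℝ) < 0 := by
    subst hDp
    set D := {p : ℝ × ℝ | p.1 ^ 2 + p.2 ^ 2 < 1 ∧ 0 < p.1} with hD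
    have hDo : IsOpen D := halfdisk_open
    have hcl : ∀ p : ℝ × ℝ, p.1 ^ 2 + p.2 ^ 2 ≤ 1 → 0 ≤ p.1 → p ∈ closure D :=
      fun p h1 h2 => halfdisk_closure h1 h2
    have hKc : ∀ p ∈ capK, p ∈ closure D := fun p hp => hcl p hp.2 (by linarith [hp.1])
    have hKr : ∀ p ∈ capK, ((1 - p.1, p.2) : ℝ × ℝ) ∈ closure D := by
      rintro p ⟨h1, h2⟩
      refine hcl _ ?_ ?_
      · simp only; nlinarith
      · simp only; nlinarith [sq_nonneg p.2]
    have hCd : ∀ p ∈ capC, p ∈ D := fun p hp => ⟨hp.2, by linarith [hp.1]⟩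
    have hCr : ∀ p ∈ capC, ((1 - p.1, p.2) : ℝ × ℝ) ∈ D := by
      rintro p ⟨h1, h2⟩
      refine ⟨?_, ?_⟩
      · simp only; nlinarith
      · simp only; nlinarith [sq_nonneg p.2]
    have hbd : ∀ p : ℝ × ℝ, p.1 ^ 2 + p.2 ^ 2 = 1 → 0 ≤ p.1 → ∀ t > 0, h p t = 0 := by
      intro p h1 h2 t ht0
      refine hbc p ?_ t ht0
      rw [hDo.frontier_eq]
      exact ⟨hcl p h1.le h2, fun h => by linarith [h.1]⟩
    have hheatD : ∀ x ∈ D, ∀ t > 0, HeatOp h x t 0 := fun x hxD t ht0 =>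
      heatOp_of_contDiff hDo hx ht hheat hxD ht0
    set w : ℝ × ℝ → ℝ → ℝ := fun x t => h (1 - x.1, x.2) t + (-1) * h x t with hw
    have hcap : CapSol w := by
      refine ⟨?_, ?_, ?_, ?_, ?_⟩
      · refine ContinuousOn.add ?_ (continuousOn_const.mul ?_)
        · exact hcont.comp (f := fun q : (ℝ × ℝ) × ℝ => (((1 - q.1.1, q.1.2), q.2) : (ℝ × ℝ) × ℝ))
            (by fun_prop) (fun q hq => ⟨hKr _ hq.1, hq.2⟩)
        · exact hcont.mono (Set.prod_mono (fun p hp => hKc p hp) le_rfl)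
      · intro x hxC t ht0
        have h1 : HeatOp (fun x t => h (1 - x.1, x.2) t) x t 0 := by
          obtain ⟨a, b, c, i1, i2, i3, i4⟩ := hheatD _ (hCr x hxC) t ht0
          exact ⟨a, b, c, i1, i2.refl, i3, i4⟩
        have := h1.add ((hheatD x (hCd x hxC) t ht0).const_mul (-1))
        rw [mul_zero, add_zero] at this
        exact this
      · intro x hxK hxC t ht0
        simp only [hw]
        by_cases h1 : x.1 ^ 2 + x.2 ^ 2 = 1
        · rw [hbd x h1 (by linarith [hxK.1]) t ht0]
          linarith [(hbound _ (hKr x hxK) t ht0).1]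
        · have h2 : x.1 = 1 / 2 := by
            by_contra hne
            exact hxC ⟨lt_of_le_of_ne hxK.1 (Ne.symm hne), lt_of_le_of_ne hxK.2 h1⟩
          have h3 : ((1 - x.1, x.2) : ℝ × ℝ) = x := by
            ext
            · simp only [h2]; norm_num
            · rfl
          rw [h3]
          linarith
      · intro x hxK t ht0
        simp only [hw]
        linarith [(hbound _ (hKr x hxK) t ht0).1, (hbound _ (hKc x hxK) t ht0).2]
      · intro x hxC
        have := (hinit _ (hCr x hxC)).add ((hinit x (hCd x hxC)).const_mul (-1))
        have e : (1 : ℝ) + -1 * 1 = 0 := by norm_num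
        rw [e] at this
        exact this
    have hwpos : ∀ x ∈ capC, ∀ t > 0, 0 < w x t := by
      intro x hxC t ht0
      have hr : (((1 / 5 : ℝ), (3 / 5 : ℝ)) : ℝ × ℝ) ∈ D := by
        constructor <;> norm_num
      have hev : ∀ᶠ s in 𝓝[>] (0 : ℝ), 1 / 2 < h (1 / 5, 3 / 5) s :=
        (hinit _ hr).eventually (lt_mem_nhds (by norm_num))
      obtain ⟨t1, ht1a, ht1b⟩ := (hev.and (Ioo_mem_nhdsGT ht0)).exists
      have ht10 : 0 < t1 := ht1b.1
      have hbK : (((4 / 5 : ℝ), (3 / 5 : ℝ)) : ℝ × ℝ) ∈ capK := by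
        constructor <;> norm_num
      have hwb : 0 < w (4 / 5, 3 / 5) t1 := by
        simp only [hw]
        rw [hbd (4 / 5, 3 / 5) (by norm_num) (by norm_num) t1 ht10]
        norm_num at ht1a ⊢
        linarith
      have hcw := hcap.cont_slice ht10 _ hbK
      have hc2 : Continuous (fun s : ℝ => (((4 / 5 - s, 3 / 5 - s)) : ℝ × ℝ)) := by fun_prop
      have htend : Tendsto (fun s : ℝ => (((4 / 5 - s, 3 / 5 - s)) : ℝ × ℝ)) (𝓝[>] 0)
          (𝓝[capK] (4 / 5, 3 / 5)) := by
        refine tendsto_nhdsWithin_iff.2 ⟨?_, ?_⟩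
        · have := hc2.tendsto 0
          simp only [sub_zero] at this
          exact this.mono_left nhdsWithin_le_nhds
        · filter_upwards [Ioo_mem_nhdsGT (show (0 : ℝ) < 1 / 10 by norm_num)] with s hs
          obtain ⟨hs0, hs1⟩ := hs
          constructor
          · simp only; linarith
          · simp only; nlinarith
      have hev2 := (hcw.tendsto.comp htend).eventually (lt_mem_nhds hwb)
      obtain ⟨s, hs, hs0, hs1⟩ :=
        (hev2.and (Ioo_mem_nhdsGT (show (0 : ℝ) < 1 / 10 by norm_num))).exists
      have hbC : (((4 / 5 - s, 3 / 5 - s)) : ℝ × ℝ) ∈ capC := by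
        constructor
        · simp only; linarith
        · simp only; nlinarith
      exact hcap.pos_prop ht10 ht1b.2 hbC hxC hs
    intro t ht0 x₂ hxD
    have hdiff : DifferentiableAt ℝ (fun y => h y t) ((1 / 2 : ℝ), x₂) :=
      ((hx t ht0).differentiableOn (by norm_num)).differentiableAt (hDo.mem_nhds hxD)
    set d := fderiv ℝ (fun y => h y t) ((1 / 2 : ℝ), x₂) ((1, 0) : ℝ × ℝ) with hd
    have hl : HasDerivAt (fun s : ℝ => ((s, x₂) : ℝ × ℝ)) ((1, 0) : ℝ × ℝ) (1 / 2) :=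
      (hasDerivAt_id (1 / 2 : ℝ)).prodMk (hasDerivAt_const (1 / 2 : ℝ) x₂)
    have hh : HasDerivAt (fun s : ℝ => h (s, x₂) t) d (1 / 2) :=
      hdiff.hasFDerivAt.comp_hasDerivAt (f := fun s : ℝ => ((s, x₂) : ℝ × ℝ)) (1 / 2) hl
    have hh2 : HasDerivAt (fun s : ℝ => h (1 - s, x₂) t) (-d) (1 / 2) := by
      have e : (1 : ℝ) - 1 / 2 = 1 / 2 := by norm_num
      have hh' : HasDerivAt (fun s : ℝ => h (s, x₂) t) d (1 - 1 / 2) := by rw [e]; exact hh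
      exact hh'.comp_const_sub 1 (1 / 2)
    have hwd : HasDerivAt (fun s : ℝ => w (s, x₂) t) (-d + (-1) * d) (1 / 2) :=
      hh2.add (hh.const_mul (-1))
    have hw0 : w (1 / 2, x₂) t = 0 := by
      simp only [hw]
      have e : (1 : ℝ) - 1 / 2 = 1 / 2 := by norm_num
      rw [e]
      ring
    have := hcap.hopf_pos hwpos ht0 hxD.1 hw0 hwd
    linarith
  refine ⟨key, fun t ht0 h0 => ?_⟩
  have := key t ht0 0 (by rw [hDp]; constructor <;> norm_num)
  rw [h0] at this
  simp at this
end

section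
/- There exists a constant C_N > 0, depending only on the dimension N, with the following property: whenever Ω ⊂ ℝ^N is a bounded open convex set, λ > 0, and φ ∈ C²(Ω) ∩ C(closure(Ω)) satisfies Δφ + λφ = 0 in Ω, φ > 0 in Ω, and φ = 0 on ∂Ω, then any point x_∞ ∈ Ω at which φ attains its maximum over closure(Ω) satisfies dist(x_∞, ∂Ω) ≥ C_N · r_Ω · (r_Ω / diam(Ω))^{N²−1}. -/
/-- The inradius of `Ω`: the supremum of the radii of open balls contained in `Ω`. -/
noncomputable def inradius {N : ℕ} (Ω : Set (EuclideanSpace ℝ (Fin N))) : ℝ :=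
  sSup {r : ℝ | ∃ x, Metric.ball x r ⊆ Ω}

lemma aux_deriv2 {g g' : ℝ → ℝ} {c : ℝ} (h1 : ∀ᶠ t in nhds (0:ℝ), HasDerivAt g (g' t) t)
    (h2 : HasDerivAt g' c 0) (hm : IsLocalMax g 0) : c ≤ 0 := by
  by_contra hc
  push Not at hc
  have e1 : deriv g =ᶠ[nhds 0] g' := h1.mono fun t ht => ht.deriv
  have e2 : deriv (deriv g) 0 = c := by rw [e1.deriv_eq]; exact h2.deriv
  have e3 : deriv g 0 = 0 := hm.deriv_eq_zero
  have hmin : IsLocalMin g 0 :=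
    isLocalMin_of_deriv_deriv_pos (by rw [e2]; exact hc) e3 h1.self_of_nhds.continuousAt
  have hconst : g =ᶠ[nhds 0] fun _ => g 0 := by
    filter_upwards [hm, hmin] with t ha hb
    exact le_antisymm ha hb
  have e4 : deriv g =ᶠ[nhds 0] fun _ => 0 := by
    have := hconst.deriv
    simpa using this
  rw [e4.deriv_eq] at e2
  simp at e2
  linarith

lemma aux_diff {N : ℕ} {f : EuclideanSpace ℝ (Fin N) → ℝ} {x : EuclideanSpace ℝ (Fin N)}
    (hf : ContDiffAt ℝ 2 f x) : (∀ᶠ y in nhds x, DifferentiableAt ℝ f y) ∧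
    ∀ e, DifferentiableAt ℝ (fun y => fderiv ℝ f y e) x := by
  constructor
  · filter_upwards [hf.eventually (by simp)] with y hy
    exact hy.differentiableAt (by simp)
  · intro e
    have : DifferentiableAt ℝ (fderiv ℝ f) x :=
      (hf.fderiv_right (m := 1) (by norm_num)).differentiableAt (by simp)
    exact this.clm_apply (differentiableAt_const e)

lemma aux_lap_nonpos {N : ℕ} {f : EuclideanSpace ℝ (Fin N) → ℝ} {x : EuclideanSpace ℝ (Fin N)}
    (hf : ContDiffAt ℝ 2 f x) (hm : IsLocalMax f x) : lapE f x ≤ 0 := by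
  obtain ⟨h1, h2⟩ := aux_diff hf
  apply Finset.sum_nonpos
  intro i _
  set e : EuclideanSpace ℝ (Fin N) := EuclideanSpace.single i 1
  have hl : ∀ t : ℝ, HasDerivAt (fun t : ℝ => x + t • e) e t := fun t => by
    simpa using ((hasDerivAt_id t).smul_const e).const_add x
  have hc : Filter.Tendsto (fun t : ℝ => x + t • e) (nhds 0) (nhds x) := by
    have := (hl 0).continuousAt.tendsto
    simpa using this
  apply aux_deriv2 (g := fun t : ℝ => f (x + t • e)) (g' := fun t : ℝ => fderiv ℝ f (x + t • e) e)
  · filter_upwards [hc.eventually h1] with t ht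
    exact ht.hasFDerivAt.comp_hasDerivAt t (hl t)
  · have h3 : HasFDerivAt (fun y => fderiv ℝ f y e) (fderiv ℝ (fun y => fderiv ℝ f y e) x)
        (x + (0:ℝ) • e) := by simpa using (h2 e).hasFDerivAt
    exact h3.comp_hasDerivAt 0 (hl 0)
  · have := hc.eventually hm
    simpa [IsLocalMax, IsMaxFilter] using this

lemma aux_lap_sub {N : ℕ} {f g : EuclideanSpace ℝ (Fin N) → ℝ} {x : EuclideanSpace ℝ (Fin N)}
    (hf : ContDiffAt ℝ 2 f x) (hg : ContDiffAt ℝ 2 g x) :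
    lapE (fun y => f y - g y) x = lapE f x - lapE g x := by
  obtain ⟨f1, f2⟩ := aux_diff hf
  obtain ⟨g1, g2⟩ := aux_diff hg
  unfold lapE
  rw [← Finset.sum_sub_distrib]
  apply Finset.sum_congr rfl
  intro i _
  set e : EuclideanSpace ℝ (Fin N) := EuclideanSpace.single i 1
  have : (fun y => fderiv ℝ (fun y => f y - g y) y e) =ᶠ[nhds x]
      fun y => fderiv ℝ f y e - fderiv ℝ g y e := by
    filter_upwards [f1, g1] with y a b
    rw [fderiv_fun_sub a b]; rfl
  rw [this.fderiv_eq, fderiv_fun_sub (f2 e) (g2 e)]; rfl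

lemma aux_lap_slab {N : ℕ} (m p x : EuclideanSpace ℝ (Fin N)) (a b : ℝ) (hm : ‖m‖ = 1) :
    lapE (fun y => a * inner ℝ m (p - y) - b * (inner ℝ m (p - y)) ^ 2) x = - 2 * b := by
  have hl : ∀ y, HasFDerivAt (fun y => inner ℝ m (p - y)) (-(innerSL ℝ m)) y := fun y => by
    have h0 : HasFDerivAt (fun y => p - y) (-(ContinuousLinearMap.id ℝ _)) y :=
      (hasFDerivAt_id y).const_sub p
    have := (innerSL ℝ m).hasFDerivAt.comp y h0
    refine HasFDerivAt.congr_fderiv (f := fun y => inner ℝ m (p - y)) this ?_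
    ext; simp
  have h1 : ∀ e, (fun y => fderiv ℝ
      (fun y => a * inner ℝ m (p - y) - b * (inner ℝ m (p - y)) ^ 2) y e) =
      fun y => -a * inner ℝ m e + 2 * b * inner ℝ m e * inner ℝ m (p - y) := by
    intro e
    funext y
    rw [(((hl y).const_mul a).fun_sub (((hl y).pow 2).const_mul b)).fderiv]
    simp
    ring
  have h2 : ∀ e, fderiv ℝ (fun y => -a * inner ℝ m e + 2 * b * inner ℝ m e * inner ℝ m (p - y)) x e
      = -2 * b * (inner ℝ m e) ^ 2 := by
    intro e
    rw [(((hl x).const_mul (2 * b * inner ℝ m e)).const_add (-a * inner ℝ m e)).fderiv]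
    simp
    ring
  unfold lapE
  simp_rw [h1, h2]
  rw [← Finset.mul_sum]
  have : ∑ i, (m i) ^ 2 = 1 := by
    have := EuclideanSpace.real_norm_sq_eq m
    rw [hm] at this; linarith
  simp [EuclideanSpace.inner_single_right, this]

lemma aux_lap_ball {N : ℕ} (c x : EuclideanSpace ℝ (Fin N)) (t R : ℝ) :
    lapE (fun y => t * (R - ‖y - c‖ ^ 2) ^ 2) x =
      t * (8 * ‖x - c‖ ^ 2 - 4 * N * (R - ‖x - c‖ ^ 2)) := by
  have hl : ∀ y, HasFDerivAt (fun y => R - ‖y - c‖ ^ 2) (-(2 • innerSL ℝ (y - c))) y := fun y => by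
    have h0 : HasFDerivAt (fun y => y - c) (ContinuousLinearMap.id ℝ _) y :=
      (hasFDerivAt_id y).sub_const c
    have := h0.norm_sq.const_sub R
    refine this.congr_fderiv ?_
    ext; simp
  have hi : ∀ e y, HasFDerivAt (fun y => inner ℝ (y - c) e) (innerSL ℝ e) y := fun e y => by
    have h0 : HasFDerivAt (fun y => y - c) (ContinuousLinearMap.id ℝ _) y :=
      (hasFDerivAt_id y).sub_const c
    have := (innerSL ℝ e).hasFDerivAt.comp y h0
    have h3 : (fun y => inner ℝ (y - c) e) = fun y => innerSL ℝ e (y - c) := by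
      funext z; simp only [innerSL_apply_apply]; exact real_inner_comm _ _
    rw [h3]
    refine HasFDerivAt.congr_fderiv (f := fun y => innerSL ℝ e (y - c)) this ?_
    ext; simp
  have h1 : ∀ e, (fun y => fderiv ℝ (fun y => t * (R - ‖y - c‖ ^ 2) ^ 2) y e) =
      fun y => (-4 * t) * ((R - ‖y - c‖ ^ 2) * inner ℝ (y - c) e) := by
    intro e
    funext y
    rw [(((hl y).pow 2).const_mul t).fderiv]
    simp [inner_sub_left]
    ring
  have h2 : ∀ e, fderiv ℝ (fun y => (-4 * t) * ((R - ‖y - c‖ ^ 2) * inner ℝ (y - c) e)) x e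
      = t * (8 * (inner ℝ (x - c) e) ^ 2 - 4 * ‖e‖ ^ 2 * (R - ‖x - c‖ ^ 2)) := by
    intro e
    rw [(((hl x).fun_mul (hi e x)).const_mul (-4 * t)).fderiv]
    simp [inner_sub_left]
    ring
  unfold lapE
  simp_rw [h1, h2]
  rw [← Finset.mul_sum, Finset.sum_sub_distrib, ← Finset.mul_sum]
  have : ∑ i, ((x - c) i) ^ 2 = ‖x - c‖ ^ 2 := (EuclideanSpace.real_norm_sq_eq (x - c)).symm
  simp only [EuclideanSpace.inner_single_right, one_mul, EuclideanSpace.norm_single, norm_one]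
  simp only [conj_trivial, this]
  simp only [Finset.sum_const, Finset.card_univ, Fintype.card_fin, nsmul_eq_mul]
  ring

lemma aux_lam {N : ℕ} {Ω : Set (EuclideanSpace ℝ (Fin N))} (ho : IsOpen Ω)
    {lam : ℝ} {φ : EuclideanSpace ℝ (Fin N) → ℝ} (hC : ContDiffOn ℝ 2 φ Ω)
    (heq : ∀ x ∈ Ω, lapE φ x + lam * φ x = 0) (hpos : ∀ x ∈ Ω, 0 < φ x)
    {c : EuclideanSpace ℝ (Fin N)} {ρ : ℝ} (hρ : 0 < ρ) (hb : Metric.closedBall c ρ ⊆ Ω) :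
    lam * (2 * ρ ^ 2) ≤ (N + 2) ^ 2 := by
  have hcΩ : c ∈ Ω := hb (Metric.mem_closedBall_self hρ.le)
  obtain ⟨y, hy, hmax⟩ := (isCompact_closedBall c ρ).exists_isMaxOn
    ⟨c, Metric.mem_closedBall_self hρ.le⟩
    (f := fun y => (ρ ^ 2 - ‖y - c‖ ^ 2) ^ 2 / φ y) (by
      apply ContinuousOn.div
      · fun_prop
      · exact hC.continuousOn.mono hb
      · exact fun z hz => (hpos z (hb hz)).ne')
  have hyΩ := hb hy
  have hφy := hpos y hyΩ
  have hcpos : 0 < (ρ ^ 2 - ‖c - c‖ ^ 2) ^ 2 / φ c := by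
    have := hpos c hcΩ
    simp; positivity
  have hM : 0 < (ρ ^ 2 - ‖y - c‖ ^ 2) ^ 2 / φ y :=
    lt_of_lt_of_le hcpos (hmax (Metric.mem_closedBall_self hρ.le))
  set u := ρ ^ 2 - ‖y - c‖ ^ 2 with hu
  have hyn : ‖y - c‖ ≤ ρ := by simpa [dist_eq_norm] using hy
  have hu0 : 0 ≤ u := by nlinarith [norm_nonneg (y - c)]
  have hune : u ≠ 0 := by
    intro h; rw [h] at hM; simp at hM
  have hup : 0 < u := lt_of_le_of_ne hu0 hune.symm
  have hyb : y ∈ Metric.ball c ρ := by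
    rw [mem_ball_iff_norm]
    nlinarith [norm_nonneg (y - c)]
  set t := φ y / u ^ 2 with ht
  have htp : 0 < t := by positivity
  have hCy : ContDiffAt ℝ 2 φ y := hC.contDiffAt (ho.mem_nhds hyΩ)
  have hVy : ContDiffAt ℝ 2 (fun z => t * (ρ ^ 2 - ‖z - c‖ ^ 2) ^ 2) y := by
    have : ContDiff ℝ 2 (fun z : EuclideanSpace ℝ (Fin N) => ‖z - c‖ ^ 2) :=
      (contDiff_id.sub contDiff_const).norm_sq ℝ
    exact (contDiff_const.mul ((contDiff_const.sub this).pow 2)).contDiffAt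
  have hloc : IsLocalMax (fun z => t * (ρ ^ 2 - ‖z - c‖ ^ 2) ^ 2 - φ z) y := by
    filter_upwards [Metric.isOpen_ball.mem_nhds hyb] with z hz
    have hz' := Metric.ball_subset_closedBall hz
    have h1 := hmax hz'
    have hφz := hpos z (hb hz')
    simp only [Set.mem_setOf_eq, ← hu] at h1 ⊢
    rw [div_le_div_iff₀ hφz hφy] at h1
    have h2 : t * u ^ 2 = φ y := by rw [ht]; field_simp
    have h3 : t * (ρ ^ 2 - ‖z - c‖ ^ 2) ^ 2 ≤ φ z := by
      rw [ht, div_mul_eq_mul_div, div_le_iff₀ (by positivity)]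
      linarith
    linarith
  have hl := aux_lap_nonpos (hVy.sub hCy) hloc
  rw [aux_lap_sub hVy hCy, aux_lap_ball] at hl
  have h4 := heq y hyΩ
  have h2 : φ y = t * u ^ 2 := by rw [ht]; field_simp
  have h5 : t * (8 * ‖y - c‖ ^ 2 - 4 * N * u + lam * u ^ 2) ≤ 0 := by
    rw [h2] at h4; linarith
  have h6 : 8 * ‖y - c‖ ^ 2 - 4 * N * u + lam * u ^ 2 ≤ 0 := by
    by_contra h; push Not at h; nlinarith [mul_pos htp h]
  have h7 : ‖y - c‖ ^ 2 = ρ ^ 2 - u := by rw [hu]; ring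
  rw [h7] at h6
  have h8 : (lam * (2 * ρ ^ 2)) * u ^ 2 ≤ (N + 2) ^ 2 * u ^ 2 := by
    have := mul_le_mul_of_nonneg_right h6 (by positivity : 0 ≤ 2 * ρ ^ 2)
    nlinarith [sq_nonneg (((N:ℝ) + 2) * u - 4 * ρ ^ 2)]
  exact le_of_mul_le_mul_right h8 (by positivity)

lemma aux_dist {N : ℕ} {Ω : Set (EuclideanSpace ℝ (Fin N))} (ho : IsOpen Ω) (hconv : Convex ℝ Ω)
    (hbd : Bornology.IsBounded Ω)
    {lam : ℝ} (hlam : 0 < lam) {φ : EuclideanSpace ℝ (Fin N) → ℝ} (hC : ContDiffOn ℝ 2 φ Ω)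
    (hcont : ContinuousOn φ (closure Ω))
    (heq : ∀ x ∈ Ω, lapE φ x + lam * φ x = 0) (hpos : ∀ x ∈ Ω, 0 < φ x)
    (h0 : ∀ x ∈ frontier Ω, φ x = 0) {xm : EuclideanSpace ℝ (Fin N)} (hxm : xm ∈ Ω)
    (hmax : ∀ y ∈ closure Ω, φ y ≤ φ xm) {p : EuclideanSpace ℝ (Fin N)} (hp : p ∈ frontier Ω) :
    2 ≤ lam * (dist xm p) ^ 2 := by
  have hpΩ : p ∉ Ω := by
    rw [ho.frontier_eq] at hp; exact hp.2
  by_contra hcon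
  push Not at hcon
  obtain ⟨F, hF⟩ := geometric_hahn_banach_open_point hconv ho hpΩ
  set n := (InnerProductSpace.toDual ℝ (EuclideanSpace ℝ (Fin N))).symm F with hn
  have hFn : ∀ x, F x = inner ℝ n x := fun x => by rw [hn, InnerProductSpace.toDual_symm_apply]
  have hn0 : n ≠ 0 := by
    intro h
    have := hF xm hxm
    simp [hFn, h] at this
  set m := ‖n‖⁻¹ • n with hm
  have hm1 : ‖m‖ = 1 := by rw [hm]; exact norm_smul_inv_norm (𝕜 := ℝ) hn0
  set ℓ : EuclideanSpace ℝ (Fin N) → ℝ := fun y => inner ℝ m (p - y) with hℓ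
  have hℓpos : ∀ y ∈ Ω, 0 < ℓ y := by
    intro y hy
    have := hF y hy
    rw [hFn, hFn] at this
    have hnn : 0 < ‖n‖⁻¹ := by positivity
    simp only [hℓ, hm, real_inner_smul_left, inner_sub_right]
    rw [← mul_sub]
    apply mul_pos hnn
    linarith
  have hℓc : Continuous ℓ := by fun_prop
  have hd : ℓ xm ≤ dist xm p := by
    have := real_inner_le_norm m (p - xm)
    rw [hm1, one_mul, ← dist_eq_norm, dist_comm] at this
    exact this
  have hd0 : 0 < ℓ xm := hℓpos xm hxm
  obtain ⟨h, hh1, hh2⟩ : ∃ h, dist xm p < h ∧ lam * h ^ 2 < 2 := by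
    have hs : dist xm p < √(2 / lam) := by
      apply Real.lt_sqrt_of_sq_lt
      rw [lt_div_iff₀ hlam]; linarith
    obtain ⟨h, a, b⟩ := exists_between hs
    refine ⟨h, a, ?_⟩
    have : h ^ 2 < 2 / lam := by
      rw [Real.lt_sqrt (dist_nonneg.trans a.le)] at b; exact b
    rw [lt_div_iff₀ hlam] at this; linarith
  have hh : 0 < h := lt_of_le_of_lt dist_nonneg hh1
  set M := φ xm with hMdef
  have hM : 0 < M := hpos xm hxm
  set w : EuclideanSpace ℝ (Fin N) → ℝ :=
    fun y => (2 * M / h) * inner ℝ m (p - y) - (M / h ^ 2) * (inner ℝ m (p - y)) ^ 2 with hw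
  have hwe : ∀ y, M - w y = M * (1 - ℓ y / h) ^ 2 := by
    intro y
    simp only [hw, hℓ]; field_simp; ring
  have hwC : ContDiff ℝ 2 w := by
    simp only [hw]
    have : ContDiff ℝ 2 (fun y => inner ℝ m (p - y)) :=
      contDiff_const.inner ℝ (contDiff_const.sub contDiff_id)
    exact (contDiff_const.mul this).sub (contDiff_const.mul (this.pow 2))
  have hKc : IsCompact (closure Ω ∩ {y | ℓ y ≤ h}) :=
    hbd.isCompact_closure.inter_right (isClosed_le hℓc continuous_const)
  have hxK : xm ∈ closure Ω ∩ {y | ℓ y ≤ h} := ⟨subset_closure hxm, by simp; linarith⟩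
  obtain ⟨y, ⟨hyc, hyh⟩, hymax⟩ := hKc.exists_isMaxOn ⟨xm, hxK⟩ (f := fun y => φ y - w y)
    ((hcont.mono Set.inter_subset_left).sub hwC.continuous.continuousOn)
  simp only [Set.mem_setOf_eq] at hyh
  have hxmpos : 0 < φ xm - w xm := by
    have h1 := hwe xm
    have : 0 < 1 - ℓ xm / h := by
      rw [sub_pos, div_lt_one hh]; linarith
    have : 0 < M * (1 - ℓ xm / h) ^ 2 := by positivity
    linarith
  have hypos : 0 < φ y - w y := lt_of_lt_of_le hxmpos (hymax hxK)
  have hℓy : 0 ≤ ℓ y := by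
    have : closure Ω ⊆ {y | 0 ≤ ℓ y} :=
      closure_minimal (fun z hz => (hℓpos z hz).le) (isClosed_le continuous_const hℓc)
    exact this hyc
  have hyΩ : y ∈ Ω := by
    by_contra hno
    have hfr : y ∈ frontier Ω := by rw [ho.frontier_eq]; exact ⟨hyc, hno⟩
    have h1 := hwe y
    rw [h0 y hfr] at hypos
    have a1 : 0 ≤ ℓ y / h := by positivity
    have a2 : ℓ y / h ≤ 1 := by rw [div_le_one hh]; exact hyh
    have : (1 - ℓ y / h) ^ 2 ≤ 1 := by nlinarith
    nlinarith
  have hylt : ℓ y < h := by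
    rcases lt_or_eq_of_le hyh with a | a
    · exact a
    · exfalso
      have h1 := hwe y
      rw [a, div_self hh.ne'] at h1
      have := hmax y hyc
      nlinarith
  have hCy : ContDiffAt ℝ 2 φ y := hC.contDiffAt (ho.mem_nhds hyΩ)
  have hloc : IsLocalMax (fun z => φ z - w z) y := by
    filter_upwards [ho.mem_nhds hyΩ, (isOpen_lt hℓc continuous_const).mem_nhds hylt] with z a b
    exact hymax ⟨subset_closure a, le_of_lt b⟩
  have hl := aux_lap_nonpos (hCy.sub hwC.contDiffAt) hloc
  rw [aux_lap_sub hCy hwC.contDiffAt, hw, aux_lap_slab _ _ _ _ _ hm1] at hl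
  have h4 := heq y hyΩ
  have h5 := hmax y hyc
  have h6 : lam * φ y ≤ lam * M := mul_le_mul_of_nonneg_left h5 hlam.le
  have h7 : 2 * (M / h ^ 2) ≤ lam * M := by linarith
  rw [mul_div_assoc', div_le_iff₀ (by positivity)] at h7
  nlinarith

/-- **Brasco–Magnanini–Salani bound for the location of the maximum point of a first
Dirichlet eigenfunction.**  There is a constant `C_N > 0` depending only on `N` such
that any maximum point `x_∞` of a positive solution of `Δφ + λφ = 0` in a bounded open
convex set `Ω`, vanishing on `∂Ω`, satisfies
`dist(x_∞, ∂Ω) ≥ C_N · r_Ω (r_Ω/diam Ω)^{N²-1}`. -/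
theorem eigenfunction_maximum_point_distance_bound
    (N : ℕ) (hN : 0 < N) :
    ∃ C : ℝ, 0 < C ∧
      ∀ (Ω : Set (EuclideanSpace ℝ (Fin N))), IsOpen Ω → Convex ℝ Ω →
        Bornology.IsBounded Ω →
      ∀ lam : ℝ, 0 < lam →
      ∀ φ : EuclideanSpace ℝ (Fin N) → ℝ,
        ContDiffOn ℝ 2 φ Ω → ContinuousOn φ (closure Ω) →
        (∀ x ∈ Ω, lapE φ x + lam * φ x = 0) →
        (∀ x ∈ Ω, 0 < φ x) →
        (∀ x ∈ frontier Ω, φ x = 0) →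
      ∀ xm ∈ Ω, (∀ y ∈ closure Ω, φ y ≤ φ xm) →
        C * inradius Ω * (inradius Ω / Metric.diam Ω) ^ (N ^ 2 - 1) ≤
          Metric.infDist xm (frontier Ω) := by
  set K : ℝ := ((N : ℝ) + 2) / 2 with hK
  have hKp : 0 < K := by positivity
  refine ⟨(K * K ^ (N ^ 2 - 1))⁻¹, by positivity, ?_⟩
  intro Ω ho hconv hbd lam hlam φ hC hcont heq hpos h0 xm hxm hmax
  haveI : Nonempty (Fin N) := ⟨⟨0, hN⟩⟩
  have hne : (frontier Ω).Nonempty := by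
    apply nonempty_frontier_iff.2
    refine ⟨⟨xm, hxm⟩, ?_⟩
    rintro rfl
    exact NormedSpace.unbounded_univ ℝ (EuclideanSpace ℝ (Fin N)) hbd
  obtain ⟨p, hp, hdp⟩ := isClosed_frontier.exists_infDist_eq_dist hne xm
  set d := Metric.infDist xm (frontier Ω) with hd
  have hd0 : 0 ≤ d := Metric.infDist_nonneg
  have h2 := aux_dist ho hconv hbd hlam hC hcont heq hpos h0 hxm hmax hp
  rw [← hdp] at h2
  have hdpos : 0 < d := by
    rcases hd0.lt_or_eq with a | a
    · exact a
    · rw [← a] at h2; norm_num at h2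
  have hr : ∀ r ∈ {r : ℝ | ∃ x, Metric.ball x r ⊆ Ω}, r ≤ K * d := by
    rintro r ⟨c, hc⟩
    apply le_of_forall_lt
    intro ρ' hρ'
    rcases le_or_gt r 0 with hr0 | hr0
    · have : 0 < K * d := by positivity
      linarith
    obtain ⟨ρ, a, b⟩ := exists_between (max_lt hρ' hr0)
    have hρ0 : 0 < ρ := (le_max_right _ _).trans_lt a
    have hρ1 : ρ' < ρ := (le_max_left _ _).trans_lt a
    have h3 := aux_lam ho hC heq hpos hρ0 ((Metric.closedBall_subset_ball b).trans hc)
    have h4 : ρ ≤ K * d := by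
      refine (sq_le_sq₀ hρ0.le (by positivity)).1 ?_
      have : ((N:ℝ) + 2) = 2 * K := by rw [hK]; ring
      rw [this] at h3
      have h5 : 2 * ρ ^ 2 ≤ lam * d ^ 2 * ρ ^ 2 := mul_le_mul_of_nonneg_right h2 (by positivity)
      have h6 := mul_le_mul_of_nonneg_right h3 (sq_nonneg d)
      nlinarith
    linarith
  have hr1 : inradius Ω ≤ K * d := csSup_le ⟨0, xm, by simp⟩ hr
  have hr0 : 0 ≤ inradius Ω := le_csSup ⟨K * d, hr⟩ ⟨xm, by simp⟩
  have hdD : d ≤ Metric.diam Ω := by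
    rw [hdp, ← Metric.diam_closure]
    exact Metric.dist_le_diam_of_mem hbd.closure (subset_closure hxm) (frontier_subset_closure hp)
  have hq : inradius Ω / Metric.diam Ω ≤ K := by
    rw [div_le_iff₀ (by linarith)]
    exact hr1.trans (mul_le_mul_of_nonneg_left hdD hKp.le)
  have hq0 : 0 ≤ inradius Ω / Metric.diam Ω := div_nonneg hr0 (by linarith)
  have hqp := pow_le_pow_left₀ hq0 hq (N ^ 2 - 1)
  rw [mul_assoc, inv_mul_le_iff₀ (by positivity)]
  calc inradius Ω * (inradius Ω / Metric.diam Ω) ^ (N ^ 2 - 1)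
      ≤ (K * d) * K ^ (N ^ 2 - 1) := mul_le_mul hr1 hqp (by positivity) (by positivity)
    _ = _ := by ring
end

section
/- Let φ : ℝ^N → ℝ be a bounded measurable function with compact support, with φ ≥ 0 everywhere and φ > 0 on a set of positive Lebesgue measure, and for t > 0 define u(x,t) = (4πt)^{−N/2} ∫_{ℝ^N} e^{−|x−y|²/(4t)} φ(y) dy (the solution of the Cauchy problem for the heat equation in ℝ^N with initial datum φ). Let K be the closed convex hull of the support of φ. Then for every t > 0: (i) the spatial gradient ∇_x u(x,t) is nonzero for every x ∉ K; and (ii) u(·,t) attains its maximum over ℝ^N, and every maximum point of u(·,t) belongs to K. In other words, all hot spots lie in the convex hull of the support of the initial datum. -/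
open MeasureTheory

section helpers

variable {N : ℕ}

lemma hs_kernel_fderiv (t : ℝ) (x y : EuclideanSpace ℝ (Fin N)) (c : ℝ) :
    HasFDerivAt (fun x : EuclideanSpace ℝ (Fin N) => Real.exp (-(‖x - y‖ ^ 2) / (4 * t)) * c)
      ((-(2 / (4 * t)) * Real.exp (-(‖x - y‖ ^ 2) / (4 * t)) * c) • innerSL ℝ (x - y)) x := by
  have h1 : HasFDerivAt (fun x : EuclideanSpace ℝ (Fin N) => ‖x - y‖ ^ 2) (2 • (innerSL ℝ (x - y))) x := by
    have := ((hasFDerivAt_id x).sub_const y).norm_sq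
    simpa using this
  have h2 := (((h1.const_mul (-(1 / (4 * t)))).exp).mul_const c)
  refine (h2.congr_of_eventuallyEq (Filter.Eventually.of_forall fun z => ?_)).congr_fderiv ?_
  · simp only []
    congr 2
    ring
  · ext v
    have : -(‖x - y‖ ^ 2) / (4 * t) = -(1 / (4 * t)) * ‖x - y‖ ^ 2 := by ring
    rw [this]
    simp
    ring

lemma hs_bound (t : ℝ) (ht : 0 < t) (s : ℝ) :
    2 / (4 * t) * Real.exp (-(s ^ 2) / (4 * t)) * s ≤ 2 / (4 * t) * (1 + 4 * t) := by
  have h1 := Real.add_one_le_exp (s ^ 2 / (4 * t))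
  have h2 : Real.exp (-(s ^ 2) / (4 * t)) * Real.exp (s ^ 2 / (4 * t)) = 1 := by
    rw [← Real.exp_add]; simp [neg_div]
  have h3 := Real.exp_pos (-(s ^ 2) / (4 * t))
  rw [mul_assoc]
  refine mul_le_mul_of_nonneg_left ?_ (by positivity)
  have h4 : s ≤ (1 + 4 * t) * Real.exp (s ^ 2 / (4 * t)) := by
    have : s ^ 2 = (4 * t) * (s ^ 2 / (4 * t)) := by field_simp
    have h5 : 0 ≤ s ^ 2 / (4 * t) := by positivity
    nlinarith [sq_nonneg (s - 1)]
  calc _ ≤ Real.exp (-(s ^ 2) / (4 * t)) * ((1 + 4 * t) * Real.exp (s ^ 2 / (4 * t))) := by gcongr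
    _ = (1 + 4 * t) * (Real.exp (-(s ^ 2) / (4 * t)) * Real.exp (s ^ 2 / (4 * t))) := by ring
    _ = _ := by rw [h2, mul_one]

lemma hs_exp_le (t : ℝ) (ht : 0 < t) (s : ℝ) : Real.exp (-(s ^ 2) / (4 * t)) ≤ 1 := by
  rw [Real.exp_le_one_iff, neg_div]
  have : 0 ≤ s ^ 2 / (4 * t) := by positivity
  linarith

lemma hs_integrable (φ : EuclideanSpace ℝ (Fin N) → ℝ) (hint : Integrable φ) (t : ℝ) (ht : 0 < t) (x : EuclideanSpace ℝ (Fin N)) :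
    Integrable (fun y => Real.exp (-(‖x - y‖ ^ 2) / (4 * t)) * φ y) := by
  refine hint.bdd_mul (c := 1) ?_ ?_
  · exact Continuous.aestronglyMeasurable (by fun_prop)
  · refine Filter.Eventually.of_forall fun y => ?_
    rw [Real.norm_eq_abs, Real.abs_exp]
    exact hs_exp_le t ht _

lemma hs_hasFDerivAt (φ : EuclideanSpace ℝ (Fin N) → ℝ) (hint : Integrable φ) (t : ℝ) (ht : 0 < t) (x : EuclideanSpace ℝ (Fin N)) :
    Integrable (fun y => (-(2 / (4 * t)) * Real.exp (-(‖x - y‖ ^ 2) / (4 * t)) * φ y) •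
        innerSL ℝ (x - y)) ∧
    HasFDerivAt (fun x : EuclideanSpace ℝ (Fin N) => ∫ y, Real.exp (-(‖x - y‖ ^ 2) / (4 * t)) * φ y)
      (∫ y, (-(2 / (4 * t)) * Real.exp (-(‖x - y‖ ^ 2) / (4 * t)) * φ y) •
        innerSL ℝ (x - y)) x := by
  have hm : AEStronglyMeasurable (fun y =>
      (-(2 / (4 * t)) * Real.exp (-(‖x - y‖ ^ 2) / (4 * t)) * φ y) • innerSL ℝ (x - y)) := by
    have hA : AEStronglyMeasurable (fun y : EuclideanSpace ℝ (Fin N) =>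
        -(2 / (4 * t)) * Real.exp (-(‖x - y‖ ^ 2) / (4 * t)) * φ y) := by
      refine AEStronglyMeasurable.mul ?_ hint.1
      exact Continuous.aestronglyMeasurable (by fun_prop)
    have hB : AEStronglyMeasurable (fun y : EuclideanSpace ℝ (Fin N) => innerSL ℝ (x - y)) :=
      Continuous.aestronglyMeasurable (by fun_prop)
    exact hA.smul hB
  have hb : ∀ (z y : EuclideanSpace ℝ (Fin N)), ‖(-(2 / (4 * t)) * Real.exp (-(‖z - y‖ ^ 2) / (4 * t)) * φ y) •
        innerSL ℝ (z - y)‖ ≤ 2 / (4 * t) * (1 + 4 * t) * ‖φ y‖ := by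
    intro z y
    rw [norm_smul, innerSL_apply_norm, norm_mul, norm_mul, norm_neg, Real.norm_eq_abs (Real.exp _),
      Real.abs_exp, Real.norm_of_nonneg (by positivity : 0 ≤ 2 / (4 * t))]
    have := mul_le_mul_of_nonneg_right (hs_bound t ht ‖z - y‖) (norm_nonneg (φ y))
    linarith
  refine ⟨(hint.norm.const_mul (2 / (4 * t) * (1 + 4 * t))).mono' hm
    (Filter.Eventually.of_forall (hb x)), ?_⟩
  exact hasFDerivAt_integral_of_dominated_of_fderiv_le (s := Set.univ)
    (bound := fun y => 2 / (4 * t) * (1 + 4 * t) * ‖φ y‖) Filter.univ_mem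
    (Filter.Eventually.of_forall fun z => (hs_integrable φ hint t ht z).1)
    (hs_integrable φ hint t ht x) hm
    (Filter.Eventually.of_forall fun y z _ => hb z y)
    (hint.norm.const_mul _)
    (Filter.Eventually.of_forall fun y z _ => hs_kernel_fderiv t z y (φ y))

lemma hs_tendsto (φ : EuclideanSpace ℝ (Fin N) → ℝ) (hint : Integrable φ) (t : ℝ) (ht : 0 < t) :
    Filter.Tendsto (fun x : EuclideanSpace ℝ (Fin N) => ∫ y, Real.exp (-(‖x - y‖ ^ 2) / (4 * t)) * φ y)
      (Filter.cocompact (EuclideanSpace ℝ (Fin N))) (nhds 0) := by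
  have : (0 : ℝ) = ∫ y : EuclideanSpace ℝ (Fin N), (0 : ℝ) := by simp
  rw [this]
  have hcg : (Filter.cocompact (EuclideanSpace ℝ (Fin N))).IsCountablyGenerated := by
    rw [← Metric.cobounded_eq_cocompact, ← comap_norm_atTop]
    infer_instance
  refine tendsto_integral_filter_of_dominated_convergence (fun y => ‖φ y‖)
    (Filter.Eventually.of_forall fun z => (hs_integrable φ hint t ht z).1)
    (Filter.Eventually.of_forall fun z => Filter.Eventually.of_forall fun y => ?_)
    hint.norm (Filter.Eventually.of_forall fun y => ?_)
  · rw [norm_mul, Real.norm_eq_abs (Real.exp _), Real.abs_exp]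
    exact mul_le_of_le_one_left (norm_nonneg _) (hs_exp_le t ht _)
  · rw [show (0 : ℝ) = 0 * φ y by simp]
    refine Filter.Tendsto.mul_const _ (Real.tendsto_exp_atBot.comp ?_)
    have h1 : Filter.Tendsto (fun x : EuclideanSpace ℝ (Fin N) => ‖x - y‖) (Filter.cocompact (EuclideanSpace ℝ (Fin N))) Filter.atTop :=
      tendsto_norm_cocompact_atTop.comp
        (Homeomorph.subRight y).isClosedEmbedding.tendsto_cocompact
    have h2 := ((Filter.tendsto_pow_atTop (two_ne_zero)).comp h1).atTop_div_const
      (by positivity : 0 < 4 * t)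
    have h3 := Filter.tendsto_neg_atTop_atBot.comp h2
    refine h3.congr fun z => ?_
    simp [neg_div]

end helpers

/-- **Chavel–Karp: hot spots lie in the convex hull of the support of the initial
datum.**  Let `u` be the solution of the Cauchy problem for the heat equation in `ℝ^N`
with bounded, nonnegative, compactly supported initial datum `φ`, positive on a set of
positive measure, and let `K` be the closed convex hull of the support of `φ`.  Then for
every `t > 0` the spatial gradient of `u(·,t)` does not vanish outside `K`, `u(·,t)`
attains its maximum over `ℝ^N`, and all of its maximum points lie in `K`. -/
theorem heat_equation_hot_spots_in_convex_hull_of_support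
    (N : ℕ) (hN : 0 < N)
    (φ : EuclideanSpace ℝ (Fin N) → ℝ)
    (hmeas : Measurable φ)
    (hbdd : ∃ M : ℝ, ∀ x, |φ x| ≤ M)
    (hsupp : HasCompactSupport φ)
    (hnonneg : ∀ x, 0 ≤ φ x)
    (hpos : 0 < volume {x | 0 < φ x})
    (u : EuclideanSpace ℝ (Fin N) → ℝ → ℝ)
    (hu : ∀ x t, u x t = Real.rpow (4 * Real.pi * t) (-(N : ℝ) / 2) *
      ∫ y, Real.exp (-(‖x - y‖ ^ 2) / (4 * t)) * φ y)
    (K : Set (EuclideanSpace ℝ (Fin N)))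
    (hKdef : K = closure (convexHull ℝ (tsupport φ))) :
    ∀ t > (0 : ℝ),
      (∀ x ∉ K, fderiv ℝ (fun y => u y t) x ≠ 0) ∧
      (∃ x, ∀ y, u y t ≤ u x t) ∧
      (∀ x, (∀ y, u y t ≤ u x t) → x ∈ K) := by
  intro t ht
  obtain ⟨M, hM⟩ := hbdd
  have hint : Integrable φ := by
    have h1 : IntegrableOn φ (tsupport φ) :=
      Measure.integrableOn_of_bounded (M := M) hsupp.isCompact.measure_lt_top.ne
        hmeas.aestronglyMeasurable (Filter.Eventually.of_forall hM)
    exact (integrableOn_iff_integrable_of_support_subset (subset_tsupport φ)).1 h1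
  have hc : 0 < Real.rpow (4 * Real.pi * t) (-(N : ℝ) / 2) :=
    Real.rpow_pos_of_pos (by positivity) _
  set c := Real.rpow (4 * Real.pi * t) (-(N : ℝ) / 2) with hcdef
  have hfun : (fun y => u y t) = fun x => c * ∫ y, Real.exp (-(‖x - y‖ ^ 2) / (4 * t)) * φ y := by
    funext x; exact hu x t
  have hgrad : ∀ x ∉ K, fderiv ℝ (fun y => u y t) x ≠ 0 := by
    intro x hx h0
    obtain ⟨hI, hF⟩ := hs_hasFDerivAt φ hint t ht x
    rw [hfun, (hF.const_mul c).fderiv, smul_eq_zero] at h0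
    have h0 := h0.resolve_left hc.ne'
    have hconv : Convex ℝ K := hKdef ▸ (convex_convexHull ℝ _).closure
    have hclosed : IsClosed K := hKdef ▸ isClosed_closure
    obtain ⟨f, a, hfa, hax⟩ := geometric_hahn_banach_closed_point hconv hclosed hx
    set v := (InnerProductSpace.toDual ℝ _).symm f with hv
    have hfv : ∀ z, inner ℝ z v = f z := fun z => by
      rw [real_inner_comm]; exact InnerProductSpace.toDual_symm_apply
    have h1 := congrArg (fun L => L v) h0
    simp only [ContinuousLinearMap.integral_apply hI v] at h1
    have hI2 := hI.apply_continuousLinearMap v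
    simp only [smul_apply, innerSL_apply_apply, hfv, smul_eq_mul,
      zero_apply] at h1 hI2
    have hK : ∀ y, φ y ≠ 0 → 0 < f (x - y) := by
      intro y hy
      have : y ∈ K := by
        rw [hKdef]
        exact subset_closure (subset_convexHull ℝ _ (subset_tsupport φ hy))
      have := hfa y this
      rw [map_sub]; linarith
    have hp : 0 < ∫ y, -((-(2 / (4 * t)) * Real.exp (-(‖x - y‖ ^ 2) / (4 * t)) * φ y) *
        f (x - y)) := by
      have hpp : ∀ y, φ y ≠ 0 → 0 < -((-(2 / (4 * t)) *
          Real.exp (-(‖x - y‖ ^ 2) / (4 * t)) * φ y) * f (x - y)) := by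
        intro y hy
        have h2 : 0 < φ y := lt_of_le_of_ne (hnonneg y) hy.symm
        have h3 := hK y hy
        have : 0 < (2 / (4 * t) * Real.exp (-(‖x - y‖ ^ 2) / (4 * t)) * φ y) * f (x - y) := by
          positivity
        linarith
      refine (integral_pos_iff_support_of_nonneg ?_ hI2.neg).2 ?_
      rotate_left
      · refine hpos.trans_le (measure_mono fun y hy => ?_)
        exact (hpp y (ne_of_gt hy)).ne'
      · intro y
        by_cases hy : φ y = 0
        · simp [hy]
        · exact (hpp y hy).le
    rw [integral_neg, h1] at hp
    simp at hp
  refine ⟨hgrad, ?_, ?_⟩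
  · have hcont : Continuous (fun x => ∫ y, Real.exp (-(‖x - y‖ ^ 2) / (4 * t)) * φ y) :=
      continuous_iff_continuousAt.2 fun x => (hs_hasFDerivAt φ hint t ht x).2.continuousAt
    have hp : 0 < ∫ y, Real.exp (-(‖(0 : EuclideanSpace ℝ (Fin N)) - y‖ ^ 2) / (4 * t)) * φ y := by
      rw [integral_pos_iff_support_of_nonneg _ (hs_integrable φ hint t ht 0)]
      · refine hpos.trans_le (measure_mono fun y hy => ?_)
        exact (mul_pos (Real.exp_pos _) hy).ne'
      · exact fun y => mul_nonneg (Real.exp_pos _).le (hnonneg y)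
    obtain ⟨x, hx⟩ := hcont.exists_forall_ge' 0
      (((hs_tendsto φ hint t ht).eventually_lt_const hp).mono fun _ h => h.le)
    refine ⟨x, fun y => ?_⟩
    rw [hu, hu]
    exact mul_le_mul_of_nonneg_left (hx y) hc.le
  · intro x hx
    by_contra hxK
    exact hgrad x hxK (IsLocalMax.fderiv_eq_zero (Filter.Eventually.of_forall hx))
end

section
/- Let Q = (0,2π) × (0,2π) ⊂ ℝ² and define h(x₁,x₂,t) = −e^{−t}·(cos x₁ + cos x₂) for (x₁,x₂) ∈ closure(Q) and t > 0. Then h satisfies the heat equation h_t = Δh in Q × (0,∞) together with the homogeneous Neumann boundary condition ∂h/∂ν = 0 at every non-corner point of ∂Q × (0,∞), and for every t > 0 the maximum of h(·,t) over closure(Q) equals 2e^{−t} and is attained only at the interior point (π,π). Hence this insulated conductor has a hot spot that remains at a fixed interior point for all times. -/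
open Real

/-- The spatial derivative of `h(·,t)`. -/
theorem fderiv_aux (c : ℝ) (y v : ℝ × ℝ) :
    fderiv ℝ (fun q : ℝ × ℝ => c * (Real.cos q.1 + Real.cos q.2)) y v
      = -c * (Real.sin y.1 * v.1 + Real.sin y.2 * v.2) := by
  have h1 : HasFDerivAt (fun q : ℝ × ℝ => q.1) (ContinuousLinearMap.fst ℝ ℝ ℝ) y := hasFDerivAt_fst
  have h2 : HasFDerivAt (fun q : ℝ × ℝ => q.2) (ContinuousLinearMap.snd ℝ ℝ ℝ) y := hasFDerivAt_snd
  have h3 := (h1.cos.add h2.cos).const_mul c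
  have h4 := congrArg (fun L => L v) h3.fderiv
  refine Eq.trans h4 ?_
  simp
  ring

theorem fderiv_aux_fst (c : ℝ) (y v : ℝ × ℝ) :
    fderiv ℝ (fun q : ℝ × ℝ => c * Real.sin q.1) y v = c * (Real.cos y.1 * v.1) := by
  have h1 : HasFDerivAt (fun q : ℝ × ℝ => q.1) (ContinuousLinearMap.fst ℝ ℝ ℝ) y := hasFDerivAt_fst
  have h4 := congrArg (fun L => L v) (h1.sin.const_mul c).fderiv
  refine Eq.trans h4 ?_
  simp

theorem fderiv_aux_snd (c : ℝ) (y v : ℝ × ℝ) :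
    fderiv ℝ (fun q : ℝ × ℝ => c * Real.sin q.2) y v = c * (Real.cos y.2 * v.2) := by
  have h1 : HasFDerivAt (fun q : ℝ × ℝ => q.2) (ContinuousLinearMap.snd ℝ ℝ ℝ) y := hasFDerivAt_snd
  have h4 := congrArg (fun L => L v) (h1.sin.const_mul c).fderiv
  refine Eq.trans h4 ?_
  simp

theorem eq_pi_aux (x : ℝ) (h0 : 0 ≤ x) (h1 : x ≤ 2 * π) (hx : Real.cos x = -1) : x = π := by
  have hp := Real.pi_pos
  have h2 : Real.cos (x - π) = 1 := by rw [Real.cos_sub_pi, hx]; norm_num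
  have := (Real.cos_eq_one_iff_of_lt_of_lt (by linarith) (by linarith)).1 h2
  linarith

/-- **A stationary interior hot spot for an insulated square conductor**
(Burdzy–Werner example).  With `Q = (0,2π)²`, the function
`h(x₁,x₂,t) = −e^{−t}(cos x₁ + cos x₂)` solves the heat equation in `Q × (0,∞)` with
homogeneous Neumann boundary conditions at every non-corner boundary point, and for
every `t > 0` its maximum over `closure Q` equals `2e^{−t}` and is attained only at the
interior point `(π, π)`. -/
theorem insulated_square_stationary_interior_hot_spot
    (Q : Set (ℝ × ℝ))
    (hQ : Q = Set.Ioo (0 : ℝ) (2 * π) ×ˢ Set.Ioo (0 : ℝ) (2 * π))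
    (h : ℝ × ℝ → ℝ → ℝ)
    (hh : h = fun p t => -Real.exp (-t) * (Real.cos p.1 + Real.cos p.2)) :
    -- the heat equation in `Q × (0,∞)`
    (∀ p ∈ Q, ∀ t > (0 : ℝ), deriv (fun s => h p s) t = lap2 (fun q => h q t) p) ∧
    -- homogeneous Neumann conditions at all non-corner boundary points
    (∀ t > (0 : ℝ), ∀ y ∈ Set.Ioo (0 : ℝ) (2 * π),
      fderiv ℝ (fun q => h q t) ((0 : ℝ), y) ((-1, 0) : ℝ × ℝ) = 0 ∧
      fderiv ℝ (fun q => h q t) ((2 * π), y) ((1, 0) : ℝ × ℝ) = 0 ∧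
      fderiv ℝ (fun q => h q t) (y, (0 : ℝ)) ((0, -1) : ℝ × ℝ) = 0 ∧
      fderiv ℝ (fun q => h q t) (y, (2 * π)) ((0, 1) : ℝ × ℝ) = 0) ∧
    -- `(π, π)` is an interior point
    ((π, π) ∈ Q) ∧
    -- the maximum of `h(·,t)` over `closure Q` equals `2e^{−t}`, attained only at `(π,π)`
    (∀ t > (0 : ℝ),
      (∀ p ∈ closure Q, h p t ≤ 2 * Real.exp (-t)) ∧
      h (π, π) t = 2 * Real.exp (-t) ∧
      (∀ p ∈ closure Q, h p t = 2 * Real.exp (-t) → p = (π, π))) := by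
  have hp := Real.pi_pos
  subst hh
  refine ⟨?_, ?_, ?_, ?_⟩
  · intro p _ t _
    have hd : HasDerivAt (fun s : ℝ => -Real.exp (-s) * (Real.cos p.1 + Real.cos p.2))
        (-(Real.exp (-t) * (-1)) * (Real.cos p.1 + Real.cos p.2)) t :=
      (((hasDerivAt_id t).neg.exp).neg).mul_const _
    refine Eq.trans hd.deriv ?_
    simp only [lap2, fderiv_aux, mul_one, mul_zero, add_zero, zero_add, fderiv_aux_fst,
      fderiv_aux_snd]
    ring
  · intro t _ y _
    refine ⟨?_, ?_, ?_, ?_⟩ <;> simp [fderiv_aux]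
  · subst hQ
    exact ⟨⟨hp, by linarith⟩, ⟨hp, by linarith⟩⟩
  · intro t _
    have he := Real.exp_pos (-t)
    refine ⟨?_, ?_, ?_⟩
    · intro p _
      have h1 := Real.neg_one_le_cos p.1
      have h2 := Real.neg_one_le_cos p.2
      show -Real.exp (-t) * (Real.cos p.1 + Real.cos p.2) ≤ _
      nlinarith
    · simp only [Real.cos_pi]
      ring
    · intro p hpQ heq
      have hne : (2 * π) ≠ 0 := by positivity
      rw [hQ, closure_prod_eq, closure_Ioo hne.symm] at hpQ
      obtain ⟨⟨a, b⟩, ⟨c, d⟩⟩ := hpQ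
      have h1 := Real.neg_one_le_cos p.1
      have h2 := Real.neg_one_le_cos p.2
      have hs : Real.cos p.1 + Real.cos p.2 = -2 := by
        apply mul_left_cancel₀ he.ne'
        simp only at heq
        linarith
      exact Prod.ext (eq_pi_aux _ a b (by linarith)) (eq_pi_aux _ c d (by linarith))
end
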